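/- arXiv:math/9909142 — 2 statements merged into one kernel-verified Lean document; each statement's English description precedes it below -/
import Mathlib

section
/- Descent of quasi-projectivity along field extensions in characteristic zero: Let k be a field of characteristic zero, K a field extension of k, and Y a scheme over k. If the base change Y ×_{Spec k} Spec K is quasi-projective over K, then Y is quasi-projective over k. -/
open AlgebraicGeometry CategoryTheory CategoryTheory.Limits

noncomputable section

namespace Paper

attribute [local instance] MvPolynomial.gradedAlgebra

/-- Projective `n`-space over a ring `K`, as `Proj` of the polynomial ring in `n + 1`
variables with its grading by total degree. -/
def ProjSpace (K : Type) [CommRing K] (n : ℕ) : Scheme :=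
  Proj (MvPolynomial.homogeneousSubmodule (Fin (n + 1)) K)

/-- The structure morphism `ℙⁿ_K ⟶ Spec K`. -/
def ProjSpace.structMap (K : Type) [CommRing K] (n : ℕ) :
    ProjSpace K n ⟶ Spec (CommRingCat.of K) :=
  Proj.toSpecZero _ ≫ Spec.map (CommRingCat.ofHom
    (algebraMap K (MvPolynomial.homogeneousSubmodule (Fin (n + 1)) K 0)))

/-- A scheme `Y` with structure morphism `p : Y ⟶ Spec K` is quasi-projective over `K` if
for some `n` there is an immersion (locally closed immersion) `Y ⟶ ℙⁿ_K` over `K`. -/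
def QuasiProjectiveOver (K : Type) [CommRing K] {Y : Scheme}
    (p : Y ⟶ Spec (CommRingCat.of K)) : Prop :=
  ∃ (n : ℕ) (f : Y ⟶ ProjSpace K n), IsImmersion f ∧ f ≫ ProjSpace.structMap K n = p

/-- A scheme `Y` with structure morphism `p : Y ⟶ Spec K` is quasi-affine over `K` if it is
of finite type over `K` and admits an open immersion over `K` into an affine `K`-scheme. -/
def QuasiAffineOver (K : Type) [CommRing K] {Y : Scheme}
    (p : Y ⟶ Spec (CommRingCat.of K)) : Prop :=
  LocallyOfFiniteType p ∧ QuasiCompact p ∧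
    ∃ (Z : Scheme) (q : Z ⟶ Spec (CommRingCat.of K)) (j : Y ⟶ Z),
      IsAffine Z ∧ IsOpenImmersion j ∧ j ≫ q = p


section PartA1
open AlgebraicGeometry CategoryTheory CategoryTheory.Limits

section gen
variable {σ : Type} {A : Type} [CommRing A] [SetLike σ A] [AddSubgroupClass σ A] (𝒜 : ℕ → σ)
  [GradedRing 𝒜] {S : Type} [CommRing S]

open HomogeneousLocalization

lemma genPt_aux (φ : A →+* S) (hφ : (HomogeneousIdeal.irrelevant 𝒜).toIdeal.map φ = ⊤) :
    (HomogeneousIdeal.irrelevant 𝒜).toIdeal.map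
      (((Scheme.ΓSpecIso (CommRingCat.of S)).inv.hom).comp φ) = ⊤ := by
  rw [← Ideal.map_map]
  have : Ideal.map (algebraMap S S) ⊤ = ⊤ := by simp
  erw [hφ]
  exact Ideal.map_top _

/-- The morphism to `Proj` given by a ring homomorphism. -/
def genPt (φ : A →+* S) (hφ : (HomogeneousIdeal.irrelevant 𝒜).toIdeal.map φ = ⊤) :
    Spec (CommRingCat.of S) ⟶ Proj 𝒜 :=
  Proj.fromOfGlobalSections 𝒜 (((Scheme.ΓSpecIso (CommRingCat.of S)).inv.hom).comp φ)
    (genPt_aux 𝒜 φ hφ)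

/-- The induced map on homogeneous localization. -/
def awayLift (φ : A →+* S) (t : A) (ht : IsUnit (φ t)) : Away 𝒜 t →+* S :=
  (IsLocalization.Away.lift (S := Localization.Away t) t ht).comp
    (algebraMap (Away 𝒜 t) (Localization.Away t))

lemma awayLift_mk (φ : A →+* S) (t : A) (ht : IsUnit (φ t)) {d : ℕ} (hd : t ∈ 𝒜 d) (n : ℕ) (a : A)
    (ha : a ∈ 𝒜 (n • d)) :
    awayLift 𝒜 φ t ht (Away.mk 𝒜 hd n a ha) * φ t ^ n = φ a := by
  simp only [awayLift, RingHom.comp_apply, HomogeneousLocalization.algebraMap_apply, Away.val_mk]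
  rw [← map_pow, ← IsLocalization.Away.lift_eq (S := Localization.Away t) t ht, ← map_mul,
    ← IsLocalization.Away.lift_eq (S := Localization.Away t) t ht]
  congr 1
  rw [Localization.mk_eq_mk']
  exact IsLocalization.mk'_spec _ _ _

lemma genPt_preimage_basicOpen (φ : A →+* S)
    (hφ : (HomogeneousIdeal.irrelevant 𝒜).toIdeal.map φ = ⊤) (t : A) {d : ℕ} (hd0 : 0 < d)
    (hd : t ∈ 𝒜 d) :
    genPt 𝒜 φ hφ ⁻¹ᵁ Proj.basicOpen 𝒜 t = PrimeSpectrum.basicOpen (φ t) := by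
  rw [genPt, Proj.fromOfGlobalSections_preimage_basicOpen _ _ _ hd0 hd]
  exact basicOpen_eq_of_affine' _ |>.trans (by simp; rfl)

lemma from_eq {X X' : Scheme.{0}} (g : X' ⟶ X) (f : A →+* Γ(X, ⊤))
    (hf : (HomogeneousIdeal.irrelevant 𝒜).toIdeal.map f = ⊤)
    (t : A) {d : ℕ} (hd0 : 0 < d) (hd : t ∈ 𝒜 d) (hu : IsUnit ((g.appTop.hom.comp f) t)) :
    g ≫ Proj.fromOfGlobalSections 𝒜 f hf = X'.toSpecΓ ≫
      Spec.map (CommRingCat.ofHom (awayLift 𝒜 (g.appTop.hom.comp f) t hu)) ≫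
        Proj.awayι 𝒜 t hd hd0 := by
  have h1 := Proj.fromOfGlobalSections_resLE 𝒜 f hf hd0 hd
  have h2 := congr($h1 ≫ (Proj.basicOpen 𝒜 t).ι)
  rw [Scheme.Hom.resLE_comp_ι] at h2
  have hr : Set.range g ⊆ Set.range (X.basicOpen (f t)).ι := by
    rw [Scheme.Opens.range_ι]
    have : g ⁻¹ᵁ (X.basicOpen (f t)) = ⊤ := by
      rw [Scheme.preimage_basicOpen_top]
      exact Scheme.basicOpen_of_isUnit _ hu
    rintro _ ⟨x, rfl⟩
    have hx : x ∈ g ⁻¹ᵁ (X.basicOpen (f t)) := by rw [this]; trivial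
    exact hx
  obtain ⟨g', rfl⟩ : ∃ g', g' ≫ (X.basicOpen (f t)).ι = g :=
    ⟨_, IsOpenImmersion.lift_fac (X.basicOpen (f t)).ι g hr⟩
  rw [Category.assoc, h2]
  generalize hgd : g' ≫ (X.basicOpen (f t)).ι = g at *
  simp only [Proj.toBasicOpenOfGlobalSections, Category.assoc, Proj.basicOpenIsoSpec_inv_ι]
  have e3 : Spec.map (CommRingCat.ofHom (awayLift 𝒜 (g.appTop.hom.comp f) t hu)) =
     Spec.map (CommRingCat.ofHom (IsLocalization.Away.lift (S := Localization.Away (f t)) (f t)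
      (g := g.appTop.hom) hu)) ≫
      Spec.map (CommRingCat.ofHom (RingHom.comp (IsLocalization.map (M := .powers t)
        (T := .powers (f t)) (Localization.Away (f t)) f (by
          rw [← Submonoid.map_le_iff_le_comap, Submonoid.map_powers]))
        (algebraMap (Away 𝒜 t) (Localization.Away t)))) := by
    rw [← Spec.map_comp, ← CommRingCat.ofHom_comp]
    congr 2
    rw [awayLift, ← RingHom.comp_assoc]
    congr 1
    apply IsLocalization.ringHom_ext (M := .powers t)
    ext a
    simp
  rw [e3]
  simp only [Category.assoc]
  simp only [← Category.assoc]
  congr 2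
  simp only [Category.assoc]
  have e4 : Mono (Spec.map (CommRingCat.ofHom
      (algebraMap Γ(X, ⊤) (Localization.Away (f t))))) := by
    have : IsOpenImmersion (Spec.map (CommRingCat.ofHom
      (algebraMap Γ(X, ⊤) (Localization.Away (f t))))) := inferInstance
    infer_instance
  rw [← cancel_mono (Spec.map (CommRingCat.ofHom (algebraMap Γ(X, ⊤) (Localization.Away (f t)))))]
  simp only [Category.assoc]
  have e5 : Spec.map (CommRingCat.ofHom (IsLocalization.Away.lift
      (S := Localization.Away (f t)) (f t) (g := g.appTop.hom) hu)) ≫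
      (Spec.map (CommRingCat.ofHom (algebraMap Γ(X, ⊤) (Localization.Away (f t))))) =
      Spec.map (CommRingCat.ofHom g.appTop.hom) := by
    rw [← Spec.map_comp, ← CommRingCat.ofHom_comp]
    have : (IsLocalization.Away.lift (S := Localization.Away (f t)) (f t)
      (g := g.appTop.hom) hu).comp (algebraMap Γ(X, ⊤) (Localization.Away (f t))) =
      g.appTop.hom := by
      ext a
      simp
    rw [this]
  rw [e5]
  simp only [basicOpenIsoSpecAway]
  rw [IsOpenImmersion.isoOfRangeEq_hom_fac]
  simp only [Scheme.isoOfEq_inv]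
  refine (congrArg (fun z => g' ≫ X.homOfLE _ ≫ z)
    (morphismRestrict_ι X.toSpecΓ (PrimeSpectrum.basicOpen (f t)))).trans ?_
  refine (congrArg (fun z => g' ≫ z) (Scheme.homOfLE_ι_assoc _ _ _)).trans ?_
  rw [← Category.assoc, hgd]
  exact Scheme.toSpecΓ_naturality g

lemma genPt_eq {S' : Type} [CommRing S'] (g : S →+* S') (φ : A →+* S)
    (hφ : (HomogeneousIdeal.irrelevant 𝒜).toIdeal.map φ = ⊤)
    (t : A) {d : ℕ} (hd0 : 0 < d) (hd : t ∈ 𝒜 d) (ht : IsUnit (g (φ t))) :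
    Spec.map (CommRingCat.ofHom g) ≫ genPt 𝒜 φ hφ =
      Spec.map (CommRingCat.ofHom (awayLift 𝒜 (g.comp φ) t ht)) ≫ Proj.awayι 𝒜 t hd hd0 := by
  have hn : (Spec.map (CommRingCat.ofHom g)).appTop.hom.comp
      (((Scheme.ΓSpecIso (CommRingCat.of S)).inv.hom).comp φ) =
      ((Scheme.ΓSpecIso (CommRingCat.of S')).inv.hom).comp (g.comp φ) := by
    have h3 := Scheme.ΓSpecIso_inv_naturality (CommRingCat.ofHom g)
    rw [← RingHom.comp_assoc, ← RingHom.comp_assoc]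
    congr 1
    exact congrArg CommRingCat.Hom.hom h3.symm
  have hu : IsUnit ((((Scheme.ΓSpecIso (CommRingCat.of S')).inv.hom).comp (g.comp φ)) t) :=
    ht.map ((Scheme.ΓSpecIso (CommRingCat.of S')).inv.hom)
  have hu' := hu
  rw [← hn] at hu'
  rw [genPt, from_eq 𝒜 _ _ _ t hd0 hd hu', ← Category.assoc]
  congr 1
  have : Spec.map (CommRingCat.ofHom (awayLift 𝒜 (((Scheme.ΓSpecIso
      (CommRingCat.of S')).inv.hom).comp (g.comp φ)) t hu))
     = Spec.map ((Scheme.ΓSpecIso (CommRingCat.of S')).inv) ≫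
       Spec.map (CommRingCat.ofHom (awayLift 𝒜 (g.comp φ) t ht)) := by
    rw [← Spec.map_comp]
    congr 1
    refine CommRingCat.hom_ext ?_
    rw [CommRingCat.hom_comp, CommRingCat.hom_ofHom, CommRingCat.hom_ofHom]
    rw [awayLift, awayLift]
    refine Eq.trans ?_ (RingHom.comp_assoc _ _ _)
    congr 1
    apply IsLocalization.ringHom_ext (M := .powers t)
    ext a
    simp
  simp only [hn]
  rw [this, toSpecΓ_SpecMap_ΓSpecIso_inv_assoc]

lemma genPt_toSpecZero (φ : A →+* S) (hφ : (HomogeneousIdeal.irrelevant 𝒜).toIdeal.map φ = ⊤) :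
    genPt 𝒜 φ hφ ≫ Proj.toSpecZero 𝒜 =
      Spec.map (CommRingCat.ofHom (φ.comp (algebraMap (𝒜 0) A))) := by
  rw [genPt, Proj.fromOfGlobalSections_toSpecZero, RingHom.comp_assoc]
  have : Spec.map (CommRingCat.ofHom (((Scheme.ΓSpecIso (CommRingCat.of S)).inv.hom).comp
      (φ.comp (algebraMap (𝒜 0) A)))) = Spec.map ((Scheme.ΓSpecIso (CommRingCat.of S)).inv) ≫
       Spec.map (CommRingCat.ofHom (φ.comp (algebraMap (𝒜 0) A))) := by
    rw [← Spec.map_comp]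
    rfl
  rw [this, toSpecΓ_SpecMap_ΓSpecIso_inv_assoc]

end gen

section pt
variable (k : Type) [CommRing k] {n : ℕ} {S : Type} [CommRing S] [Algebra k S]


lemma X_mem (i : Fin (n + 1)) : (MvPolynomial.X i : MvPolynomial (Fin (n + 1)) k) ∈ (MvPolynomial.homogeneousSubmodule (Fin (n + 1)) k) 1 :=
  MvPolynomial.isHomogeneous_X k i

lemma irr_map (s : Fin (n + 1) → S) (hs : Ideal.span (Set.range s) = ⊤) :
    (HomogeneousIdeal.irrelevant (MvPolynomial.homogeneousSubmodule (Fin (n + 1)) k)).toIdeal.map (MvPolynomial.aeval (R := k) s).toRingHom = ⊤ := by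
  rw [eq_top_iff, ← hs, Ideal.span_le]
  rintro _ ⟨i, rfl⟩
  have : (MvPolynomial.aeval (R := k) s).toRingHom (MvPolynomial.X i) = s i := by simp
  rw [← this]
  apply Ideal.mem_map_of_mem
  refine (HomogeneousIdeal.mem_irrelevant_iff _ _).2 ?_
  exact DirectSum.decompose_of_mem_ne (MvPolynomial.homogeneousSubmodule (Fin (n + 1)) k) (X_mem k i) one_ne_zero

/-- The morphism `Spec S ⟶ ℙⁿ` with homogeneous coordinates `s`. -/
def pt (s : Fin (n + 1) → S) (hs : Ideal.span (Set.range s) = ⊤) :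
    Spec (CommRingCat.of S) ⟶ ProjSpace k n :=
  genPt (MvPolynomial.homogeneousSubmodule (Fin (n + 1)) k) (MvPolynomial.aeval (R := k) s).toRingHom (irr_map k s hs)

lemma pt_structMap (s : Fin (n + 1) → S) (hs : Ideal.span (Set.range s) = ⊤) :
    pt k s hs ≫ ProjSpace.structMap k n = Spec.map (CommRingCat.ofHom (algebraMap k S)) := by
  refine (Category.assoc _ _ _).symm.trans ?_
  refine (congrArg (fun z => z ≫ Spec.map (CommRingCat.ofHom
    (algebraMap k (MvPolynomial.homogeneousSubmodule (Fin (n + 1)) k 0))))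
    (genPt_toSpecZero (MvPolynomial.homogeneousSubmodule (Fin (n + 1)) k) (MvPolynomial.aeval (R := k) s).toRingHom (irr_map k s hs))).trans ?_
  rw [← Spec.map_comp, ← CommRingCat.ofHom_comp]
  congr 2
  ext a
  simp

/-- linear form -/
def lin (c : Fin (n + 1) → k) : MvPolynomial (Fin (n + 1)) k := 
  ∑ i, MvPolynomial.C (c i) * MvPolynomial.X i

lemma lin_mem (c : Fin (n + 1) → k) : lin k c ∈ (MvPolynomial.homogeneousSubmodule (Fin (n + 1)) k) 1 := by
  refine Submodule.sum_mem _ fun i _ => ?_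
  rw [← MvPolynomial.smul_eq_C_mul]
  exact Submodule.smul_mem _ _ (X_mem k i)

lemma aeval_lin (c : Fin (n + 1) → k) (s : Fin (n + 1) → S) :
    MvPolynomial.aeval (R := k) s (lin k c) = ∑ i, algebraMap k S (c i) * s i := by
  simp [lin]

lemma lin_single (i : Fin (n + 1)) : lin k (Pi.single i 1) = MvPolynomial.X i := by
  simp [lin, Pi.single_apply]

/-- The open `D₊(ℓ)`. -/
def Dp (c : Fin (n + 1) → k) : (ProjSpace k n).Opens := Proj.basicOpen (MvPolynomial.homogeneousSubmodule (Fin (n + 1)) k) (lin k c)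

lemma pt_preimage_Dp (s : Fin (n + 1) → S) (hs : Ideal.span (Set.range s) = ⊤)
    (c : Fin (n + 1) → k) :
    pt k s hs ⁻¹ᵁ Dp k c = PrimeSpectrum.basicOpen (∑ i, algebraMap k S (c i) * s i) := by
  rw [← aeval_lin]
  exact genPt_preimage_basicOpen (MvPolynomial.homogeneousSubmodule (Fin (n + 1)) k) _ _ _ one_pos (lin_mem k c)

/-- The coordinate ring of the chart. -/
def Ch (c : Fin (n + 1) → k) : Type := HomogeneousLocalization.Away (MvPolynomial.homogeneousSubmodule (Fin (n + 1)) k) (lin k c)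

instance (c : Fin (n + 1) → k) : CommRing (Ch k c) :=
  inferInstanceAs (CommRing (HomogeneousLocalization.Away (MvPolynomial.homogeneousSubmodule (Fin (n + 1)) k) (lin k c)))

instance (c : Fin (n + 1) → k) : Algebra k (Ch k c) :=
  RingHom.toAlgebra ((HomogeneousLocalization.fromZeroRingHom (MvPolynomial.homogeneousSubmodule (Fin (n + 1)) k) _).comp (algebraMap k ((MvPolynomial.homogeneousSubmodule (Fin (n + 1)) k) 0)))

/-- The coordinates on a chart. -/
def chX (c : Fin (n + 1) → k) (i : Fin (n + 1)) : Ch k c :=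
  HomogeneousLocalization.Away.mk (MvPolynomial.homogeneousSubmodule (Fin (n + 1)) k) (lin_mem k c) 1 (MvPolynomial.X i) (by simpa using X_mem k i)

/-- The chart -/
def chι (c : Fin (n + 1) → k) : Spec (CommRingCat.of (Ch k c)) ⟶ ProjSpace k n :=
  Proj.awayι (MvPolynomial.homogeneousSubmodule (Fin (n + 1)) k) (lin k c) (lin_mem k c) one_pos

instance (c : Fin (n + 1) → k) : IsOpenImmersion (chι k c) := 
  inferInstanceAs (IsOpenImmersion (Proj.awayι (MvPolynomial.homogeneousSubmodule (Fin (n + 1)) k) (lin k c) (lin_mem k c) one_pos))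

lemma chι_opensRange (c : Fin (n + 1) → k) : (chι k c).opensRange = Dp k c :=
  Proj.opensRange_awayι _ _ _ _

lemma Dp_iSup : ⨆ i : Fin (n + 1), Dp k (Pi.single i 1) = ⊤ := by
  simp only [Dp, lin_single]
  apply Proj.iSup_basicOpen_eq_top' (MvPolynomial.homogeneousSubmodule (Fin (n + 1)) k) 
  · intro i; exact ⟨1, X_mem k i⟩
  · rw [eq_top_iff]
    intro x _
    induction x using MvPolynomial.induction_on with
    | C a => exact Subalgebra.algebraMap_mem _ (⟨_, MvPolynomial.isHomogeneous_C _ a⟩ : (MvPolynomial.homogeneousSubmodule (Fin (n + 1)) k) 0)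
    | add p q hp hq => exact add_mem (hp trivial) (hq trivial)
    | mul_X p i hp => exact mul_mem (hp trivial) (Algebra.subset_adjoin ⟨i, rfl⟩)

end pt
end PartA1


section PartA2
open AlgebraicGeometry CategoryTheory CategoryTheory.Limits

set_option linter.unusedSimpArgs false
section pt
variable (k : Type) [CommRing k] {n : ℕ} {S : Type} [CommRing S] [Algebra k S]
variable {S' : Type} [CommRing S'] [Algebra k S']


lemma homog_aeval_smul {m : ℕ} (a : MvPolynomial (Fin (n + 1)) k) (ha : a.IsHomogeneous m)
    (u : S) (s : Fin (n + 1) → S) :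
    MvPolynomial.aeval (fun i => u * s i) a = u ^ m * MvPolynomial.aeval s a := by
  rw [MvPolynomial.aeval_def, MvPolynomial.aeval_def, MvPolynomial.eval₂_eq, MvPolynomial.eval₂_eq,
    Finset.mul_sum]
  refine Finset.sum_congr rfl fun d hd => ?_
  have h1 : d.degree = m := by
    rw [Finsupp.degree_eq_weight_one]
    exact ha (MvPolynomial.mem_support_iff.1 hd)
  have h2 : ∏ i ∈ d.support, (u * s i) ^ d i = u ^ m * ∏ i ∈ d.support, s i ^ d i := by
    simp only [mul_pow, Finset.prod_mul_distrib, Finset.prod_pow_eq_pow_sum]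
    congr 2
  rw [h2]
  ring

/-- chart value is a unit -/
def linv (c : Fin (n + 1) → k) (s : Fin (n + 1) → S) : S := ∑ i, algebraMap k S (c i) * s i

lemma linv_single (i : Fin (n + 1)) (s : Fin (n + 1) → S) :
    linv k (Pi.single i 1) s = s i := by
  simp [linv, Pi.single_apply]

/-- value in the localization -/
def chVal (c : Fin (n + 1) → k) : Ch k c →ₐ[k] Localization.Away (lin k c) where
  __ := (algebraMap (HomogeneousLocalization.Away (MvPolynomial.homogeneousSubmodule (Fin (n + 1)) k) (lin k c)) (Localization.Away (lin k c)) :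
    HomogeneousLocalization.Away (MvPolynomial.homogeneousSubmodule (Fin (n + 1)) k) (lin k c) →+* _)
  commutes' r := by
    change (algebraMap (HomogeneousLocalization.Away (MvPolynomial.homogeneousSubmodule (Fin (n + 1)) k) (lin k c)) (Localization.Away (lin k c)))
      (HomogeneousLocalization.fromZeroRingHom (MvPolynomial.homogeneousSubmodule (Fin (n + 1)) k) _ (algebraMap k ((MvPolynomial.homogeneousSubmodule (Fin (n + 1)) k) 0) r)) = _
    rw [HomogeneousLocalization.algebraMap_apply, IsScalarTower.algebraMap_apply k
      (MvPolynomial (Fin (n + 1)) k) (Localization.Away (lin k c)),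
      ← HomogeneousLocalization.algebraMap_eq, ← HomogeneousLocalization.algebraMap_apply,
      ← IsScalarTower.algebraMap_apply]
    rfl

/-- homogeneous fraction -/
def chMk (c : Fin (n + 1) → k) (m : ℕ) (a : MvPolynomial (Fin (n + 1)) k)
    (ha : a ∈ (MvPolynomial.homogeneousSubmodule (Fin (n + 1)) k) (m • 1)) : Ch k c := HomogeneousLocalization.Away.mk (MvPolynomial.homogeneousSubmodule (Fin (n + 1)) k) (lin_mem k c) m a ha

lemma chX_eq (c : Fin (n + 1) → k) (i) :
    chX k c i = chMk k c 1 (MvPolynomial.X i) (by simpa using X_mem k i) := rfl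

lemma inv_mul' (c : Fin (n + 1) → k) : algebraMap _ (Localization.Away (lin k c)) (lin k c) *
   IsLocalization.Away.invSelf (S := Localization.Away (lin k c)) (lin k c) = 1 :=
  IsLocalization.Away.mul_invSelf _

lemma chVal_mk (c : Fin (n + 1) → k) (m : ℕ) (a : MvPolynomial (Fin (n + 1)) k)
    (ha : a ∈ (MvPolynomial.homogeneousSubmodule (Fin (n + 1)) k) (m • 1)) : chVal k c (chMk k c m a ha) =
    algebraMap _ (Localization.Away (lin k c)) a *
      (IsLocalization.Away.invSelf (S := Localization.Away (lin k c)) (lin k c)) ^ m := by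
  have h : chVal k c (chMk k c m a ha) =
      Localization.mk a (⟨lin k c ^ m, ⟨m, rfl⟩⟩ : Submonoid.powers (lin k c)) :=
    HomogeneousLocalization.Away.val_mk _ m (lin_mem k c) a ha
  rw [h, Localization.mk_eq_mk', IsLocalization.mk'_eq_iff_eq_mul, map_pow, mul_assoc, ← mul_pow,
    mul_comm (IsLocalization.Away.invSelf _), inv_mul', one_pow, mul_one]

lemma chVal_inj (c : Fin (n + 1) → k) : Function.Injective (chVal k c) :=
  HomogeneousLocalization.val_injective _

lemma ch_gen (c : Fin (n + 1) → k) (x : Ch k c) :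
    ∃ a : MvPolynomial (Fin (n + 1)) k, x = MvPolynomial.aeval (chX k c) a := by
  obtain ⟨m, a, ha, hx⟩ := HomogeneousLocalization.Away.mk_surjective (MvPolynomial.homogeneousSubmodule (Fin (n + 1)) k) (lin_mem k c) x
  obtain rfl : chMk k c m a ha = x := hx
  refine ⟨a, ?_⟩
  apply chVal_inj
  have h1 : (fun i => chVal k c (chX k c i)) =
      fun i => IsLocalization.Away.invSelf (S := Localization.Away (lin k c)) (lin k c) *
      algebraMap (MvPolynomial (Fin (n + 1)) k) (Localization.Away (lin k c))
        (MvPolynomial.X i) := by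
    funext i
    rw [chX_eq, chVal_mk, pow_one, mul_comm]
  refine Eq.trans ?_ (MvPolynomial.comp_aeval_apply (R := k) (f := chX k c) (chVal k c) a).symm
  rw [h1, homog_aeval_smul k (m := m) a (by simpa using ha), chVal_mk, mul_comm]
  congr 1
  have := MvPolynomial.comp_aeval_apply (R := k) (f := MvPolynomial.X)
    (IsScalarTower.toAlgHom k (MvPolynomial (Fin (n + 1)) k) (Localization.Away (lin k c))) a
  simpa using this

lemma ch_hom_ext (c : Fin (n + 1) → k) (f g : Ch k c →ₐ[k] S) (h : ∀ i, f (chX k c i) = g (chX k c i)) :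
    f = g := by
  ext x
  obtain ⟨a, rfl⟩ := ch_gen k c x
  refine (MvPolynomial.comp_aeval_apply (R := k) (f := chX k c) f a).trans
    (Eq.trans ?_ (MvPolynomial.comp_aeval_apply (R := k) (f := chX k c) g a).symm)
  simp only [h]

lemma linv_map (c : Fin (n + 1) → k) (s : Fin (n + 1) → S) (g : S →ₐ[k] S') :
    linv k c (g ∘ s) = g (linv k c s) := by
  simp [linv]

lemma linv_chX (c : Fin (n + 1) → k) : linv k c (chX k c) = 1 := by
  apply chVal_inj
  rw [← linv_map, map_one, linv]
  simp only [Function.comp, chX_eq, chVal_mk, pow_one, ← mul_assoc, ← Finset.sum_mul]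
  rw [← inv_mul']
  congr 1
  rw [lin, map_sum]
  refine Finset.sum_congr rfl fun i _ => ?_
  rw [map_mul]
  congr 1

/-- The classifying map of a chart. -/
def chLift (c : Fin (n + 1) → k) (s : Fin (n + 1) → S) (hs : IsUnit (linv k c s)) :
    Ch k c →ₐ[k] S where
  __ := awayLift (MvPolynomial.homogeneousSubmodule (Fin (n + 1)) k) (MvPolynomial.aeval (R := k) s).toRingHom (lin k c) (by
    rw [linv, ← aeval_lin] at hs; exact hs)
  commutes' r := by
    change awayLift (MvPolynomial.homogeneousSubmodule (Fin (n + 1)) k) _ (lin k c) _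
      (HomogeneousLocalization.fromZeroRingHom (MvPolynomial.homogeneousSubmodule (Fin (n + 1)) k) _ (algebraMap k ((MvPolynomial.homogeneousSubmodule (Fin (n + 1)) k) 0) r)) = _
    rw [awayLift, RingHom.comp_apply, ← HomogeneousLocalization.algebraMap_eq,
      ← IsScalarTower.algebraMap_apply, IsScalarTower.algebraMap_apply _
      (MvPolynomial (Fin (n + 1)) k) (Localization.Away (lin k c)), IsLocalization.Away.lift_eq]
    change MvPolynomial.aeval s (MvPolynomial.C r) = _
    simp

lemma chLift_chX (c : Fin (n + 1) → k) (s : Fin (n + 1) → S) (hs : IsUnit (linv k c s)) (i) :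
    chLift k c s hs (chX k c i) * linv k c s = s i := by
  have := awayLift_mk (MvPolynomial.homogeneousSubmodule (Fin (n + 1)) k) (MvPolynomial.aeval (R := k) s).toRingHom (lin k c) (by
    rw [linv, ← aeval_lin] at hs; exact hs) (lin_mem k c) 1 (MvPolynomial.X i)
    (by simpa using X_mem k i)
  rw [pow_one] at this
  refine Eq.trans ?_ (this.trans ?_)
  · have e : linv k c s = MvPolynomial.aeval s (lin k c) := (aeval_lin k c s).symm
    exact congrArg (fun z => chLift k c s hs (chX k c i) * z) e
  · simp

lemma pt_comp_eq (c : Fin (n + 1) → k) (s : Fin (n + 1) → S) (hs : Ideal.span (Set.range s) = ⊤)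
    (g : S →ₐ[k] S') (hu : IsUnit (linv k c (g ∘ s))) :
    Spec.map (CommRingCat.ofHom g.toRingHom) ≫ pt k s hs =
      Spec.map (CommRingCat.ofHom (chLift k c (g ∘ s) hu).toRingHom) ≫ chι k c := by
  have h0 : (MvPolynomial.aeval (R := k) (g ∘ s)).toRingHom = 
    g.toRingHom.comp (MvPolynomial.aeval (R := k) s).toRingHom := by
    ext <;> simp
  have hu' := hu
  rw [linv, ← aeval_lin] at hu'
  have hu2 : IsUnit (g.toRingHom ((MvPolynomial.aeval (R := k) s).toRingHom (lin k c))) := by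
    rw [← RingHom.comp_apply, ← h0]; exact hu'
  refine (genPt_eq (MvPolynomial.homogeneousSubmodule (Fin (n + 1)) k) g.toRingHom _ (irr_map k s hs) (lin k c) one_pos (lin_mem k c) hu2).trans ?_
  refine congrArg (fun z => z ≫ chι k c) ?_
  congr 2
  simp only [← h0]
  rfl

lemma pt_eq (c : Fin (n + 1) → k) (s : Fin (n + 1) → S) (hs : Ideal.span (Set.range s) = ⊤)
    (hu : IsUnit (linv k c s)) :
    pt k s hs = Spec.map (CommRingCat.ofHom (chLift k c s hu).toRingHom) ≫ chι k c := by
  have := pt_comp_eq k c s hs (AlgHom.id k S) hu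
  refine Eq.trans ?_ this
  symm
  convert Category.id_comp _
  exact Spec.map_id _

end pt
end PartA2


section PartA3
open AlgebraicGeometry CategoryTheory CategoryTheory.Limits

set_option linter.unusedSimpArgs false
section pt
variable (k : Type) [CommRing k] {n : ℕ} {S : Type} [CommRing S] [Algebra k S]
variable {S' : Type} [CommRing S'] [Algebra k S']

/-- morphism of affine schemes from an algebra hom -/
abbrev sp (g : S →ₐ[k] S') : Spec (CommRingCat.of S') ⟶ Spec (CommRingCat.of S) :=
  Spec.map (CommRingCat.ofHom g.toRingHom)

lemma sp_inj {g g' : S →ₐ[k] S'} (h : sp k g = sp k g') : g = g' := by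
  have := Spec.map_injective h
  ext x
  exact congr($this x)

lemma sp_comp {S'' : Type} [CommRing S''] [Algebra k S''] (g : S →ₐ[k] S') (h : S' →ₐ[k] S'') :
    sp k (h.comp g) = sp k h ≫ sp k g := by
  rw [← Spec.map_comp]; rfl

/-- A morphism from an affine scheme can be checked on a cover by basic opens. -/
lemma spec_hom_ext {ι : Type} (s : ι → S) (hs : Ideal.span (Set.range s) = ⊤) {X : Scheme.{0}}
    (f g : Spec (CommRingCat.of S) ⟶ X)
    (h : ∀ i, Spec.map (CommRingCat.ofHom (algebraMap S (Localization.Away (s i)))) ≫ f =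
      Spec.map (CommRingCat.ofHom (algebraMap S (Localization.Away (s i)))) ≫ g) : f = g := by
  refine (Scheme.affineOpenCoverOfSpanRangeEqTop (R := CommRingCat.of S) s hs).openCover.hom_ext _ _ ?_
  intro i
  exact h i

lemma span_map (g : S →ₐ[k] S') (s : Fin (n + 1) → S) (hs : Ideal.span (Set.range s) = ⊤) :
    Ideal.span (Set.range (g ∘ s)) = ⊤ := by
  rw [Set.range_comp]
  have := congrArg (Ideal.map g.toRingHom) hs
  rwa [Ideal.map_span, Ideal.map_top] at this

lemma pt_unit (s : Fin (n + 1) → S) (_ : Ideal.span (Set.range s) = ⊤) (a : Fin (n + 1)) :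
    IsUnit (linv k (Pi.single a 1) (Algebra.algHom k S (Localization.Away (s a)) ∘ s)) := by
  rw [linv_single]
  exact IsLocalization.Away.algebraMap_isUnit (s a)

lemma chLift_eq_of (c : Fin (n + 1) → k) (s s' : Fin (n + 1) → S) (hs : IsUnit (linv k c s))
    (hs' : IsUnit (linv k c s')) (h : ∀ i, s i * linv k c s' = s' i * linv k c s) :
    chLift k c s hs = chLift k c s' hs' := by
  apply ch_hom_ext
  intro i
  have h1 := chLift_chX k c s hs i
  have h2 := chLift_chX k c s' hs' i
  apply (hs.mul hs').mul_right_cancel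
  have := h i
  rw [← h1, ← h2] at this
  linear_combination this

lemma pt_congr (s s' : Fin (n + 1) → S) (hs : Ideal.span (Set.range s) = ⊤)
    (hs' : Ideal.span (Set.range s') = ⊤) (h : s = s') : pt k s hs = pt k s' hs' := by
  subst h; rfl

lemma pt_smul (u : S) (hu : IsUnit u) (s s' : Fin (n + 1) → S) (hs : Ideal.span (Set.range s) = ⊤)
    (hs' : Ideal.span (Set.range s') = ⊤) (h : ∀ i, s' i = u * s i) : pt k s hs = pt k s' hs' := by
  refine spec_hom_ext s hs _ _ fun a => ?_
  have h1 := pt_comp_eq k _ s hs (Algebra.algHom k S (Localization.Away (s a))) (pt_unit k s hs a)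
  have hu' : IsUnit (linv k (Pi.single a 1) (Algebra.algHom k S (Localization.Away (s a)) ∘ s')) := by
    rw [linv_single, Function.comp_apply, h, map_mul]
    refine (hu.map _).mul ?_
    exact IsLocalization.Away.algebraMap_isUnit (s a)
  have h2 := pt_comp_eq k _ s' hs' (Algebra.algHom k S (Localization.Away (s a))) hu'
  refine h1.trans (Eq.trans ?_ h2.symm)
  rw [chLift_eq_of k _ _ _ _ hu']
  intro i
  rw [linv_single, linv_single]
  simp only [Function.comp_apply, h, map_mul]
  ring

lemma pt_comp (g : S →ₐ[k] S') (s : Fin (n + 1) → S) (hs : Ideal.span (Set.range s) = ⊤) :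
    sp k g ≫ pt k s hs = pt k (g ∘ s) (span_map k g s hs) := by
  refine spec_hom_ext (g ∘ s) (span_map k g s hs) _ _ fun a => ?_
  have h1 := pt_comp_eq k _ s hs ((Algebra.algHom k S' (Localization.Away ((g ∘ s) a))).comp g)
    (pt_unit k (g ∘ s) (span_map k g s hs) a)
  have h2 := pt_comp_eq k _ (g ∘ s) (span_map k g s hs)
    (Algebra.algHom k S' (Localization.Away ((g ∘ s) a))) (pt_unit k (g ∘ s) (span_map k g s hs) a)
  refine Eq.trans ?_ (h1.trans h2.symm)
  rw [← Category.assoc, ← Spec.map_comp]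
  rfl

lemma isUnit_of_basicOpen {u : S} (h : PrimeSpectrum.basicOpen u = ⊤) : IsUnit u := by
  by_contra hu
  obtain ⟨M, hM, hm⟩ := exists_max_ideal_of_mem_nonunits hu
  have : (⟨M, hM.isPrime⟩ : PrimeSpectrum S) ∈ PrimeSpectrum.basicOpen u := by rw [h]; trivial
  exact this hm

lemma basicOpen_top_of_isUnit {u : S} (h : IsUnit u) : PrimeSpectrum.basicOpen u = ⊤ := by
  ext p
  simp only [SetLike.mem_coe, PrimeSpectrum.mem_basicOpen, TopologicalSpace.Opens.mem_top, iff_true]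
  exact fun hp => p.2.ne_top (Ideal.eq_top_of_isUnit_mem _ hp h)

lemma eq_of_span_away {ι : Type} (s : ι → S) (hs : Ideal.span (Set.range s) = ⊤) (x y : S)
    (h : ∀ a, algebraMap S (Localization.Away (s a)) x = algebraMap S (Localization.Away (s a)) y) :
    x = y := by
  rw [← sub_eq_zero]
  by_contra hz
  set z := x - y
  have h' : ∀ a, ∃ m : ℕ, s a ^ m * z = 0 := by
    intro a
    have : algebraMap S (Localization.Away (s a)) z = 0 := by
      rw [map_sub, h a, sub_self]
    rw [IsLocalization.map_eq_zero_iff (Submonoid.powers (s a))] at this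
    obtain ⟨⟨_, m, rfl⟩, hm⟩ := this
    exact ⟨m, hm⟩
  have hI : Ideal.span {z} ≠ ⊥ := by simpa using hz
  have hA : (Submodule.annihilator (Ideal.span {z})) ≠ ⊤ := by
    intro hA
    have := (Ideal.eq_top_iff_one _).1 hA
    rw [Submodule.mem_annihilator_span_singleton] at this
    exact hz (by simpa using this)
  obtain ⟨M, hM, hm⟩ := Ideal.exists_le_maximal _ hA
  have : ¬ (Set.range s ⊆ M) := by
    intro h
    have := Ideal.span_le.2 h
    rw [hs] at this
    exact hM.ne_top (top_le_iff.1 this)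
  obtain ⟨_, ⟨a, rfl⟩, ha⟩ := Set.not_subset.1 this
  obtain ⟨m, hm'⟩ := h' a
  refine ha (hM.isPrime.mem_of_pow_mem m (hm ?_))
  rw [Submodule.mem_annihilator_span_singleton]
  simpa using hm'

lemma pt_eq_imp (s s' : Fin (n + 1) → S) (hs : Ideal.span (Set.range s) = ⊤)
    (hs' : Ideal.span (Set.range s') = ⊤) (h : pt k s hs = pt k s' hs') (i j : Fin (n + 1)) :
    s i * s' j = s j * s' i := by
  -- check locally
  have key : ∀ a, algebraMap S (Localization.Away (s a)) (s i * s' j) =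
      algebraMap S (Localization.Away (s a)) (s j * s' i) := by
    intro a
    set g := Algebra.algHom k S (Localization.Away (s a)) with hg
    have hu := pt_unit k s hs a
    have h0 : pt k (g ∘ s) (span_map k g s hs) = pt k (g ∘ s') (span_map k g s' hs') := by
      rw [← pt_comp k g s hs, ← pt_comp k g s' hs', h]
    have hu' : IsUnit (linv k (Pi.single a 1) (g ∘ s')) := by
      have p1 := pt_preimage_Dp k (g ∘ s) (span_map k g s hs) (Pi.single a 1)
      have p2 := pt_preimage_Dp k (g ∘ s') (span_map k g s' hs') (Pi.single a 1)
      rw [h0, p2] at p1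
      have p3 : PrimeSpectrum.basicOpen (linv k (Pi.single a 1) (g ∘ s')) =
        PrimeSpectrum.basicOpen (linv k (Pi.single a 1) (g ∘ s)) := p1
      refine isUnit_of_basicOpen (p3.trans ?_)
      exact basicOpen_top_of_isUnit hu
    have h1 := pt_eq k _ (g ∘ s) (span_map k g s hs) hu
    have h2 := pt_eq k _ (g ∘ s') (span_map k g s' hs') hu'
    rw [h0, h2, cancel_mono] at h1
    have h3 := sp_inj k h1
    have h4 : ∀ i, g (s i) * g (s' a) = g (s' i) * g (s a) := by
      intro i
      have e1 := chLift_chX k _ (g ∘ s) hu i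
      have e2 := chLift_chX k _ (g ∘ s') hu' i
      rw [h3] at e2
      rw [linv_single] at e1 e2
      simp only [Function.comp_apply] at e1 e2
      rw [← e1, ← e2]
      ring
    rw [linv_single] at hu hu'
    have : g (s i * s' j) = g (s j * s' i) := by
      rw [map_mul, map_mul]
      apply (hu.mul hu').mul_right_cancel
      simp only [Function.comp_apply]
      linear_combination g (s' j) * g (s a) * h4 i - g (s' i) * g (s a) * h4 j
    exact this
  exact eq_of_span_away s hs _ _ key

lemma pt_eq_imp_unit (s s' : Fin (n + 1) → S) (hs : Ideal.span (Set.range s) = ⊤)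
    (hs' : Ideal.span (Set.range s') = ⊤) (h : pt k s hs = pt k s' hs') :
    ∃ u : S, IsUnit u ∧ ∀ i, s' i = u * s i := by
  have aux : ∀ (s s' : Fin (n + 1) → S), Ideal.span (Set.range s) = ⊤ → 
     (∀ i j, s i * s' j = s j * s' i) → ∃ u : S, ∀ i, s' i = u * s i := by
    intro s s' hs h
    obtain ⟨c, hc⟩ := (Ideal.mem_span_range_iff_exists_fun).1 ((Ideal.eq_top_iff_one _).1 hs)
    refine ⟨∑ i, c i * s' i, fun j => ?_⟩
    rw [Finset.sum_mul]
    calc s' j = (∑ i, c i * s i) * s' j := by rw [hc, one_mul]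
      _ = _ := by
        rw [Finset.sum_mul]
        refine Finset.sum_congr rfl fun i _ => ?_
        linear_combination c i * h i j
  obtain ⟨u, hu⟩ := aux s s' hs (pt_eq_imp k s s' hs hs' h)
  obtain ⟨v, hv⟩ := aux s' s hs' (pt_eq_imp k s' s hs' hs h.symm)
  refine ⟨u, ?_, hu⟩
  obtain ⟨c, hc⟩ := (Ideal.mem_span_range_iff_exists_fun).1 ((Ideal.eq_top_iff_one _).1 hs)
  refine IsUnit.of_mul_eq_one v ?_
  calc u * v = u * v * ∑ i, c i * s i := by rw [hc, mul_one]
    _ = ∑ i, c i * s i := by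
      rw [Finset.mul_sum]
      refine Finset.sum_congr rfl fun i _ => ?_
      have := hv i
      rw [hu i] at this
      linear_combination - c i * this
    _ = 1 := hc

lemma span_of_linv (c : Fin (n + 1) → k) (s : Fin (n + 1) → S) (h : linv k c s = 1) :
    Ideal.span (Set.range s) = ⊤ := by
  rw [Ideal.eq_top_iff_one, ← h]
  exact Ideal.sum_mem _ fun i _ => Ideal.mul_mem_left _ _ (Ideal.subset_span ⟨i, rfl⟩)

lemma chι_structMap (c : Fin (n + 1) → k) :
    chι k c ≫ ProjSpace.structMap k n = Spec.map (CommRingCat.ofHom (algebraMap k (Ch k c))) := by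
  have := Proj.awayι_toSpecZero (MvPolynomial.homogeneousSubmodule (Fin (n + 1)) k) (lin k c) (lin_mem k c) one_pos
  refine (Category.assoc _ _ _).symm.trans ?_
  refine (congrArg (fun z => z ≫ Spec.map (CommRingCat.ofHom
    (algebraMap k (MvPolynomial.homogeneousSubmodule (Fin (n + 1)) k 0)))) this).trans ?_
  rw [← Spec.map_comp, ← CommRingCat.ofHom_comp]
  rfl

lemma exists_pt (c : Fin (n + 1) → k) (f : Spec (CommRingCat.of S) ⟶ ProjSpace k n)
    (hf : f ≫ ProjSpace.structMap k n = Spec.map (CommRingCat.ofHom (algebraMap k S)))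
    (hc : f ⁻¹ᵁ Dp k c = ⊤) : ∃ (s : Fin (n + 1) → S) (h : linv k c s = 1),
      f = pt k s (span_of_linv k c s h) := by
  have hr : Set.range f ⊆ Set.range (chι k c) := by
    rintro _ ⟨x, rfl⟩
    have : x ∈ f ⁻¹ᵁ Dp k c := by rw [hc]; trivial
    rw [← chι_opensRange] at this
    exact this
  obtain ⟨g, rfl⟩ : ∃ g, g ≫ chι k c = f := ⟨_, IsOpenImmersion.lift_fac (chι k c) f hr⟩
  obtain ⟨g, rfl⟩ := Spec.map_surjective g
  rw [Category.assoc, chι_structMap, ← Spec.map_comp] at hf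
  have hg := Spec.map_injective hf
  let g' : Ch k c →ₐ[k] S := { g.hom with commutes' := fun r => congr($hg r) }
  have hl : linv k c (g' ∘ chX k c) = 1 := by rw [linv_map, linv_chX, map_one]
  refine ⟨g' ∘ chX k c, hl, ?_⟩
  have hu : IsUnit (linv k c (g' ∘ chX k c)) := by rw [hl]; exact isUnit_one
  rw [pt_eq k c _ _ hu]
  have : chLift k c _ hu = g' := by
    apply ch_hom_ext
    intro i
    have := chLift_chX k c _ hu i
    rw [hl, mul_one] at this
    exact this
  rw [this]
  rfl

lemma chι_eq_pt (c : Fin (n + 1) → k) : chι k c = pt k (chX k c) (span_of_linv k c _ (linv_chX k c)) := by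
  have hu : IsUnit (linv k c (chX k c)) := by rw [linv_chX]; exact isUnit_one
  rw [pt_eq k c _ _ hu]
  have : chLift k c _ hu = AlgHom.id k _ := by
    apply ch_hom_ext
    intro i
    have := chLift_chX k c _ hu i
    rw [linv_chX, mul_one] at this
    exact this
  rw [this]
  refine Eq.symm ?_
  convert Category.id_comp _
  exact Spec.map_id _

end pt
end PartA3


section PartB1
open AlgebraicGeometry CategoryTheory CategoryTheory.Limits

section B
open TensorProduct
variable (k L : Type) [Field k] [Field L] [Algebra k L] [FiniteDimensional k L]
variable {R : Type} [CommRing R] [Algebra k R] {R' : Type} [CommRing R'] [Algebra k R']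

/-- Galois action on the second factor -/
def act (σ : L ≃ₐ[k] L) : (R ⊗[k] L) →ₐ[R] (R ⊗[k] L) :=
  Algebra.TensorProduct.map (AlgHom.id R R) (σ : L →ₐ[k] L)

/-- base change of the trace -/
def trR : (R ⊗[k] L) →ₗ[R] R :=
  (TensorProduct.AlgebraTensorModule.rid k R R).toLinearMap ∘ₗ (Algebra.trace k L).baseChange R

lemma trR_tmul (r : R) (x : L) : trR k L (r ⊗ₜ[k] x) = Algebra.trace k L x • r := by
  simp [trR]

lemma trR_spec [IsGalois k L] (w : R ⊗[k] L) : (trR k L w) ⊗ₜ[k] (1 : L) = ∑ σ : L ≃ₐ[k] L, act k L σ w := by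
  induction w with
  | zero => simp
  | add a b ha hb => simp only [map_add, TensorProduct.add_tmul, ha, hb, Finset.sum_add_distrib]
  | tmul r x =>
    rw [trR_tmul, TensorProduct.smul_tmul]
    simp only [act, Algebra.TensorProduct.map_tmul, ← TensorProduct.tmul_sum]
    congr 1
    rw [← Algebra.algebraMap_eq_smul_one, trace_eq_sum_automorphisms]
    rfl

/-- twisted product -/
def tw {n : ℕ} (s : Fin (n + 1) → R ⊗[k] L) (I : (L ≃ₐ[k] L) → Fin (n + 1)) : R ⊗[k] L :=
  ∏ σ, act k L σ (s (I σ))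

/-- basis -/
def bs : Module.Basis (Fin (Module.finrank k L)) k L := Module.finBasis k L

/-- coordinates -/
def yy {n : ℕ} (s : Fin (n + 1) → R ⊗[k] L)
    (b : ((L ≃ₐ[k] L) → Fin (n + 1)) × Fin (Module.finrank k L)) : R :=
  trR k L ((1 ⊗ₜ bs k L b.2) * tw k L s b.1)

lemma incl_inj : Function.Injective (algebraMap R (R ⊗[k] L)) := by
  exact Algebra.TensorProduct.includeLeft_injective (S := R) (algebraMap k L).injective

lemma algebraMap_RL (r : R) : algebraMap R (R ⊗[k] L) r = r ⊗ₜ 1 := rfl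

lemma trR_mul (r : R) (w : R ⊗[k] L) : trR k L (algebraMap R _ r * w) = r * trR k L w := by
  rw [← Algebra.smul_def, map_smul, smul_eq_mul]

lemma trR_one : trR k L (1 : R ⊗[k] L) = (Module.finrank k L : R) := by
  rw [Algebra.TensorProduct.one_def, trR_tmul]
  have := Algebra.trace_algebraMap (S := L) (1 : k)
  rw [map_one] at this
  rw [this]
  simp [Algebra.smul_def]

lemma d_unit [CharZero k] : IsUnit (Module.finrank k L : R) := by
  have : IsUnit ((Module.finrank k L : ℕ) : k) := by
    rw [isUnit_iff_ne_zero]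
    exact_mod_cast (Module.finrank_pos (R := k) (M := L)).ne'
  have := this.map (algebraMap k R)
  simpa using this

lemma nm_descend [IsGalois k L] [CharZero k] (u : R ⊗[k] L) :
    ∃ v : R, ∏ σ, act k L σ u = algebraMap R _ v := by
  obtain ⟨d, hd⟩ := d_unit k L (R := R)
  refine ⟨(d⁻¹ : Rˣ) * trR k L (∏ σ, act k L σ u), ?_⟩
  have h1 := trR_spec k L (∏ σ, act k L σ u)
  have h2 : ∀ τ, act k L τ (∏ σ, act k L σ u) = ∏ σ, act k L σ u := by
    intro τ
    rw [map_prod]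
    refine Fintype.prod_equiv (Equiv.mulLeft τ) _ _ fun σ => ?_
    simp only [act, ← AlgHom.comp_apply, ← Algebra.TensorProduct.map_comp]
    rfl
  simp only [h2, Finset.sum_const, nsmul_eq_mul] at h1
  rw [map_mul, algebraMap_RL k L (trR _ _ _), h1, ← mul_assoc]
  rw [Finset.card_univ, ← Nat.card_eq_fintype_card, IsGalois.card_aut_eq_finrank]
  have : ((Module.finrank k L : ℕ) : R ⊗[k] L) = algebraMap R _ (Module.finrank k L : R) := by simp
  rw [this, ← hd, ← map_mul, Units.inv_mul, map_one, one_mul]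

lemma tw_smul {n : ℕ} (u : R ⊗[k] L) (s s' : Fin (n + 1) → R ⊗[k] L) (h : ∀ i, s' i = u * s i) (I) :
    tw k L s' I = (∏ σ, act k L σ u) * tw k L s I := by
  simp only [tw, h, map_mul, Finset.prod_mul_distrib]

lemma yy_smul [IsGalois k L] [CharZero k] {n : ℕ} (u : R ⊗[k] L) (hu : IsUnit u) (s s' : Fin (n + 1) → R ⊗[k] L)
    (h : ∀ i, s' i = u * s i) : ∃ v : R, IsUnit v ∧ ∀ b, yy k L s' b = v * yy k L s b := by
  obtain ⟨u, rfl⟩ := hu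
  obtain ⟨v, hv⟩ := nm_descend k L (u : R ⊗[k] L)
  obtain ⟨v', hv'⟩ := nm_descend k L (u⁻¹ : (R ⊗[k] L)ˣ).val
  refine ⟨v, IsUnit.of_mul_eq_one v' (incl_inj k L ?_), fun b => ?_⟩
  · rw [map_mul, ← hv, ← hv', ← Finset.prod_mul_distrib]
    simp only [← map_mul, Units.mul_inv, map_one, Finset.prod_const_one]
  · rw [yy, tw_smul k L u s s' h, hv, yy, ← trR_mul]
    congr 1
    ring

lemma yy_span [CharZero k] {n : ℕ} (s : Fin (n + 1) → R ⊗[k] L)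
    (hs : Ideal.span (Set.range s) = ⊤) : Ideal.span (Set.range (yy k L s)) = ⊤ := by
  classical
  obtain ⟨c, hc⟩ := (Ideal.mem_span_range_iff_exists_fun).1 ((Ideal.eq_top_iff_one _).1 hs)
  refine Ideal.eq_top_of_isUnit_mem _ ?_ (d_unit k L (R := R))
  have h1 : (1 : R ⊗[k] L) = ∑ I : (L ≃ₐ[k] L) → Fin (n + 1), 
      (∏ σ, act k L σ (c (I σ))) * tw k L s I := by
    have : (1 : R ⊗[k] L) = ∏ σ : L ≃ₐ[k] L, ∑ i, act k L σ (c i) * act k L σ (s i) := by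
      simp only [← map_mul, ← map_sum, hc, map_one, Finset.prod_const_one]
    rw [this, Finset.prod_univ_sum]
    simp only [Fintype.piFinset_univ, Finset.prod_mul_distrib, tw]
  rw [← trR_one k L, h1, map_sum]
  refine Ideal.sum_mem _ fun I _ => ?_
  generalize (∏ σ, act k L σ (c (I σ))) = C
  rw [← ((bs k L).baseChange R).sum_repr C, Finset.sum_mul, map_sum]
  refine Ideal.sum_mem _ fun j _ => ?_
  rw [smul_mul_assoc, map_smul, Module.Basis.baseChange_apply]
  exact Ideal.mul_mem_left _ _ (Ideal.subset_span ⟨(I, j), rfl⟩)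

/-- base change of algebra map -/
def gL (g : R →ₐ[k] R') : (R ⊗[k] L) →ₐ[k] (R' ⊗[k] L) :=
  Algebra.TensorProduct.map g (AlgHom.id k L)

lemma gL_act (g : R →ₐ[k] R') (σ) (w : R ⊗[k] L) : gL k L g (act k L σ w) = act k L σ (gL k L g w) := by
  induction w with
  | zero => simp
  | add a b ha hb => simp only [map_add, ha, hb]
  | tmul r x => simp [gL, act]

lemma gL_trR (g : R →ₐ[k] R') (w : R ⊗[k] L) : trR k L (gL k L g w) = g (trR k L w) := by
  induction w with
  | zero => simp
  | add a b ha hb => simp only [map_add, ha, hb]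
  | tmul r x => simp [gL, trR_tmul]

lemma gL_tw (g : R →ₐ[k] R') {n : ℕ} (s : Fin (n + 1) → R ⊗[k] L) (I) :
    tw k L (gL k L g ∘ s) I = gL k L g (tw k L s I) := by
  simp only [tw, map_prod, gL_act, Function.comp_apply]

lemma gL_yy (g : R →ₐ[k] R') {n : ℕ} (s : Fin (n + 1) → R ⊗[k] L) (b) :
    yy k L (gL k L g ∘ s) b = g (yy k L s b) := by
  rw [yy, yy, gL_tw, ← gL_trR, map_mul (gL k L g)]
  congr 2
  simp [gL]

/-- dual basis -/
def cs [Algebra.IsSeparable k L] : Fin (Module.finrank k L) → L := 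
  (Algebra.traceForm k L).dualBasis (traceForm_nondegenerate k L) (bs k L)

lemma trR_expand [Algebra.IsSeparable k L] (w : R ⊗[k] L) :
    ∑ j, (1 ⊗ₜ cs k L j) * algebraMap R _ (trR k L ((1 ⊗ₜ bs k L j) * w)) = w := by
  induction w with
  | zero => simp
  | add a b ha hb =>
    simp only [mul_add, map_add, Finset.sum_add_distrib] at *
    rw [ha, hb]
  | tmul r x => 
    simp only [algebraMap_RL, Algebra.TensorProduct.tmul_mul_tmul, one_mul, trR_tmul, mul_one,
      TensorProduct.smul_tmul, ← TensorProduct.tmul_sum]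
    congr 1
    conv_rhs => rw [← ((Algebra.traceForm k L).dualBasis (traceForm_nondegenerate k L) (bs k L)).sum_repr x]
    refine Finset.sum_congr rfl fun j _ => ?_
    rw [LinearMap.BilinForm.dualBasis_repr_apply, Algebra.traceForm_apply, mul_comm x]
    simp [cs]

lemma tw_expand [Algebra.IsSeparable k L] {n : ℕ} (s : Fin (n + 1) → R ⊗[k] L) (I) :
    tw k L s I = ∑ j, (1 ⊗ₜ cs k L j) * algebraMap R _ (yy k L s (I, j)) :=
  (trR_expand k L _).symm

open Classical in
lemma tw_update {n : ℕ} (s : Fin (n + 1) → R ⊗[k] L) (I : (L ≃ₐ[k] L) → Fin (n + 1)) :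
    ∃ P, ∀ i, tw k L s (Function.update I 1 i) = P * s i := by
  refine ⟨∏ σ ∈ Finset.univ.erase 1, act k L σ (s (I σ)), fun i => ?_⟩
  rw [tw, ← Finset.prod_erase_mul _ _ (Finset.mem_univ 1)]
  congr 1
  · refine Finset.prod_congr rfl fun σ hσ => ?_
    rw [Function.update_of_ne (Finset.ne_of_mem_erase hσ)]
  · rw [Function.update_self]
    have : act (R := R) k L 1 = AlgHom.id _ _ := by
      ext; simp [act]
    rw [this]; rfl

end B
end PartB1


section PartC1
open AlgebraicGeometry CategoryTheory CategoryTheory.Limits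
set_option linter.unusedSectionVars false
set_option linter.unusedVariables false
set_option linter.unusedSimpArgs false

section C
open TensorProduct

/-- structure morphism of an affine scheme over `k` -/
abbrev st (k R : Type) [CommRing k] [CommRing R] [Algebra k R] :
    Spec (CommRingCat.of R) ⟶ Spec (CommRingCat.of k) :=
  Spec.map (CommRingCat.ofHom (algebraMap k R))

lemma sp_st (k : Type) {R R' : Type} [CommRing k] [CommRing R] [Algebra k R] [CommRing R'] [Algebra k R']
    (g : R →ₐ[k] R') : sp k g ≫ st k R = st k R' := by
  rw [← Spec.map_comp, ← CommRingCat.ofHom_comp]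
  congr 2
  exact g.comp_algebraMap

lemma exists_sp (k : Type) {R R' : Type} [CommRing k] [CommRing R] [Algebra k R] [CommRing R'] [Algebra k R']
    (a : Spec (CommRingCat.of R') ⟶ Spec (CommRingCat.of R)) (ha : a ≫ st k R = st k R') :
    ∃ g : R →ₐ[k] R', a = sp k g := by
  obtain ⟨φ, rfl⟩ := Spec.map_surjective a
  rw [← Spec.map_comp] at ha
  have := Spec.map_injective ha
  refine ⟨⟨φ.hom, fun r => congr($this r)⟩, rfl⟩

/-- Any affine scheme over `Spec k` comes from a `k`-algebra. -/
lemma exists_alg (k R : Type) [CommRing k] [CommRing R] 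
    (a : Spec (CommRingCat.of R) ⟶ Spec (CommRingCat.of k)) :
    ∃ i : Algebra k R, a = st k R := by
  obtain ⟨φ, rfl⟩ := Spec.map_surjective a
  exact ⟨φ.hom.toAlgebra, rfl⟩

lemma hom_ext_aff {Z T : Scheme.{0}} (a b : Z ⟶ T)
    (h : ∀ (R : Type) [CommRing R] (v : Spec (CommRingCat.of R) ⟶ Z), v ≫ a = v ≫ b) : a = b :=
  Z.affineOpenCover.openCover.hom_ext _ _ fun j => h (Z.affineOpenCover.X j) (Z.affineOpenCover.f j)

variable (k L : Type) [Field k] [Field L] [Algebra k L]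
variable {R : Type} [CommRing R] [Algebra k R] {R' : Type} [CommRing R'] [Algebra k R']
variable {Y : Scheme.{0}} (q : Y ⟶ Spec (CommRingCat.of k))

/-- inclusions into the tensor product -/
abbrev inl : R →ₐ[k] (R ⊗[k] L) := Algebra.TensorProduct.includeLeft
/-- inclusions into the tensor product -/
abbrev inr : L →ₐ[k] (R ⊗[k] L) := Algebra.TensorProduct.includeRight

/-- base-changed point -/
def xi (u : Spec (CommRingCat.of R) ⟶ Y) (hu : u ≫ q = st k R) :
    Spec (CommRingCat.of (R ⊗[k] L)) ⟶ pullback q (st k L) :=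
  pullback.lift (sp k (inl k L) ≫ u) (sp k (inr k L)) (by
    rw [Category.assoc, hu, sp_st, sp_st])

lemma xi_fst (u : Spec (CommRingCat.of R) ⟶ Y) (hu : u ≫ q = st k R) :
    xi k L q u hu ≫ pullback.fst _ _ = sp k (inl k L) ≫ u := pullback.lift_fst _ _ _
lemma xi_snd (u : Spec (CommRingCat.of R) ⟶ Y) (hu : u ≫ q = st k R) :
    xi k L q u hu ≫ pullback.snd _ _ = sp k (inr k L) := pullback.lift_snd _ _ _

lemma xi_isPullback (u : Spec (CommRingCat.of R) ⟶ Y) (hu : u ≫ q = st k R) :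
    IsPullback (xi k L q u hu) (sp k (inl k L)) (pullback.fst q (st k L)) u := by
  have h1 : IsPullback (pullback.snd q (st k L)) (pullback.fst q (st k L)) (st k L) q :=
    (IsPullback.of_hasPullback q (st k L)).flip
  refine IsPullback.of_right ?_ (xi_fst k L q u hu) h1
  have h2 := CommRingCat.isPushout_tensorProduct k R L
  have h3 := h2.op.map Scheme.Spec
  rw [xi_snd, hu]
  exact h3

lemma xi_comp (u : Spec (CommRingCat.of R) ⟶ Y) (hu : u ≫ q = st k R) (g : R →ₐ[k] R')
    (u' : Spec (CommRingCat.of R') ⟶ Y) (hu' : u' ≫ q = st k R') (h : sp k g ≫ u = u') :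
    sp k (gL k L g) ≫ xi k L q u hu = xi k L q u' hu' := by
  apply pullback.hom_ext
  · rw [Category.assoc, xi_fst, xi_fst, ← Category.assoc, ← sp_comp, ← h, ← Category.assoc, ← sp_comp]
    congr 2
  · rw [Category.assoc, xi_snd, xi_snd, ← sp_comp]
    congr 1
    ext x; simp [gL]

variable [FiniteDimensional k L] [IsGalois k L] [CharZero k]
variable {n : ℕ} (f : pullback q (st k L) ⟶ ProjSpace k n)

/-- representation of the map on a chart -/
structure Rep (u : Spec (CommRingCat.of R) ⟶ Y) (hu : u ≫ q = st k R) (s : Fin (n + 1) → R ⊗[k] L) : Prop where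
  hs : Ideal.span (Set.range s) = ⊤
  eq : xi k L q u hu ≫ f = pt k s hs

lemma Rep.comp {u : Spec (CommRingCat.of R) ⟶ Y} {hu : u ≫ q = st k R} {s : Fin (n + 1) → R ⊗[k] L}
    (h : Rep k L q f u hu s) (g : R →ₐ[k] R') (u' : Spec (CommRingCat.of R') ⟶ Y)
    (hu' : u' ≫ q = st k R') (e : sp k g ≫ u = u') : Rep k L q f u' hu' (gL k L g ∘ s) := by
  refine ⟨span_map k _ s h.hs, ?_⟩
  rw [← pt_comp k _ s h.hs, ← h.eq, ← xi_comp k L q u hu g u' hu' e]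
  exact Category.assoc _ _ _

/-- number of coordinates minus one -/
def NN (k L : Type) [Field k] [Field L] [Algebra k L] [FiniteDimensional k L] (n : ℕ) : ℕ :=
  Nat.card (((L ≃ₐ[k] L) → Fin (n + 1)) × Fin (Module.finrank k L)) - 1

/-- indexing of coordinates -/
def ee : Fin (NN k L n + 1) ≃ (((L ≃ₐ[k] L) → Fin (n + 1)) × Fin (Module.finrank k L)) :=
  (finCongr (by
    have : Nonempty (Fin (Module.finrank k L)) := ⟨⟨0, Module.finrank_pos⟩⟩
    exact Nat.sub_add_cancel Nat.card_pos)).trans (Finite.equivFin _).symm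

lemma yye_span (s : Fin (n + 1) → R ⊗[k] L) (hs : Ideal.span (Set.range s) = ⊤) :
    Ideal.span (Set.range (yy k L s ∘ ee k L)) = ⊤ := by
  rw [EquivLike.range_comp]
  exact yy_span k L s hs

lemma Rep.unique {u : Spec (CommRingCat.of R) ⟶ Y} {hu : u ≫ q = st k R} {s s' : Fin (n + 1) → R ⊗[k] L}
    (h : Rep k L q f u hu s) (h' : Rep k L q f u hu s') :
    pt k (yy k L s ∘ ee k L) (yye_span k L s h.hs) = pt k (yy k L s' ∘ ee k L) (yye_span k L s' h'.hs) := by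
  obtain ⟨u, hu, e⟩ := pt_eq_imp_unit k s s' h.hs h'.hs (h.eq.symm.trans h'.eq)
  obtain ⟨v, hv, e'⟩ := yy_smul k L u hu s s' e
  exact pt_smul k v hv _ _ _ _ fun i => e' _

lemma glue_exists (H : ∀ y : Y, ∃ (R : Type) (_ : CommRing R) (_ : Algebra k R) (u : Spec (CommRingCat.of R) ⟶ Y)
    (hu : u ≫ q = st k R) (s : Fin (n + 1) → R ⊗[k] L), IsOpenImmersion u ∧ y ∈ Set.range u ∧ 
      Rep k L q f u hu s) : 
    ∃ g : Y ⟶ ProjSpace k (NN k L n), g ≫ ProjSpace.structMap k _ = q ∧ 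
      ∀ y, ∃ (R : Type) (_ : CommRing R) (_ : Algebra k R) (u : Spec (CommRingCat.of R) ⟶ Y)
    (hu : u ≫ q = st k R) (s : Fin (n + 1) → R ⊗[k] L) (h : Rep k L q f u hu s), 
      IsOpenImmersion u ∧ y ∈ Set.range u ∧ 
      u ≫ g = pt k (yy k L s ∘ ee k L) (yye_span k L s h.hs) := by
  choose R i1 i2 u hu s h1 h2 h using H
  have hf : ∀ x y : Y, pullback.fst (u x) (u y) ≫ pt k (yy k L (s x) ∘ ee k L) (yye_span k L _ (h x).hs) = 
      pullback.snd _ _ ≫ pt k (yy k L (s y) ∘ ee k L) (yye_span k L _ (h y).hs) := by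
    intro x y
    refine hom_ext_aff _ _ fun R'' _ v => ?_
    obtain ⟨_, hv⟩ := exists_alg k R'' ((v ≫ pullback.fst (u x) (u y)) ≫ st k (R x))
    obtain ⟨a, ha⟩ := exists_sp k (v ≫ pullback.fst (u x) (u y)) hv
    have hc : (v ≫ pullback.fst (u x) (u y)) ≫ u x = (v ≫ pullback.snd (u x) (u y)) ≫ u y := by
      rw [Category.assoc, Category.assoc]
      exact congrArg (fun z => v ≫ z) pullback.condition
    obtain ⟨b, hb⟩ := exists_sp k (R := R y) (v ≫ pullback.snd (u x) (u y)) (by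
      rw [← hv, ← hu x, ← hu y, ← Category.assoc, ← hc, Category.assoc])
    have hc2 : sp k a ≫ u x = sp k b ≫ u y := by rw [← ha, ← hb]; exact hc
    have hq : (sp k a ≫ u x) ≫ q = st k R'' := by rw [Category.assoc, hu x, sp_st]
    have e1 := (h x).comp k L q f a _ hq rfl
    have e2 := (h y).comp k L q f b _ hq hc2.symm
    have e3 := Rep.unique k L q f e1 e2
    refine (Category.assoc _ _ _).symm.trans (Eq.trans ?_ (Category.assoc _ _ _))
    rw [ha, hb]
    refine (pt_comp k a _ _).trans (Eq.trans ?_ (pt_comp k b _ _).symm)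
    refine Eq.trans (pt_congr k _ _ _ _ ?_) (e3.trans (pt_congr k _ _ _ _ ?_))
    · funext i; exact (gL_yy k L a _ _).symm
    · funext i; exact (gL_yy k L b _ _)
  let 𝒰 : Y.OpenCover := Scheme.AffineOpenCover.openCover
    { I₀ := Y, X := fun y => CommRingCat.of (R y), f := u, idx := id, covers := h2, map_prop := h1 }
  refine ⟨𝒰.glueMorphisms (fun y : Y => pt k (yy k L (s y) ∘ ee k L) (yye_span k L _ (h y).hs)) hf, ?_, ?_⟩
  · refine 𝒰.hom_ext _ _ fun (y : Y) => ?_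
    refine (Category.assoc _ _ _).symm.trans ?_
    refine (congrArg (fun z => z ≫ ProjSpace.structMap k (NN k L n)) (𝒰.ι_glueMorphisms _ hf y)).trans ?_
    refine (pt_structMap k _ _).trans (hu y).symm
  · exact fun y => ⟨R y, i1 y, i2 y, u y, hu y, s y, h y, h1 y, h2 y, 
      𝒰.ι_glueMorphisms _ hf y⟩

end C
end PartC1


section PartC2
open AlgebraicGeometry CategoryTheory CategoryTheory.Limits
set_option linter.unusedSectionVars false
set_option linter.unusedVariables false
set_option linter.unusedSimpArgs false

section C2
open TensorProduct
variable (k L : Type) [Field k] [Field L] [Algebra k L] [FiniteDimensional k L]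
variable {S : Type} [CommRing S] [Algebra k S] {n : ℕ}

lemma exists_subspace (h : Spec (CommRingCat.of S) ⟶ ProjSpace k n) 
    (hh : h ≫ ProjSpace.structMap k n = st k S) (P : PrimeSpectrum S) :
    ∃ V : Submodule k (Fin (n + 1) → k), V ≠ ⊤ ∧ ∀ c, c ∉ V → P ∈ h ⁻¹ᵁ Dp k c := by
  let κ := P.asIdeal.ResidueField
  let φ : S →ₐ[k] κ := Algebra.algHom k S κ
  have hφ : sp k φ (⊥ : PrimeSpectrum κ) = P := by
    apply PrimeSpectrum.ext
    change Ideal.comap (algebraMap S κ) ⊥ = P.asIdeal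
    exact Ideal.ker_algebraMap_residueField _
  have h1 : h P ∈ (⊤ : (ProjSpace k n).Opens) := trivial
  rw [← Dp_iSup, TopologicalSpace.Opens.mem_iSup] at h1
  obtain ⟨i, hi⟩ := h1
  have key : ∀ (x : PrimeSpectrum κ), sp k φ x = P := by
    intro x
    rw [Subsingleton.elim x ⊥]
    exact hφ
  obtain ⟨s, hs, e⟩ := exists_pt k (Pi.single i 1) (sp k φ ≫ h) (by
      refine (Category.assoc _ _ _).trans ?_
      rw [hh, sp_st]) (by
      ext x
      simp only [TopologicalSpace.Opens.coe_top, Set.mem_univ, iff_true]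
      have h5 : h (sp k φ x) ∈ Dp k (Pi.single i 1) := by
        rw [key x]; exact hi
      exact h5)
  let T : (Fin (n + 1) → k) →ₗ[k] κ := ∑ i, (LinearMap.proj i).smulRight (s i)
  have hT : ∀ c, T c = linv k c s := by
    intro c
    simp [T, linv, Algebra.smul_def]
  refine ⟨LinearMap.ker T, ?_, ?_⟩
  · intro ht
    have : Pi.single i 1 ∈ LinearMap.ker T := by rw [ht]; trivial
    rw [LinearMap.mem_ker, hT, hs] at this
    exact one_ne_zero this
  · intro c hc
    rw [LinearMap.mem_ker, hT] at hc
    have h2 := pt_preimage_Dp k s (span_of_linv k _ s hs) c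
    rw [← e] at h2
    have h3 : (⊥ : PrimeSpectrum κ) ∈ (sp k φ ≫ h) ⁻¹ᵁ Dp k c := by
      rw [h2]
      exact hc
    have h4 : h (sp k φ (⊥ : PrimeSpectrum κ)) ∈ Dp k c := h3
    rw [hφ] at h4
    exact h4

lemma exists_c [CharZero k] {R : Type} [CommRing R] [Algebra k R] 
    (h : Spec (CommRingCat.of (R ⊗[k] L)) ⟶ ProjSpace k n) 
    (hh : h ≫ ProjSpace.structMap k n = st k (R ⊗[k] L)) (p : PrimeSpectrum R) :
    ∃ (c : Fin (n + 1) → k) (r : R), r ∉ p.asIdeal ∧ ∀ P : PrimeSpectrum (R ⊗[k] L), 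
      algebraMap R _ r ∉ P.asIdeal → P ∈ h ⁻¹ᵁ Dp k c := by
  have : Infinite k := CharZero.infinite k
  choose V hV hV' using exists_subspace k h hh
  have hfin := Algebra.QuasiFinite.finite_comap_preimage_singleton (S := R ⊗[k] L) p
  have : Finite (PrimeSpectrum.comap (algebraMap R (R ⊗[k] L)) ⁻¹' {p}) := hfin
  have : ∃ c : Fin (n + 1) → k, ∀ P, PrimeSpectrum.comap (algebraMap R (R ⊗[k] L)) P = p → c ∉ V P := by
    by_contra! hcon
    obtain ⟨⟨P, hP⟩, e⟩ := Subspace.exists_eq_top_of_iUnion_eq_univ (k := k)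
      (p := fun P : (PrimeSpectrum.comap (algebraMap R (R ⊗[k] L)) ⁻¹' {p}) => V P) (by
        ext c
        obtain ⟨P, h1, h2⟩ := hcon c
        simp only [Set.mem_iUnion, Set.mem_univ, iff_true]
        exact ⟨⟨P, h1⟩, h2⟩)
    exact hV P e
  obtain ⟨c, hc⟩ := this
  let U : TopologicalSpace.Opens (PrimeSpectrum (R ⊗[k] L)) := h ⁻¹ᵁ Dp k c
  have hcl := PrimeSpectrum.isClosedMap_comap_of_isIntegral (algebraMap R (R ⊗[k] L)) 
    (algebraMap_isIntegral_iff.2 inferInstance) (U : Set _)ᶜ U.isOpen.isClosed_compl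
  have hp : p ∈ (PrimeSpectrum.comap (algebraMap R (R ⊗[k] L)) '' (U : Set _)ᶜ)ᶜ := by
    rintro ⟨P, h1, h2⟩
    exact h1 (hV' P c (hc P h2))
  obtain ⟨_, ⟨r, rfl⟩, hr, hr'⟩ := PrimeSpectrum.isTopologicalBasis_basic_opens.exists_subset_of_mem_open hp hcl.isOpen_compl
  refine ⟨c, r, hr, fun P hP => ?_⟩
  by_contra hP'
  have : PrimeSpectrum.comap (algebraMap R (R ⊗[k] L)) P ∈ (PrimeSpectrum.basicOpen r : Set _) := hP
  exact hr' this ⟨P, hP', rfl⟩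

variable {Y : Scheme.{0}} (q : Y ⟶ Spec (CommRingCat.of k)) 
lemma chart_exists [CharZero k] [IsGalois k L] (f : pullback q (st k L) ⟶ ProjSpace k n)
    (hf : f ≫ ProjSpace.structMap k n = pullback.snd _ _ ≫ st k L) : 
    ∀ y : Y, ∃ (R : Type) (_ : CommRing R) (_ : Algebra k R) (u : Spec (CommRingCat.of R) ⟶ Y)
    (hu : u ≫ q = st k R) (s : Fin (n + 1) → R ⊗[k] L), IsOpenImmersion u ∧ y ∈ Set.range u ∧ 
      Rep k L q f u hu s := by
  intro y
  let 𝒰 := Y.affineOpenCover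
  let R : Type := 𝒰.X (𝒰.idx y)
  let u : Spec (CommRingCat.of R) ⟶ Y := 𝒰.f (𝒰.idx y)
  have hu0 : IsOpenImmersion u := inferInstanceAs (IsOpenImmersion (𝒰.f _))
  obtain ⟨p, hp⟩ : ∃ p, u p = y := 𝒰.covers y
  obtain ⟨_, hu⟩ := exists_alg k R (u ≫ q)
  obtain ⟨c, r, hr, hc⟩ := exists_c k L (xi k L q u hu ≫ f) (by
    refine (Category.assoc _ _ _).trans ?_
    rw [hf, ← Category.assoc, xi_snd, sp_st]) p
  let φ := Algebra.algHom k R (Localization.Away r)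
  have hu' : (sp k φ ≫ u) ≫ q = st k (Localization.Away r) := by rw [Category.assoc, hu, sp_st]
  have hx := xi_comp k L q u hu φ (sp k φ ≫ u) hu' rfl
  have hx' : xi k L q (sp k φ ≫ u) hu' ≫ f = sp k (gL k L φ) ≫ (xi k L q u hu ≫ f) := by
    rw [← hx]; exact Category.assoc _ _ _
  obtain ⟨s, hs, e⟩ := exists_pt k c (xi k L q (sp k φ ≫ u) hu' ≫ f) (by
    refine (Category.assoc _ _ _).trans ?_
    rw [hf, ← Category.assoc, xi_snd, sp_st]) (by
    ext P
    simp only [TopologicalSpace.Opens.coe_top, Set.mem_univ, iff_true]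
    rw [hx']
    refine hc (sp k (gL k L φ) P) ?_
    change gL k L φ (r ⊗ₜ 1) ∉ PrimeSpectrum.asIdeal P
    have : IsUnit (gL k L φ (r ⊗ₜ 1)) := by
      have h1 : IsUnit (φ r) := IsLocalization.Away.algebraMap_isUnit r
      have := h1.map (algebraMap (Localization.Away r) (Localization.Away r ⊗[k] L))
      simpa [gL] using this
    intro h
    exact P.2.ne_top (Ideal.eq_top_of_isUnit_mem _ h this))
  have : IsOpenImmersion (sp k φ) := AlgebraicGeometry.Scheme.isOpenImmersion_SpecMap_localizationAway (R := CommRingCat.of R) r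
  refine ⟨Localization.Away r, inferInstance, inferInstance, sp k φ ≫ u, hu', s, inferInstance, ?_, ⟨span_of_linv k c s hs, e⟩⟩
  have : p ∈ Set.range (PrimeSpectrum.comap (algebraMap R (Localization.Away r))) := by
    rw [PrimeSpectrum.localization_away_comap_range (Localization.Away r) r]
    exact hr
  obtain ⟨p', hp'⟩ := this
  refine ⟨p', ?_⟩
  refine Eq.trans ?_ hp
  exact congrArg u hp'
end C2
end PartC2


section PartC3
open AlgebraicGeometry CategoryTheory CategoryTheory.Limits
set_option linter.unusedSectionVars false
set_option linter.unusedVariables false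
set_option linter.unusedSimpArgs false

section C3
open TensorProduct

lemma immersion_of_local {X Z : Scheme.{0}} (G : X ⟶ Z) (H : ∀ x, ∃ (W : Scheme.{0}) (j : W ⟶ Z), 
    IsOpenImmersion j ∧ G x ∈ Set.range j ∧ IsImmersion (pullback.snd G j)) : IsImmersion G := by
  choose W j h1 h2 h3 using H
  have i1 : MorphismProperty.IsStableUnderBaseChange @IsImmersion := inferInstance
  have i2 : MorphismProperty.RespectsIso @IsImmersion := i1.respectsIso
  have i3 : MorphismProperty.RespectsRight @IsImmersion @IsOpenImmersion := 
    ⟨fun i hi f hf => by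
      have : IsImmersion f := hf
      have : IsOpenImmersion i := hi
      exact inferInstanceAs (IsImmersion (f ≫ i))⟩
  refine IsZariskiLocalAtTarget.of_range_subset_iSup (P := @IsImmersion) (fun x => (j x).opensRange) ?_ fun x => 
    (MorphismProperty.arrow_mk_iso_iff @IsImmersion (morphismRestrictOpensRange G (j x))).mpr (h3 x)
  rintro _ ⟨x, rfl⟩
  exact TopologicalSpace.Opens.mem_iSup.2 ⟨x, h2 x⟩

lemma hom_ext_charts {T M Y : Scheme.{0}} (a b : T ⟶ M) (p : T ⟶ Y)
    (H : ∀ y : Y, ∃ (R : Type) (_ : CommRing R) (u : Spec (CommRingCat.of R) ⟶ Y), 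
      IsOpenImmersion u ∧ y ∈ Set.range u ∧ 
      ∀ (R'' : Type) [CommRing R''] (v : Spec (CommRingCat.of R'') ⟶ T) 
        (w : Spec (CommRingCat.of R'') ⟶ Spec (CommRingCat.of R)), v ≫ p = w ≫ u → v ≫ a = v ≫ b) : 
    a = b := by
  apply Scheme.hom_ext_of_forall
  intro t
  obtain ⟨R, _, u, hu, hy, h⟩ := H (p t)
  refine ⟨p ⁻¹ᵁ u.opensRange, hy, hom_ext_aff _ _ fun R'' _ v => ?_⟩
  have hr : Set.range ((v ≫ (p ⁻¹ᵁ u.opensRange).ι) ≫ p) ⊆ Set.range u := by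
    rintro _ ⟨x, rfl⟩
    exact (v x).2
  have := h R'' (v ≫ (p ⁻¹ᵁ u.opensRange).ι) (IsOpenImmersion.lift u _ hr) (IsOpenImmersion.lift_fac _ _ _).symm
  simpa using this

variable (k L : Type) [Field k] [Field L] [Algebra k L] [FiniteDimensional k L] [IsGalois k L] [CharZero k]
variable {R : Type} [CommRing R] [Algebra k R] {R' : Type} [CommRing R'] [Algebra k R']
variable {Y : Scheme.{0}} (q : Y ⟶ Spec (CommRingCat.of k)) {n : ℕ}

/-- descended coordinates -/
def zz {B : Type} [CommRing B] [Algebra k B] (t : Fin (NN k L n + 1) → B) (J : (L ≃ₐ[k] L) → Fin (n + 1)) :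
    B ⊗[k] L := ∑ j, (1 ⊗ₜ cs k L j) * algebraMap B (B ⊗[k] L) (t ((ee k L).symm (J, j)))

lemma zz_key {B : Type} [CommRing B] [Algebra k B] (t : Fin (NN k L n + 1) → B) (s : Fin (n + 1) → R ⊗[k] L)
    (η : R ⊗[k] L →ₐ[k] R') (θ : B ⊗[k] L →ₐ[k] R') (hL : η.comp (inr k L) = θ.comp (inr k L)) 
    (v : R') (h : ∀ b, η (inl k L (yy k L s (ee k L b))) = v * θ (inl k L (t b))) (J) :
    η (tw k L s J) = v * θ (zz k L t J) := by
  rw [tw_expand, zz, map_sum, map_sum, Finset.mul_sum]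
  refine Finset.sum_congr rfl fun j _ => ?_
  have h1 := h ((ee k L).symm (J, j))
  rw [Equiv.apply_symm_apply] at h1
  have h2 : η (1 ⊗ₜ cs k L j) = θ (1 ⊗ₜ cs k L j) := congr($hL (cs k L j))
  have h3 : η (algebraMap R (R ⊗[k] L) (yy k L s (J, j))) = v * θ (algebraMap B (B ⊗[k] L) (t ((ee k L).symm (J, j)))) := h1
  rw [map_mul, map_mul, h2, h3]
  ring

lemma tw_span_ex (s : Fin (n + 1) → R ⊗[k] L) (hs : Ideal.span (Set.range s) = ⊤) 
    (P : PrimeSpectrum (R ⊗[k] L)) : ∃ I, tw k L s I ∉ P.asIdeal := by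
  classical
  by_contra! hcon
  obtain ⟨c, hc⟩ := (Ideal.mem_span_range_iff_exists_fun).1 ((Ideal.eq_top_iff_one _).1 hs)
  have h1 : (1 : R ⊗[k] L) = ∑ I : (L ≃ₐ[k] L) → Fin (n + 1), 
      (∏ σ, act k L σ (c (I σ))) * tw k L s I := by
    have : (1 : R ⊗[k] L) = ∏ σ : L ≃ₐ[k] L, ∑ i, act k L σ (c i) * act k L σ (s i) := by
      simp only [← map_mul, ← map_sum, hc, map_one, Finset.prod_const_one]
    rw [this, Finset.prod_univ_sum]
    simp only [Fintype.piFinset_univ, Finset.prod_mul_distrib, tw]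
  refine P.2.ne_top ((Ideal.eq_top_iff_one _).2 ?_)
  rw [h1]
  exact Ideal.sum_mem _ fun I _ => Ideal.mul_mem_left _ _ (hcon I)

lemma tw_yy_ex (s : Fin (n + 1) → R ⊗[k] L) (hs : Ideal.span (Set.range s) = ⊤) 
    (P : PrimeSpectrum (R ⊗[k] L)) : ∃ I a, 
      inl k L (yy k L s (ee k L a)) * tw k L s I ∉ P.asIdeal := by
  obtain ⟨I, hI⟩ := tw_span_ex k L s hs P
  by_contra! hcon
  have h2 : ∀ j, algebraMap R (R ⊗[k] L) (yy k L s (I, j)) ∈ P.asIdeal := by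
    intro j
    have := hcon I ((ee k L).symm (I, j))
    rw [Equiv.apply_symm_apply] at this
    exact (P.2.mem_or_mem this).resolve_right hI
  apply hI
  rw [tw_expand]
  exact Ideal.sum_mem _ fun I _ => Ideal.mul_mem_left _ _ (h2 I)

/-- the map to the base-changed projective space -/
abbrev ZL (k L : Type) [Field k] [Field L] [Algebra k L] (n : ℕ) : Scheme.{0} :=
  pullback (ProjSpace.structMap k n) (st k L)

/-- points of the base-changed projective space -/
def ptL {S : Type} [CommRing S] [Algebra k S] (s : Fin (n + 1) → S) (hs : Ideal.span (Set.range s) = ⊤) 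
    (b : L →ₐ[k] S) : Spec (CommRingCat.of S) ⟶ ZL k L n :=
  pullback.lift (pt k s hs) (sp k b) ((pt_structMap k s hs).trans (sp_st k b).symm)

lemma comp_ptL {S S' : Type} [CommRing S] [Algebra k S] [CommRing S'] [Algebra k S'] (g : S →ₐ[k] S')
   (s : Fin (n + 1) → S) (hs : Ideal.span (Set.range s) = ⊤) (b : L →ₐ[k] S) : 
    sp k g ≫ ptL k L s hs b = ptL k L (g ∘ s) (span_map k g s hs) (g.comp b) := by
  apply pullback.hom_ext
  · rw [ptL, ptL, Category.assoc, pullback.lift_fst, pullback.lift_fst, pt_comp]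
  · rw [ptL, ptL, Category.assoc, pullback.lift_snd, pullback.lift_snd, sp_comp]

lemma ptL_fst {S : Type} [CommRing S] [Algebra k S] (s : Fin (n + 1) → S) (hs : Ideal.span (Set.range s) = ⊤) 
    (b : L →ₐ[k] S) : ptL k L s hs b ≫ pullback.fst _ _ = pt k s hs := pullback.lift_fst _ _ _

lemma ptL_snd {S : Type} [CommRing S] [Algebra k S] (s : Fin (n + 1) → S) (hs : Ideal.span (Set.range s) = ⊤) 
    (b : L →ₐ[k] S) : ptL k L s hs b ≫ pullback.snd _ _ = sp k b := pullback.lift_snd _ _ _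

lemma ptL_congr {S : Type} [CommRing S] [Algebra k S] (s s' : Fin (n + 1) → S)
    (hs : Ideal.span (Set.range s) = ⊤) (hs' : Ideal.span (Set.range s') = ⊤)
    (b b' : L →ₐ[k] S) (u : S) (hu : IsUnit u) (h : ∀ i, s' i = u * s i) (hb : b = b') :
    ptL k L s hs b = ptL k L s' hs' b' := by
  subst hb
  apply pullback.hom_ext
  · rw [ptL_fst, ptL_fst, pt_smul k u hu s s' hs hs' h]
  · rw [ptL_snd, ptL_snd]

lemma ptL_eq {S : Type} [CommRing S] [Algebra k S] (s s' : Fin (n + 1) → S)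
    (hs : Ideal.span (Set.range s) = ⊤) (hs' : Ideal.span (Set.range s') = ⊤)
    (b b' : L →ₐ[k] S) (h : ptL k L s hs b = ptL k L s' hs' b') :
    b = b' ∧ ∃ u : S, IsUnit u ∧ ∀ i, s' i = u * s i := by
  have h1 := congrArg (fun z => z ≫ pullback.fst _ _) h
  have h2 := congrArg (fun z => z ≫ pullback.snd _ _) h
  simp only [ptL_fst, ptL_snd] at h1 h2
  exact ⟨sp_inj k h2, pt_eq_imp_unit k s s' hs hs' h1⟩

end C3
end PartC3


section PartC4
open AlgebraicGeometry CategoryTheory CategoryTheory.Limits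
set_option linter.unusedSectionVars false
set_option linter.unusedVariables false
set_option linter.unusedSimpArgs false

section C4
open TensorProduct
variable (k L : Type) [Field k] [Field L] [Algebra k L] [FiniteDimensional k L] [IsGalois k L] [CharZero k]
variable {R : Type} [CommRing R] [Algebra k R] {R' : Type} [CommRing R'] [Algebra k R']
variable {Y : Scheme.{0}} (q : Y ⟶ Spec (CommRingCat.of k)) {n : ℕ}

lemma loc_lift (k : Type) [CommRing k] {A S : Type} [CommRing A] [CommRing S] [Algebra k A] [Algebra k S] (z : A) 
    (θ : A →ₐ[k] S) (h : IsUnit (θ z)) : 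
    ∃ ω : Localization.Away z →ₐ[k] S, ω.comp (Algebra.algHom k A (Localization.Away z)) = θ := by
  have hz : ∀ y : Submonoid.powers z, IsUnit (θ y) := by
    rintro ⟨_, m, rfl⟩
    rw [map_pow]
    exact h.pow m
  refine ⟨IsLocalization.liftAlgHom (M := Submonoid.powers z) (f := θ) hz, ?_⟩
  apply AlgHom.ext
  intro x
  exact IsLocalization.lift_eq hz x

lemma xi_open {V : Scheme.{0}} (p : V ⟶ Spec (CommRingCat.of k)) (u : Spec (CommRingCat.of R) ⟶ V) (hu : u ≫ p = st k R)
    [IsOpenImmersion u] : IsOpenImmersion (xi k L p u hu) :=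
  MorphismProperty.of_isPullback (P := @IsOpenImmersion) (xi_isPullback k L p u hu).flip inferInstance

lemma xi_range (u : Spec (CommRingCat.of R) ⟶ Y) (hu : u ≫ q = st k R) (x : ↥(pullback q (st k L)))
    (hx : pullback.fst q (st k L) x ∈ Set.range u) : ∃ P, xi k L q u hu P = x := by
  obtain ⟨y, hy⟩ := hx
  obtain ⟨P, h1, h2⟩ := Scheme.exists_preimage_of_isPullback (xi_isPullback k L q u hu) x y hy.symm
  exact ⟨P, h1⟩

lemma xi_chart (c : Fin (n + 1) → k) : xi k L (ProjSpace.structMap k n) (chι k c) (chι_structMap k c) =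
    ptL k L (inl k L ∘ chX k c) (span_map k _ _ (span_of_linv k c _ (linv_chX k c))) (inr k L) := by
  apply pullback.hom_ext
  · rw [xi_fst, ptL_fst, chι_eq_pt, pt_comp]
  · rw [xi_snd, ptL_snd]

lemma xi_pt (u : Spec (CommRingCat.of R) ⟶ Y) (hu : u ≫ q = st k R) (g : Y ⟶ ProjSpace k n)
    (hg : pullback.fst q (st k L) ≫ g ≫ ProjSpace.structMap k n = pullback.snd q (st k L) ≫ st k L)
    (t : Fin (n + 1) → R) (ht : Ideal.span (Set.range t) = ⊤) (h : u ≫ g = pt k t ht) :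
    xi k L q u hu ≫ pullback.lift (pullback.fst q (st k L) ≫ g) (pullback.snd _ _) ((Category.assoc _ _ _).trans hg) = 
    ptL k L (inl k L ∘ t) (span_map k _ _ ht) (inr k L) := by
  apply pullback.hom_ext
  · rw [Category.assoc, pullback.lift_fst, ptL_fst, ← pt_comp k _ t ht, ← h]
    refine (Category.assoc _ _ _).symm.trans ?_
    rw [xi_fst]
    exact (Category.assoc _ _ _)
  · rw [Category.assoc, pullback.lift_snd, ptL_snd, xi_snd]

lemma Rep.ptL {f : pullback q (st k L) ⟶ ProjSpace k n} 
    (hf : f ≫ ProjSpace.structMap k n = pullback.snd q (st k L) ≫ st k L)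
    {u : Spec (CommRingCat.of R) ⟶ Y} {hu : u ≫ q = st k R} {s : Fin (n + 1) → R ⊗[k] L}
    (h : Rep k L q f u hu s) : xi k L q u hu ≫ pullback.lift f (pullback.snd _ _) hf = 
      Paper.ptL k L s h.hs (inr k L) := by
  apply pullback.hom_ext
  · rw [Category.assoc, pullback.lift_fst, ptL_fst, h.eq]
  · rw [Category.assoc, pullback.lift_snd, ptL_snd, xi_snd]

section W
variable (I : (L ≃ₐ[k] L) → Fin (n + 1)) (a : Fin (NN k L n + 1))
/-- the chart ring -/
abbrev BL : Type := Ch k (Pi.single a 1 : Fin (NN k L n + 1) → k) ⊗[k] L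
/-- z on the chart -/
abbrev zI : BL k L a := zz k L (chX k (Pi.single a 1)) I
/-- W -/
abbrev WR : Type := Localization.Away (zI k L I a)
/-- loc -/
abbrev wl : BL k L a →ₐ[k] WR k L I a := Algebra.algHom k _ _
/-- the open immersion -/
def jW : Spec (CommRingCat.of (WR k L I a)) ⟶ ZL k L (NN k L n) :=
  sp k (wl k L I a) ≫ xi k L (ProjSpace.structMap k _) (chι k (Pi.single a 1)) (chι_structMap k _)

instance : IsOpenImmersion (jW k L I a) := by
  have h1 := xi_open k L (ProjSpace.structMap k (NN k L n)) (chι k (Pi.single a 1)) (chι_structMap k _)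
  have h2 : IsOpenImmersion (sp k (wl k L I a)) := 
    AlgebraicGeometry.Scheme.isOpenImmersion_SpecMap_localizationAway (R := CommRingCat.of (BL k L a)) _
  exact inferInstanceAs (IsOpenImmersion (_ ≫ _))

/-- coordinates on W -/
def sW (i : Fin (n + 1)) : WR k L I a := 
  open Classical in wl k L I a (zz k L (chX k (Pi.single a 1)) (Function.update I 1 i))

lemma sW_unit : IsUnit (sW k L I a (I 1)) := by
  classical
  rw [sW, Function.update_eq_self]
  exact IsLocalization.Away.algebraMap_isUnit _

lemma sW_span : Ideal.span (Set.range (sW k L I a)) = ⊤ :=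
  Ideal.eq_top_of_isUnit_mem _ (Ideal.subset_span ⟨I 1, rfl⟩) (sW_unit k L I a)

/-- map W to P^n -/
def mW : Spec (CommRingCat.of (WR k L I a)) ⟶ ZL k L n :=
  ptL k L (sW k L I a) (sW_span k L I a) ((wl k L I a).comp (inr k L))

lemma mW_key (s : Fin (n + 1) → R ⊗[k] L) (hs : Ideal.span (Set.range s) = ⊤) 
    (η : R ⊗[k] L →ₐ[k] R') (ω : WR k L I a →ₐ[k] R') 
    (h : sp k η ≫ ptL k L (inl k L ∘ (yy k L s ∘ ee k L)) (span_map k _ _ (yye_span k L s hs)) (inr k L) = 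
      sp k ω ≫ jW k L I a) : 
    sp k η ≫ ptL k L s hs (inr k L) = sp k ω ≫ mW k L I a := by
  classical
  rw [jW, ← Category.assoc, ← sp_comp, xi_chart, comp_ptL, comp_ptL] at h
  obtain ⟨hb, v, hv, hh⟩ := ptL_eq k L _ _ _ _ _ _ h.symm
  have key := zz_key k L (chX k (Pi.single a 1)) s η (ω.comp (wl k L I a)) hb.symm v hh
  rw [mW, comp_ptL, comp_ptL]
  obtain ⟨P, hP⟩ := tw_update k L s I
  have h1 : ∀ i, η P * η (s i) = v * ω (sW k L I a i) := by
    intro i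
    rw [← map_mul, ← hP, key]
    rfl
  have hPu : IsUnit (η P) := by
    have := h1 (I 1)
    have h2 : IsUnit (η P * η (s (I 1))) := by
      rw [this]; exact hv.mul ((sW_unit k L I a).map ω)
    exact isUnit_of_mul_isUnit_left h2
  obtain ⟨p, hp⟩ := hPu
  obtain ⟨v, rfl⟩ := hv
  refine ptL_congr k L _ _ _ _ _ _ (v⁻¹ * p : R'ˣ) (Units.isUnit _) (fun i => ?_) hb.symm
  have := h1 i
  rw [← hp] at this
  simp only [Function.comp_apply, Units.val_mul, mul_assoc]
  rw [this, ← mul_assoc, Units.inv_mul, one_mul]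

lemma jW_range (s : Fin (n + 1) → R ⊗[k] L) (hs : Ideal.span (Set.range s) = ⊤) 
    (P : PrimeSpectrum (R ⊗[k] L)) (hP : inl k L (yy k L s (ee k L a)) * tw k L s I ∉ P.asIdeal) : 
    ptL k L (inl k L ∘ (yy k L s ∘ ee k L)) (span_map k _ _ (yye_span k L s hs)) (inr k L) P ∈ 
      Set.range (jW k L I a) := by
  set w := inl k L (yy k L s (ee k L a)) * tw k L s I with hw
  let η : R ⊗[k] L →ₐ[k] Localization.Away w := Algebra.algHom k _ _
  have hu : IsUnit (η w) := IsLocalization.Away.algebraMap_isUnit w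
  replace hu : IsUnit (η (inl k L (yy k L s (ee k L a))) * η (tw k L s I)) := by rw [← map_mul]; exact hu
  have hu1 := isUnit_of_mul_isUnit_left hu
  have hu2 := isUnit_of_mul_isUnit_right hu
  let t : Fin (NN k L n + 1) → Localization.Away w := η ∘ (inl k L ∘ (yy k L s ∘ ee k L))
  have ht : linv k (Pi.single a 1) t = η (inl k L (yy k L s (ee k L a))) := by rw [linv_single]; rfl
  have ht' : IsUnit (linv k (Pi.single a 1) t) := by rw [ht]; exact hu1
  let α := chLift k (Pi.single a 1) t ht'
  let θ : BL k L a →ₐ[k] Localization.Away w := Algebra.TensorProduct.lift α (η.comp (inr k L)) (fun _ _ => Commute.all _ _)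
  have hθ : IsUnit (θ (zI k L I a)) := by
    have := zz_key k L (chX k (Pi.single a 1)) s η θ (by ext x; simp [θ]) (linv k (Pi.single a 1) t) (fun b => by
      have := chLift_chX k (Pi.single a 1) t ht' b
      rw [mul_comm] at this
      simp only [θ, Algebra.TensorProduct.includeLeft_apply, Algebra.TensorProduct.lift_tmul, map_one, mul_one]
      exact this.symm) I
    rw [this] at hu2
    exact isUnit_of_mul_isUnit_right hu2
  obtain ⟨ω, hω⟩ := loc_lift k (zI k L I a) θ hθ
  have e : sp k η ≫ ptL k L (inl k L ∘ (yy k L s ∘ ee k L)) (span_map k _ _ (yye_span k L s hs)) (inr k L) = 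
      sp k ω ≫ jW k L I a := by
    rw [jW, ← Category.assoc, ← sp_comp, xi_chart, comp_ptL, comp_ptL, hω]
    symm
    refine ptL_congr k L _ _ _ _ _ _ _ ht' (fun i => ?_) ?_
    · have := chLift_chX k (Pi.single a 1) t ht' i
      rw [mul_comm] at this
      refine this.symm.trans ?_
      simp [θ, α, ← Algebra.TensorProduct.one_def]
    · ext x; simp [θ]
  obtain ⟨P', hP'⟩ : P ∈ Set.range (PrimeSpectrum.comap (algebraMap (R ⊗[k] L) (Localization.Away w))) := by
    rw [PrimeSpectrum.localization_away_comap_range (Localization.Away w) w]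
    exact hP
  refine ⟨sp k ω P', ?_⟩
  have := congr($e P')
  refine this.symm.trans ?_
  exact congrArg (ptL k L (inl k L ∘ (yy k L s ∘ ee k L)) (span_map k _ _ (yye_span k L s hs)) (inr k L)) hP'
end W

lemma immersion_G (f : pullback q (st k L) ⟶ ProjSpace k n)
    (hf : f ≫ ProjSpace.structMap k n = pullback.snd q (st k L) ≫ st k L)
    (hF : IsImmersion (pullback.lift f (pullback.snd q (st k L)) hf : _ ⟶ ZL k L n))
    (g : Y ⟶ ProjSpace k (NN k L n))
    (hg : pullback.fst q (st k L) ≫ g ≫ ProjSpace.structMap k _ = pullback.snd q (st k L) ≫ st k L)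
    (H : ∀ y, ∃ (R : Type) (_ : CommRing R) (_ : Algebra k R) (u : Spec (CommRingCat.of R) ⟶ Y)
    (hu : u ≫ q = st k R) (s : Fin (n + 1) → R ⊗[k] L) (h : Rep k L q f u hu s), 
      IsOpenImmersion u ∧ y ∈ Set.range u ∧ 
      u ≫ g = pt k (yy k L s ∘ ee k L) (yye_span k L s h.hs)) : 
    IsImmersion (pullback.lift (pullback.fst q (st k L) ≫ g) (pullback.snd q (st k L)) 
      ((Category.assoc _ _ _).trans hg) : _ ⟶ ZL k L (NN k L n)) := by
  set G : pullback q (st k L) ⟶ ZL k L (NN k L n) := (pullback.lift (pullback.fst q (st k L) ≫ g) (pullback.snd q (st k L)) 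
      ((Category.assoc _ _ _).trans hg)) with hG
  set F : pullback q (st k L) ⟶ ZL k L n := pullback.lift f (pullback.snd q (st k L)) hf with hF'
  have hGs : G ≫ pullback.snd _ _ = pullback.snd _ _ := pullback.lift_snd _ _ _
  apply immersion_of_local
  intro x
  obtain ⟨R, _, _, u, hu, s, h, h1, h2, h3⟩ := H (pullback.fst q (st k L) x)
  obtain ⟨P, hP⟩ := xi_range k L q u hu x h2
  obtain ⟨I, a, hIa⟩ := tw_yy_ex k L s h.hs P
  refine ⟨_, jW k L I a, inferInstance, ?_, ?_⟩
  · rw [← hP]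
    have := jW_range k L I a s h.hs P hIa
    rw [← xi_pt k L q u hu g hg _ _ h3] at this
    exact this
  · have key : pullback.snd G (jW k L I a) ≫ mW k L I a = pullback.fst G (jW k L I a) ≫ F := by
      refine hom_ext_charts _ _ (pullback.fst G (jW k L I a) ≫ pullback.fst q (st k L)) fun y => ?_
      obtain ⟨R, _, _, u, hu, s, h, h1, h2, h3⟩ := H y
      refine ⟨R, inferInstance, u, h1, h2, ?_⟩
      intro R'' _ v w hvw
      obtain ⟨_, hv⟩ := exists_alg k R'' (w ≫ st k R)
      obtain ⟨w, rfl⟩ := exists_sp k w hv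
      have hX : (v ≫ pullback.fst G (jW k L I a)) ≫ pullback.snd q (st k L) ≫ st k L = st k R'' := by
        rw [← pullback.condition, ← hv, ← hu, ← Category.assoc (sp k w) u q, ← hvw]
        simp only [Category.assoc]
      obtain ⟨b, hb⟩ := exists_sp k (R := L) ((v ≫ pullback.fst G (jW k L I a)) ≫ pullback.snd q (st k L)) (by
        rw [Category.assoc]; exact hX)
      obtain ⟨ω, hω⟩ := exists_sp k (R := WR k L I a) (v ≫ pullback.snd G (jW k L I a)) (by
        have e : jW k L I a ≫ pullback.snd _ _ ≫ st k L = st k (WR k L I a) := by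
          rw [jW, Category.assoc, ← Category.assoc (xi _ _ _ _ _), xi_snd, sp_st, sp_st]
        rw [← e, ← hX, Category.assoc, ← pullback.condition_assoc, ← Category.assoc G, hGs, Category.assoc])
      let η : R ⊗[k] L →ₐ[k] R'' := Algebra.TensorProduct.lift w b (fun _ _ => Commute.all _ _)
      have hη : sp k η ≫ xi k L q u hu = v ≫ pullback.fst G (jW k L I a) := by
        apply pullback.hom_ext
        · rw [Category.assoc, xi_fst, ← Category.assoc, ← sp_comp, Category.assoc, hvw]
          congr 2
          ext x; simp [η]
        · rw [Category.assoc, xi_snd, ← sp_comp, hb]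
          congr 1
          ext x; simp [η]
      have hk := mW_key k L I a s h.hs η ω (by
        rw [← hω, ← xi_pt k L q u hu g hg _ _ h3, ← Category.assoc, hη]
        exact (Category.assoc _ _ _).trans ((congrArg (fun z => v ≫ z)
          (pullback.condition (f := G) (g := jW k L I a))).trans (Category.assoc _ _ _).symm))
      rw [← Category.assoc, hω, ← hk, ← Category.assoc, ← hη, Category.assoc, ← h.ptL k L q hf]
    have : IsImmersion (pullback.snd G (jW k L I a) ≫ mW k L I a) := by
      rw [key]; infer_instance
    exact IsImmersion.of_comp _ (mW k L I a)

/-- Quasi-projectivity data over `L` descend to a map over `k`. -/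
lemma exists_G (f : pullback q (st k L) ⟶ ProjSpace k n)
    (hf : f ≫ ProjSpace.structMap k n = pullback.snd q (st k L) ≫ st k L)
    (hF : IsImmersion (pullback.lift f (pullback.snd q (st k L)) hf : _ ⟶ ZL k L n)) : 
    ∃ (N : ℕ) (g : Y ⟶ ProjSpace k N) (hg : g ≫ ProjSpace.structMap k N = q)
    (hg' : (pullback.fst q (st k L) ≫ g) ≫ ProjSpace.structMap k _ = pullback.snd q (st k L) ≫ st k L), 
      IsImmersion (pullback.lift (pullback.fst q (st k L) ≫ g) (pullback.snd q (st k L)) hg' : _ ⟶ ZL k L N) := by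
  obtain ⟨g, hg, H⟩ := glue_exists k L q f (chart_exists k L q f hf)
  refine ⟨_, g, hg, ?_, immersion_G k L q f hf hF g ?_ H⟩
  · rw [Category.assoc, hg, pullback.condition]
  · rw [hg, pullback.condition]
end C4
end PartC4


section PartG
open AlgebraicGeometry CategoryTheory CategoryTheory.Limits
set_option linter.unusedSectionVars false
set_option linter.unusedVariables false
set_option linter.unusedSimpArgs false
set_option linter.style.haveILetI false

section G
open TensorProduct

lemma glue_pt (K : Type) [CommRing K] {X : Scheme.{0}} (p : X ⟶ Spec (CommRingCat.of K)) {ι : Type} {n : ℕ}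
    (R : ι → Type) [∀ i, CommRing (R i)] [∀ i, Algebra K (R i)] 
    (u : ∀ i, Spec (CommRingCat.of (R i)) ⟶ X) (hu : ∀ i, u i ≫ p = st K (R i)) 
    (h1 : ∀ i, IsOpenImmersion (u i)) (hc : ∀ x, ∃ i, x ∈ Set.range (u i)) 
    (s : ∀ i, Fin (n + 1) → R i) (hs : ∀ i, Ideal.span (Set.range (s i)) = ⊤) 
    (H : ∀ i j (R'' : Type) [CommRing R''] [Algebra K R''] (a : R i →ₐ[K] R'') (b : R j →ₐ[K] R''), 
      sp K a ≫ u i = sp K b ≫ u j → ∃ c, IsUnit c ∧ ∀ l, b (s j l) = c * a (s i l)) : 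
    ∃ g : X ⟶ ProjSpace K n, g ≫ ProjSpace.structMap K n = p ∧ ∀ i, u i ≫ g = pt K (s i) (hs i) := by
  have hf : ∀ x y : ι, pullback.fst (u x) (u y) ≫ pt K (s x) (hs x) = 
      pullback.snd _ _ ≫ pt K (s y) (hs y) := by
    intro x y
    refine hom_ext_aff _ _ fun R'' _ v => ?_
    obtain ⟨_, hv⟩ := exists_alg K R'' ((v ≫ pullback.fst (u x) (u y)) ≫ st K (R x))
    obtain ⟨a, ha⟩ := exists_sp K (v ≫ pullback.fst (u x) (u y)) hv
    have hc : (v ≫ pullback.fst (u x) (u y)) ≫ u x = (v ≫ pullback.snd (u x) (u y)) ≫ u y := by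
      rw [Category.assoc, Category.assoc]
      exact congrArg (fun z => v ≫ z) pullback.condition
    obtain ⟨b, hb⟩ := exists_sp K (R := R y) (v ≫ pullback.snd (u x) (u y)) (by
      rw [← hv, ← hu x, ← hu y, ← Category.assoc, ← hc, Category.assoc])
    have hc2 : sp K a ≫ u x = sp K b ≫ u y := by rw [← ha, ← hb]; exact hc
    obtain ⟨c, hc, hc'⟩ := H x y R'' a b hc2
    refine (Category.assoc _ _ _).symm.trans (Eq.trans ?_ (Category.assoc _ _ _))
    rw [ha, hb]
    refine (pt_comp K a _ _).trans (Eq.trans ?_ (pt_comp K b _ _).symm)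
    exact pt_smul K c hc _ _ _ _ hc'
  choose idx hidx using hc
  let 𝒰 : X.OpenCover := Scheme.AffineOpenCover.openCover
    { I₀ := ι, X := fun y => CommRingCat.of (R y), f := u, idx := idx, covers := hidx, map_prop := h1 }
  refine ⟨𝒰.glueMorphisms (fun y : ι => pt K (s y) (hs y)) hf, ?_, ?_⟩
  · refine 𝒰.hom_ext _ _ fun (y : ι) => ?_
    refine (Category.assoc _ _ _).symm.trans ?_
    refine (congrArg (fun z => z ≫ ProjSpace.structMap K n) (𝒰.ι_glueMorphisms _ hf y)).trans ?_
    refine (pt_structMap K _ _).trans (hu y).symm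
  · exact fun y => 𝒰.ι_glueMorphisms _ hf y

lemma chι_cover (K : Type) [CommRing K] {n : ℕ} (x : ProjSpace K n) : 
    ∃ i : Fin (n + 1), x ∈ Set.range (chι K (Pi.single i 1 : Fin (n + 1) → K)) := by
  have h : x ∈ (⨆ i : Fin (n + 1), Dp K (Pi.single i 1) : (ProjSpace K n).Opens) := by
    rw [Dp_iSup]; trivial
  obtain ⟨i, hi⟩ := TopologicalSpace.Opens.mem_iSup.1 h
  rw [← chι_opensRange] at hi
  exact ⟨i, hi⟩

variable (k K : Type) [Field k] [Field K] [Algebra k K] (n : ℕ)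

/-- chart index -/
abbrev ei (k : Type) [CommRing k] {n : ℕ} (i : Fin (n + 1)) : Fin (n + 1) → k := Pi.single i 1

lemma exists_g0 : ∃ g : ProjSpace K n ⟶ ProjSpace k n, g ≫ ProjSpace.structMap k n = ProjSpace.structMap K n ≫ st k K ∧ 
    ∀ i : Fin (n + 1), chι K (ei K i) ≫ g = 
      letI : Algebra k (Ch K (ei K i)) := ((algebraMap K _).comp (algebraMap k K)).toAlgebra
      pt k (chX K (ei K i)) (span_of_linv K _ _ (linv_chX K _)) := by
  letI : ∀ i : Fin (n + 1), Algebra k (Ch K (ei K i)) := fun i => 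
    ((algebraMap K (Ch K (ei K i))).comp (algebraMap k K)).toAlgebra
  refine glue_pt k (ProjSpace.structMap K n ≫ st k K) (ι := Fin (n + 1)) (fun i => Ch K (ei K i)) 
    (fun i => chι K (ei K i)) ?_ (fun i => inferInstance) (chι_cover K) (fun i => chX K (ei K i)) 
    (fun i => span_of_linv K _ _ (linv_chX K _)) ?_
  · intro i
    refine (Category.assoc _ _ _).symm.trans ?_
    refine (congrArg (fun z => z ≫ st k K) (chι_structMap K _)).trans ?_
    rw [← Spec.map_comp, ← CommRingCat.ofHom_comp]
  · intro i j R'' _ _ a b h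
    obtain ⟨_, hv⟩ := exists_alg K R'' (sp k a ≫ st K _)
    obtain ⟨a', ha⟩ := exists_sp K (sp k a) hv
    obtain ⟨b', hb⟩ := exists_sp K (R := Ch K (ei K j)) (sp k b) (by
      rw [← hv]
      refine (congrArg (fun z => sp k b ≫ z) (chι_structMap K (ei K j)).symm).trans ?_
      refine Eq.trans ?_ (congrArg (fun z => sp k a ≫ z) (chι_structMap K (ei K i)))
      refine (Category.assoc _ _ _).symm.trans (Eq.trans ?_ (Category.assoc _ _ _))
      rw [h])
    rw [ha, hb, chι_eq_pt, chι_eq_pt, pt_comp, pt_comp] at h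
    obtain ⟨c, hc, h⟩ := pt_eq_imp_unit K _ _ _ _ h
    refine ⟨c, hc, fun l => ?_⟩
    have e1 : ∀ x, a x = a' x := fun x => by
      have := Spec.map_injective ha
      exact congr($this x)
    have e2 : ∀ x, b x = b' x := fun x => by
      have := Spec.map_injective hb
      exact congr($this x)
    rw [e1, e2]
    exact h l

lemma exists_inv : 
    letI : ∀ i : Fin (n + 1), Algebra K (Ch k (ei k i) ⊗[k] K) := fun i => 
     (Algebra.TensorProduct.includeRight : K →ₐ[k] (Ch k (ei k i) ⊗[k] K)).toRingHom.toAlgebra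
    ∃ g : ZL k K n ⟶ ProjSpace K n, g ≫ ProjSpace.structMap K n = pullback.snd _ _ ∧ 
    ∀ i : Fin (n + 1), xi k K (ProjSpace.structMap k n) (chι k (ei k i)) (chι_structMap k _) ≫ g = 
      pt K (inl k K ∘ chX k (ei k i)) (span_map k (inl k K) _ (span_of_linv k _ _ (linv_chX k _))) := by
  letI i0 : ∀ i : Fin (n + 1), Algebra K (Ch k (ei k i) ⊗[k] K) := fun i => 
    (Algebra.TensorProduct.includeRight : K →ₐ[k] (Ch k (ei k i) ⊗[k] K)).toRingHom.toAlgebra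
  refine glue_pt K (pullback.snd (ProjSpace.structMap k n) (st k K)) (ι := Fin (n + 1)) (fun i => Ch k (ei k i) ⊗[k] K) 
    (fun i => xi k K (ProjSpace.structMap k n) (chι k (ei k i)) (chι_structMap k _)) ?_ ?_ ?_ 
    (fun i => inl k K ∘ chX k (ei k i)) 
    (fun i => span_map k (inl k K) _ (span_of_linv k _ _ (linv_chX k _))) ?_
  · intro i
    exact xi_snd _ _ _ _ _
  · intro i
    exact MorphismProperty.of_isPullback (P := @IsOpenImmersion) (xi_isPullback k K _ _ _).flip inferInstance
  · intro x
    obtain ⟨i, y, hy⟩ := chι_cover k (pullback.fst (ProjSpace.structMap k n) (st k K) x)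
    obtain ⟨z, hz, -⟩ := Scheme.exists_preimage_of_isPullback 
      (xi_isPullback k K (ProjSpace.structMap k n) (chι k (ei k i)) (chι_structMap k _)) x y hy.symm
    exact ⟨i, z, hz⟩
  · intro i j R'' _ _ a b h
    letI : Algebra k R'' := ((algebraMap K R'').comp (algebraMap k K)).toAlgebra
    have key : ∀ (i : Fin (n + 1)) (a : Ch k (ei k i) ⊗[k] K →ₐ[K] R''), ∃ a' : Ch k (ei k i) →ₐ[k] R'', 
        (∀ x, a' x = a (inl k K x)) ∧ (sp K a ≫ xi k K (ProjSpace.structMap k n) (chι k (ei k i)) (chι_structMap k _)) ≫ 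
          pullback.fst _ _ = sp k a' ≫ chι k (ei k i) := by
      intro i a
      refine ⟨{ a.toRingHom.comp (inl k K).toRingHom with commutes' := ?_ }, fun x => rfl, ?_⟩
      · intro r
        have h1 : inl k K (algebraMap k (Ch k (ei k i)) r) = inr k K (algebraMap k K r) := by
          rw [AlgHom.commutes, AlgHom.commutes]
        exact (congrArg a h1).trans (a.commutes (algebraMap k K r))
      · rw [Category.assoc, xi_fst, ← Category.assoc]
        congr 1
        rw [← Spec.map_comp]
        rfl
    obtain ⟨a', ha, ha'⟩ := key i a
    obtain ⟨b', hb, hb'⟩ := key j b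
    have h2 : sp k a' ≫ chι k (ei k i) = sp k b' ≫ chι k (ei k j) := by
      rw [← ha', ← hb', h]
    rw [chι_eq_pt, chι_eq_pt, pt_comp, pt_comp] at h2
    obtain ⟨c, hc, h⟩ := pt_eq_imp_unit k _ _ _ _ h2
    refine ⟨c, hc, fun l => ?_⟩
    have := h l
    simp only [Function.comp_apply] at this ⊢
    rwa [ha, hb] at this

lemma exists_imm : ∃ (g : ProjSpace K n ⟶ ProjSpace k n) (h : g ≫ ProjSpace.structMap k n = ProjSpace.structMap K n ≫ st k K), 
    IsImmersion (pullback.lift g (ProjSpace.structMap K n) h : _ ⟶ ZL k K n) := by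
  obtain ⟨g, hg, hg'⟩ := exists_g0 k K n
  obtain ⟨m, hm, hm'⟩ := exists_inv k K n
  refine ⟨g, hg, ?_⟩
  have : pullback.lift g (ProjSpace.structMap K n) hg ≫ m = 𝟙 _ := by
    have h1 : ∀ i : Fin (n + 1), IsOpenImmersion (chι K (ei K i)) := inferInstance
    choose idx hidx using chι_cover K (n := n)
    let 𝒰 : (ProjSpace K n).OpenCover := Scheme.AffineOpenCover.openCover
      { I₀ := Fin (n + 1), X := fun y => CommRingCat.of (Ch K (ei K y)), f := fun i => chι K (ei K i), idx := idx, covers := hidx, map_prop := h1 }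
    refine 𝒰.hom_ext _ _ fun (i : Fin (n + 1)) => ?_
    have h2 := hg' i
    have h3 := hm' i
    let i1 : Algebra k (Ch K (ei K i)) := ((algebraMap K _).comp (algebraMap k K)).toAlgebra
    let i2 : Algebra K (Ch k (ei k i) ⊗[k] K) :=
      (Algebra.TensorProduct.includeRight : K →ₐ[k] (Ch k (ei k i) ⊗[k] K)).toRingHom.toAlgebra
    have hl : linv k (ei k i) (chX K (ei K i)) = 1 := by
      have := linv_chX K (ei K i)
      rw [linv_single] at this ⊢
      exact this
    have hlu : IsUnit (linv k (ei k i) (chX K (ei K i))) := by rw [hl]; exact isUnit_one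
    let θ0 : Ch k (ei k i) →ₐ[k] Ch K (ei K i) := chLift k (ei k i) (chX K (ei K i)) hlu
    have hθ0 : ∀ l, θ0 (chX k (ei k i) l) = chX K (ei K i) l := by
      intro l
      have := chLift_chX k (ei k i) (chX K (ei K i)) hlu l
      rwa [hl, mul_one] at this
    let ρ : K →ₐ[k] Ch K (ei K i) := { algebraMap K (Ch K (ei K i)) with commutes' := fun r => rfl }
    let θ : Ch k (ei k i) ⊗[k] K →ₐ[k] Ch K (ei K i) := Algebra.TensorProduct.productMap θ0 ρ
    have hθl : θ.comp (inl k K) = θ0 := Algebra.TensorProduct.productMap_left _ _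
    have hθr : θ.comp (inr k K) = ρ := Algebra.TensorProduct.productMap_right _ _
    let θ' : Ch k (ei k i) ⊗[k] K →ₐ[K] Ch K (ei K i) := 
      { θ.toRingHom with commutes' := fun r => DFunLike.congr_fun hθr r }
    have e1 : chι K (ei K i) ≫ pullback.lift g (ProjSpace.structMap K n) hg = 
        sp K θ' ≫ xi k K (ProjSpace.structMap k n) (chι k (ei k i)) (chι_structMap k _) := by
      apply pullback.hom_ext
      · rw [Category.assoc, Category.assoc, pullback.lift_fst, xi_fst, h2, ← Category.assoc]
        rw [pt_eq k (ei k i) _ _ hlu]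
        congr 1
        have : sp k (θ.comp (inl k K)) = sp k θ0 := by rw [hθl]
        rw [← Spec.map_comp]
        exact this.symm
      · rw [Category.assoc, Category.assoc, pullback.lift_snd, xi_snd]
        refine (chι_structMap K _).trans ?_
        have : sp k (θ.comp (inr k K)) = sp k ρ := by rw [hθr]
        rw [← Spec.map_comp]
        exact this.symm
    have e2 : chι K (ei K i) ≫ pullback.lift g (ProjSpace.structMap K n) hg ≫ m = chι K (ei K i) := by
      rw [← Category.assoc, e1, Category.assoc, h3, pt_comp, chι_eq_pt K (ei K i)]
      apply pt_congr
      funext l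
      exact (DFunLike.congr_fun hθl (chX k (ei k i) l)).trans (hθ0 l)
    refine Eq.trans e2 (Category.comp_id _).symm
  have h3 : IsImmersion (pullback.lift g (ProjSpace.structMap K n) hg ≫ m) := by rw [this]; infer_instance
  exact IsImmersion.of_comp _ m

end G
end PartG


section PartG2
open AlgebraicGeometry CategoryTheory CategoryTheory.Limits
set_option linter.unusedSectionVars false
set_option linter.unusedVariables false

section G2
open CategoryTheory.Limits
variable (k : Type) [Field k] {Y : Scheme.{0}} (q : Y ⟶ Spec (CommRingCat.of k))

/-- immersed in projective space after base change to `A` -/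
def IQP (A : Type) [CommRing A] [Algebra k A] (n : ℕ) : Prop :=
  ∃ (f : pullback q (st k A) ⟶ ProjSpace k n) (h : f ≫ ProjSpace.structMap k n = pullback.snd q (st k A) ≫ st k A),
    IsImmersion (pullback.lift f (pullback.snd q (st k A)) h : _ ⟶ pullback (ProjSpace.structMap k n) (st k A))

lemma IQP_of_QP (K : Type) [Field K] [Algebra k K] (h : QuasiProjectiveOver K (pullback.snd q (st k K))) : 
    ∃ n, IQP k q K n := by
  obtain ⟨n, f, hf, hf'⟩ := h
  obtain ⟨g, hg, hi⟩ := exists_imm k K n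
  have h1 : (f ≫ g) ≫ ProjSpace.structMap k n = pullback.snd q (st k K) ≫ st k K := by
    rw [Category.assoc, hg, ← Category.assoc, hf']
  refine ⟨n, f ≫ g, h1, ?_⟩
  have : (pullback.lift (f ≫ g) (pullback.snd q (st k K)) h1 : _ ⟶ pullback (ProjSpace.structMap k n) (st k K)) = 
     f ≫ pullback.lift g (ProjSpace.structMap K n) hg := by
    apply pullback.hom_ext
    · rw [Category.assoc, pullback.lift_fst, pullback.lift_fst]
    · rw [Category.assoc, pullback.lift_snd, pullback.lift_snd, hf']
  rw [this]
  infer_instance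

variable {S : Scheme.{0}} {A A' : Scheme.{0}} 
/-- base change map -/
def bcm {X : Scheme.{0}} (p : X ⟶ S) (t : A ⟶ S) (t' : A' ⟶ S) (φ : A' ⟶ A) (h : φ ≫ t = t') : 
    pullback p t' ⟶ pullback p t := 
  pullback.lift (pullback.fst _ _) (pullback.snd _ _ ≫ φ) (by rw [Category.assoc, h, pullback.condition])

lemma bcm_fst {X : Scheme.{0}} (p : X ⟶ S) (t : A ⟶ S) (t' : A' ⟶ S) (φ : A' ⟶ A) (h : φ ≫ t = t') : 
    bcm p t t' φ h ≫ pullback.fst _ _ = pullback.fst _ _ := pullback.lift_fst _ _ _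
lemma bcm_snd {X : Scheme.{0}} (p : X ⟶ S) (t : A ⟶ S) (t' : A' ⟶ S) (φ : A' ⟶ A) (h : φ ≫ t = t') : 
    bcm p t t' φ h ≫ pullback.snd _ _ = pullback.snd _ _ ≫ φ := pullback.lift_snd _ _ _

lemma bcm_isPullback {X : Scheme.{0}} (p : X ⟶ S) (t : A ⟶ S) (t' : A' ⟶ S) (φ : A' ⟶ A) (h : φ ≫ t = t') : 
    IsPullback (bcm p t t' φ h) (pullback.snd _ _) (pullback.snd _ _) φ := by
  refine IsPullback.of_right ?_ (bcm_snd ..) (IsPullback.of_hasPullback p t)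
  rw [bcm_fst, h]
  exact IsPullback.of_hasPullback p t'

lemma bcm_sq {X Z : Scheme.{0}} (p : X ⟶ S) (r : Z ⟶ S) (t : A ⟶ S) (t' : A' ⟶ S) (φ : A' ⟶ A) (h : φ ≫ t = t')
    (F : pullback p t ⟶ pullback r t) (hF : F ≫ pullback.snd _ _ = pullback.snd _ _)
    (F' : pullback p t' ⟶ pullback r t') (hF' : F' ≫ pullback.snd _ _ = pullback.snd _ _) 
    (hc : bcm p t t' φ h ≫ F = F' ≫ bcm r t t' φ h) : 
    IsPullback (bcm p t t' φ h) F' F (bcm r t t' φ h) := by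
  refine IsPullback.of_bot ?_ hc (bcm_isPullback r t t' φ h)
  rw [hF, hF']
  exact bcm_isPullback p t t' φ h

lemma IQP_bc {A A' : Type} [CommRing A] [CommRing A'] [Algebra k A] [Algebra k A'] (φ : A →ₐ[k] A') {n : ℕ} 
    (h : IQP k q A n) : IQP k q A' n := by
  obtain ⟨f, hf, hi⟩ := h
  have hφ : sp k φ ≫ st k A = st k A' := sp_st k φ
  have hf' : (bcm q (st k A) (st k A') (sp k φ) hφ ≫ f) ≫ ProjSpace.structMap k n = 
      pullback.snd q (st k A') ≫ st k A' := by
    rw [Category.assoc, hf, ← Category.assoc, bcm_snd, Category.assoc, hφ]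
  refine ⟨bcm q (st k A) (st k A') (sp k φ) hφ ≫ f, hf', ?_⟩
  have := bcm_sq q (ProjSpace.structMap k n) (st k A) (st k A') (sp k φ) hφ (pullback.lift f _ hf) (pullback.lift_snd _ _ _) 
    (pullback.lift _ _ hf') (pullback.lift_snd _ _ _) (by
      apply pullback.hom_ext
      · simp only [Category.assoc, pullback.lift_fst, bcm_fst]
      · simp only [Category.assoc, pullback.lift_snd, pullback.lift_snd_assoc, bcm_snd])
  exact MorphismProperty.of_isPullback (P := @IsImmersion) this hi

end G2
end PartG2


section PartH
open AlgebraicGeometry CategoryTheory CategoryTheory.Limits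
set_option linter.unusedSectionVars false
set_option linter.unusedVariables false

section H
lemma imm_descent {Y Z Y' Z' : Scheme.{0}} (p' : Y' ⟶ Y) (f' : Y' ⟶ Z') (f : Y ⟶ Z) (p : Z' ⟶ Z) 
   (H : IsPullback p' f' f p) [Surjective p] [Flat p] [QuasiCompact p] [UniversallyOpen p] [IsImmersion f'] : 
   IsImmersion f := by
  have hpo : IsOpenMap p := p.isOpenMap
  have hpc : Continuous p := p.continuous
  have hps : Function.Surjective p := p.surjective
  have hr : p ⁻¹' (Set.range f) = Set.range f' := by
    ext z
    constructor
    · rintro ⟨y, hy⟩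
      obtain ⟨w, -, hw⟩ := Scheme.exists_preimage_of_isPullback H y z hy
      exact ⟨w, hw⟩
    · rintro ⟨w, rfl⟩
      refine ⟨p' w, ?_⟩
      have := congr($(H.w) w)
      simpa using this
  have hcb : p ⁻¹' (coborder (Set.range f)) = coborder (Set.range f') := by
    rw [← hr]
    exact (coborder_preimage hpo hpc _).symm
  have hU : IsOpen (coborder (Set.range f)) := by
    rw [← (hpo.isQuotientMap hpc hps).isOpen_preimage, hcb]
    exact f'.isLocallyClosed_range.isOpen_coborder
  let U : Z.Opens := ⟨_, hU⟩
  have hfU : Set.range f ⊆ Set.range U.ι := by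
    rw [Scheme.Opens.range_ι]; exact subset_coborder
  let l : Y ⟶ U := IsOpenImmersion.lift U.ι f hfU
  have hl : l ≫ U.ι = f := IsOpenImmersion.lift_fac _ _ _
  let l' : Y' ⟶ pullback U.ι p := pullback.lift (p' ≫ l) f' (by rw [Category.assoc, hl, H.w])
  have hl' : l' ≫ pullback.snd U.ι p = f' := pullback.lift_snd _ _ _
  have H2 : IsPullback p' l' l (pullback.fst U.ι p) := by
    refine IsPullback.of_bot ?_ (pullback.lift_fst _ _ _).symm (IsPullback.of_hasPullback U.ι p).flip.flip
    rw [hl, hl']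
    exact H
  have : IsImmersion (l' ≫ pullback.snd U.ι p) := by rw [hl']; infer_instance
  have i1 : IsImmersion l' := IsImmersion.of_comp l' (pullback.snd U.ι p)
  have i2 : IsClosedImmersion l' := by
    rw [IsClosedImmersion.iff_isPreimmersion]
    refine ⟨inferInstance, ?_⟩
    have : Set.range l' = (pullback.snd U.ι p) ⁻¹' (closure (Set.range f')) := by
      ext w
      constructor
      · rintro ⟨y, rfl⟩
        apply subset_closure
        refine ⟨y, ?_⟩
        have := congr($hl' y)
        simpa using this.symm
      · intro hw
        have h1 : pullback.snd U.ι p w ∈ coborder (Set.range f') := by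
          rw [← hcb]
          have h2 : p (pullback.snd U.ι p w) = U.ι (pullback.fst U.ι p w) := by
            have := congr($(pullback.condition (f := U.ι) (g := p)) w)
            simpa using this.symm
          rw [Set.mem_preimage, h2]
          exact (pullback.fst U.ι p w).2
        have h2 : pullback.snd U.ι p w ∈ Set.range f' := by
          rw [← closure_inter_coborder (s := Set.range f')]
          exact ⟨hw, h1⟩
        obtain ⟨y, hy⟩ := h2
        refine ⟨y, (pullback.snd U.ι p).isOpenEmbedding.injective ?_⟩
        rw [← hy]
        have := congr($hl' y)
        simpa using this
    rw [this]
    exact isClosed_closure.preimage (pullback.snd U.ι p).continuous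
  have hQ : (@Surjective ⊓ @Flat ⊓ @QuasiCompact : MorphismProperty Scheme.{0}) (pullback.fst U.ι p) := ⟨⟨inferInstance, inferInstance⟩, inferInstance⟩
  have j1 : UniversallyClosed l := MorphismProperty.of_isPullback_of_descendsAlong (P := @UniversallyClosed) H2.flip hQ inferInstance
  have j2 : LocallyOfFiniteType l := MorphismProperty.of_isPullback_of_descendsAlong (P := @LocallyOfFiniteType) H2.flip hQ inferInstance
  have j3 : Mono l := by
    have hst : (@Surjective ⊓ @Flat ⊓ @QuasiCompact : MorphismProperty Scheme.{0}).IsStableUnderBaseChange := 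
      ⟨fun sq h => ⟨⟨MorphismProperty.of_isPullback (P := @Surjective) sq h.1.1, 
        MorphismProperty.of_isPullback (P := @Flat) sq h.1.2⟩, MorphismProperty.of_isPullback (P := @QuasiCompact) sq h.2⟩⟩
    have : (MorphismProperty.isomorphisms Scheme).diagonal l := 
      MorphismProperty.of_isPullback_of_descendsAlong (P := (MorphismProperty.isomorphisms Scheme).diagonal) H2.flip hQ (by
        rw [MorphismProperty.diagonal_isomorphisms]; exact (inferInstance : Mono l'))
    rwa [MorphismProperty.diagonal_isomorphisms] at this
  have j4 : IsProper l := {}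
  have j5 : IsClosedImmersion l := (IsClosedImmersion.iff_isProper_and_mono l).2 ⟨j4, j3⟩
  rw [← hl]
  infer_instance
end H
end PartH


section PartL
open AlgebraicGeometry CategoryTheory CategoryTheory.Limits
set_option linter.unusedSectionVars false
set_option linter.unusedVariables false

section L
variable {R K : CommRingCat.{0}} (φ : R ⟶ K)

/-- subalgebra generated by a finite set -/
def aS' (s : Finset K) : @Subalgebra R K _ _ φ.hom.toAlgebra :=
  @Algebra.adjoin R K _ _ φ.hom.toAlgebra (s : Set K)

/-- as a subring -/
def aS (s : Finset K) : Subring K :=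
  @Subalgebra.toSubring R K _ _ φ.hom.toAlgebra (aS' φ s)

lemma aS_mono {s t : Finset K} (h : s ≤ t) : aS φ s ≤ aS φ t := 
  @Algebra.adjoin_mono R K _ _ φ.hom.toAlgebra _ _ (by exact_mod_cast h)

/-- diagram of subrings -/
def subF {J : Type} [Preorder J] {K : CommRingCat.{0}} (a : J → Subring K) (h : Monotone a) : J ⥤ CommRingCat.{0} where
  obj s := CommRingCat.of (a s)
  map {s t} f := CommRingCat.ofHom (Subring.inclusion (h (leOfHom f)))
  map_id s := by ext; rfl
  map_comp f g := by ext; rfl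

/-- inclusion cocone -/
def subC {J : Type} [Preorder J] {K : CommRingCat.{0}} (a : J → Subring K) (h : Monotone a) : Cocone (subF a h) where
  pt := K
  ι := { app := fun s => CommRingCat.ofHom (a s).subtype
         naturality := fun s t h => by ext; rfl }

lemma subC_isColimit {J : Type} [Preorder J] [IsFiltered J] {K : CommRingCat.{0}} (a : J → Subring K) (h : Monotone a)
    (hs : ∀ x, ∃ s, x ∈ a s) : Nonempty (IsColimit (subC a h)) := by
  have h : Nonempty (IsColimit ((forget CommRingCat.{0}).mapCocone (subC a h))) := by
    refine ⟨Types.FilteredColimit.isColimitOf' _ _ ?_ ?_⟩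
    · intro x
      obtain ⟨s, hs⟩ := hs x
      refine ⟨s, (⟨x, hs⟩ : a s), ?_⟩
      rfl
    · intro i x y h
      refine ⟨i, 𝟙 i, ?_⟩
      congr 1
      exact Subtype.ext h
  have : ReflectsColimitsOfShape J (forget CommRingCat.{0}) := 
    reflectsColimitsOfShape_of_reflectsIsomorphisms
  exact ⟨isColimitOfReflects (forget CommRingCat.{0}) h.some⟩

lemma mem_aS (x : K) : x ∈ aS φ {x} := 
  @Algebra.subset_adjoin R K _ _ φ.hom.toAlgebra _ _ (by simp)

/-- diagram of f.g. subrings -/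
abbrev TR : Finset K ⥤ CommRingCat.{0} := subF (aS φ) (fun _ _ h => aS_mono φ h)

lemma rng_mem (s : Finset K) (x : R) : φ.hom x ∈ aS φ s := by
  let := φ.hom.toAlgebra
  exact (aS' φ s).algebraMap_mem x

/-- structure maps -/
def aSm (s : Finset K) : R ⟶ (TR φ).obj s := 
  CommRingCat.ofHom (φ.hom.codRestrict (aS φ s) (rng_mem φ s))

lemma aSm_ft (s : Finset K) : (aSm φ s).hom.FiniteType := by
  let := φ.hom.toAlgebra
  have : Algebra.FiniteType R (aS' φ s) := 
    (Subalgebra.fg_iff_finiteType _).1 (Subalgebra.fg_adjoin_finset s)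
  exact RingHom.finiteType_algebraMap.2 this

end L

/-- an affine morphism of affine schemes is a limit of finite type ones -/
lemma exists_approx_spec {R K : CommRingCat.{0}} (φ : R ⟶ K) : 
    ∃ (I : Type) (_ : SmallCategory I) (_ : IsCofiltered I) (D : I ⥤ Scheme.{0}) 
      (t : D ⟶ (Functor.const I).obj (Spec R)) (π : (Functor.const I).obj (Spec K) ⟶ D), 
      Nonempty (IsLimit (Cone.mk (Spec K) π)) ∧ (∀ i, π.app i ≫ t.app i = Spec.map φ) ∧ 
      (∀ i, IsAffine (D.obj i)) ∧ ∀ i, LocallyOfFiniteType (t.app i) := by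
  refine ⟨(Finset K)ᵒᵖ, inferInstance, inferInstance, (TR φ).op ⋙ Scheme.Spec, 
    { app := fun i => Spec.map (aSm φ i.unop)
      naturality := fun i j f => ?_ }, (Scheme.Spec.mapCone (subC (aS φ) (fun _ _ h => aS_mono φ h)).op).π, ⟨?_⟩, ?_, ?_, ?_⟩
  · refine (Spec.map_comp _ _).symm.trans (Eq.trans ?_ (Category.comp_id _).symm)
    refine congrArg Spec.map ?_
    ext x
    rfl
  · exact isLimitOfPreserves Scheme.Spec (subC_isColimit (aS φ) (fun _ _ h => aS_mono φ h) (fun x => ⟨{x}, mem_aS φ x⟩)).some.op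
  · intro i
    exact (Spec.map_comp _ _).symm
  · intro i
    change IsAffine (Spec _)
    infer_instance
  · intro i
    exact (HasRingHomProperty.Spec_iff (P := @LocallyOfFiniteType)).2 (aSm_ft φ i.unop)

lemma exists_approx {T S : Scheme.{0}} [IsAffine T] [IsAffine S] (s : T ⟶ S) : 
    ∃ (I : Type) (_ : SmallCategory I) (_ : IsCofiltered I) (D : I ⥤ Scheme.{0}) 
      (t : D ⟶ (Functor.const I).obj S) (π : (Functor.const I).obj T ⟶ D), 
      Nonempty (IsLimit (Cone.mk T π)) ∧ (∀ i, π.app i ≫ t.app i = s) ∧ 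
      (∀ i, IsAffine (D.obj i)) ∧ ∀ i, LocallyOfFiniteType (t.app i) := by
  obtain ⟨I, i1, i2, D, t, π, hl, h1, h2, h3⟩ := exists_approx_spec s.appTop
  refine ⟨I, i1, i2, D, t ≫ (Functor.const I).map S.isoSpec.inv, (Functor.const I).map T.isoSpec.hom ≫ π, 
    ⟨IsLimit.ofIsoLimit hl.some (Cone.ext T.isoSpec.symm (fun j => ?_))⟩, ?_, h2, ?_⟩
  · simp
  · intro i
    simp [reassoc_of% (h1 i), Scheme.isoSpec_hom_naturality_assoc]
  · intro i
    have := h3 i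
    simp only [NatTrans.comp_app, Functor.const_map_app]
    infer_instance

section pbD
variable {I : Type} [SmallCategory I] [IsCofiltered I] (D : I ⥤ Scheme.{0}) {S T X : Scheme.{0}}
      (t : D ⟶ (Functor.const I).obj S) (π : (Functor.const I).obj T ⟶ D) (p : X ⟶ S) (s : T ⟶ S)

lemma pbD_w {i j : I} (f : i ⟶ j) : D.map f ≫ t.app j = t.app i := by simpa using t.naturality f

/-- base-changed diagram -/
def pbD : I ⥤ Scheme.{0} where
  obj i := pullback p (t.app i)
  map {i j} f := bcm p (t.app j) (t.app i) (D.map f) (pbD_w D t f)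
  map_id i := by
    apply pullback.hom_ext
    · simp [bcm_fst]
    · simp [bcm_snd]
  map_comp f g := by
    apply pullback.hom_ext
    · simp [bcm_fst]
    · simp [bcm_snd, reassoc_of% bcm_snd]

/-- cone -/
def pbDc (h : ∀ i, π.app i ≫ t.app i = s) : (Functor.const I).obj (pullback p s) ⟶ pbD D t p where
  app i := bcm p (t.app i) s (π.app i) (h i)
  naturality i j f := by
    apply pullback.hom_ext
    · simp [pbD, bcm_fst]
    · have := π.naturality f
      simp at this
      simp [pbD, bcm_snd, reassoc_of% bcm_snd, this]

lemma pbDc_aux (h : ∀ i, π.app i ≫ t.app i = s) (hl : IsLimit (Cone.mk T π)) (W : Scheme.{0}) 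
    (a : ∀ i, W ⟶ pullback p (t.app i)) (ha : ∀ (i j) (f : i ⟶ j), a i ≫ bcm p (t.app j) (t.app i) (D.map f) (pbD_w D t f) = a j) :
    ∃ l : W ⟶ pullback p s, (∀ i, l ≫ bcm p (t.app i) s (π.app i) (h i) = a i) ∧ 
      ∀ m : W ⟶ pullback p s, (∀ i, m ≫ bcm p (t.app i) s (π.app i) (h i) = a i) → m = l := by
  have key (i j : I) : a i ≫ pullback.fst p (t.app i) = a j ≫ pullback.fst p (t.app j) := by
    have (i j : I) (f : i ⟶ j) : a i ≫ pullback.fst p (t.app i) = a j ≫ pullback.fst p (t.app j) := by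
      rw [← ha i j f]
      simp [bcm_fst]
    rw [← this _ _ (IsCofiltered.minToLeft i j), ← this _ _ (IsCofiltered.minToRight i j)]
  let c' : Cone D := 
   { pt := W
     π := { app := fun i => a i ≫ pullback.snd p (t.app i)
            naturality := fun i j f => by
              rw [← ha i j f]
              simp [bcm_snd] } }
  obtain ⟨l, hfac, huniq⟩ : ∃ l : W ⟶ T, (∀ i, l ≫ π.app i = a i ≫ pullback.snd p (t.app i)) ∧ 
      ∀ m : W ⟶ T, (∀ i, m ≫ π.app i = a i ≫ pullback.snd p (t.app i)) → m = l := 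
    ⟨hl.lift c', fun i => hl.fac c' i, fun m hm => hl.uniq c' m hm⟩
  have hne : Nonempty I := IsCofiltered.nonempty
  let i0 : I := hne.some
  have hw : (a i0 ≫ pullback.fst p (t.app i0)) ≫ p = l ≫ s := by
    rw [← h i0, reassoc_of% (hfac i0), Category.assoc, pullback.condition]
  refine ⟨pullback.lift (a i0 ≫ pullback.fst p (t.app i0)) l hw, ?_, ?_⟩
  · intro i
    apply pullback.hom_ext
    · rw [Category.assoc, bcm_fst]
      exact (pullback.lift_fst _ _ _).trans (key i0 i)
    · rw [Category.assoc, bcm_snd]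
      exact (pullback.lift_snd_assoc _ _ _ _).trans (hfac i)
  · intro m hm
    apply pullback.hom_ext
    · rw [pullback.lift_fst, ← hm i0]
      simp [bcm_fst]
    · rw [pullback.lift_snd]
      refine huniq _ fun j => ?_
      rw [← hm j]
      simp [bcm_snd]

lemma pbDc_isLimit (h : ∀ i, π.app i ≫ t.app i = s) (hl : IsLimit (Cone.mk T π)) : 
    Nonempty (IsLimit (Cone.mk _ (pbDc D t π p s h))) := by
  have A (c : Cone (pbD D t p)) := pbDc_aux D t π p s h hl c.pt (fun i => c.π.app i) (fun i j f => c.w f)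
  choose l hf hu using A
  exact ⟨⟨l, fun c j => hf c j, fun c m hm => hu c m hm⟩⟩

instance pbD_aff [∀ i, IsAffine (D.obj i)] {i j : I} (f : i ⟶ j) : IsAffineHom ((pbD D t p).map f) := 
  MorphismProperty.of_isPullback (P := @IsAffineHom) (bcm_isPullback p (t.app j) (t.app i) (D.map f) (pbD_w D t f)).flip 
    inferInstance

end pbD
end PartL


section PartS1
open AlgebraicGeometry CategoryTheory CategoryTheory.Limits
set_option linter.unusedSectionVars false
set_option linter.unusedVariables false

lemma app_comp' {X Y Z : Scheme.{0}} (f : X ⟶ Y) (g : Y ⟶ Z) (x : Γ(Z, ⊤)) : (f ≫ g).appTop x = f.appTop (g.appTop x) := by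
  rw [Scheme.Hom.comp_appTop]; rfl

lemma pushout_surj {A B C D : CommRingCat.{0}} {f : A ⟶ B} {g : A ⟶ C} {i : B ⟶ D} {j : C ⟶ D} 
    (H : IsPushout f g i j) (h : ∀ b, i.hom b ∈ j.hom.range) : Function.Surjective j.hom := by
  let i' : B ⟶ CommRingCat.of j.hom.range := CommRingCat.ofHom (i.hom.codRestrict j.hom.range h)
  let j' : C ⟶ CommRingCat.of j.hom.range := CommRingCat.ofHom (j.hom.codRestrict j.hom.range (fun c => ⟨c, rfl⟩))
  let e : CommRingCat.of j.hom.range ⟶ D := CommRingCat.ofHom j.hom.range.subtype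
  have hw : f ≫ i' = g ≫ j' := by
    ext a
    have := DFunLike.congr_fun (congrArg CommRingCat.Hom.hom H.w) a
    exact this
  have h1 : H.desc i' j' hw ≫ e = 𝟙 D := by
    apply H.hom_ext
    · rw [IsPushout.inl_desc_assoc]; rfl
    · rw [IsPushout.inr_desc_assoc]; rfl
  intro d
  have := DFunLike.congr_fun (congrArg CommRingCat.Hom.hom h1) d
  have h2 := ((H.desc i' j' hw).hom d).2
  have h3 : (((H.desc i' j' hw).hom d : j.hom.range) : D) = d := this
  rw [h3] at h2
  exact h2

section ci
variable {I : Type} [SmallCategory I] [IsCofiltered I] (E : I ⥤ Scheme.{0}) {Z W X : Scheme.{0}}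
      (t : E ⟶ (Functor.const I).obj Z) (π : (Functor.const I).obj W ⟶ E) (f : X ⟶ Z) (s : W ⟶ Z)

lemma ci_lim [∀ i, IsAffine (E.obj i)] [IsAffine Z] [IsAffine W] [IsAffine X] [LocallyOfFiniteType f] 
    (h : ∀ i, π.app i ≫ t.app i = s) (hl : IsLimit (Cone.mk W π)) (hci : IsClosedImmersion (pullback.snd f s)) : 
    ∃ i, IsClosedImmersion (pullback.snd f (t.app i)) := by
  have haff (i) : IsAffine ((pbD E t f).obj i) := by
    change IsAffine (pullback f (t.app i))
    have : IsAffine (((Functor.const I).obj Z).obj i) := ‹IsAffine Z›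
    infer_instance
  have haff' (i) : IsAffine (pullback f (t.app i)) := haff i
  have hsurj : Function.Surjective (pullback.snd f s).appTop := (IsClosedImmersion.isAffine_surjective_of_isAffine (pullback.snd f s)).2
  let Q (i : I) : Subring Γ(X, ⊤) := (pullback.snd f (t.app i)).appTop.hom.range.comap (pullback.fst f (t.app i)).appTop.hom
  have hmono (i j : I) (g : i ⟶ j) : Q j ≤ Q i := by
    rintro c ⟨v, hv⟩
    refine ⟨(E.map g).appTop v, ?_⟩
    have := congrArg (bcm f (t.app j) (t.app i) (E.map g) (pbD_w E t g)).appTop hv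
    refine Eq.trans ?_ (this.trans ?_)
    · exact ((app_comp' _ _ _).symm.trans (by rw [← bcm_snd f _ _ _ (pbD_w E t g)])).trans (app_comp' _ _ _)
    · refine (app_comp' _ _ _).symm.trans ?_
      rw [bcm_fst]
  have hQ (c : Γ(X, ⊤)) : ∃ i, c ∈ Q i := by
    obtain ⟨w, hw⟩ := hsurj ((pullback.fst f s).appTop c)
    obtain ⟨i, v, hv⟩ := exists_appTop_π_eq_of_isAffine_of_isLimit E _ hl w
    let d : Γ((pbD E t f).obj i, ⊤) := (pullback.fst f (t.app i)).appTop c - (pullback.snd f (t.app i)).appTop v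
    have hd : ((pbDc E t π f s h).app i).appTop d = 0 := by
      change (bcm f (t.app i) s (π.app i) (h i)).appTop ((pullback.fst f (t.app i)).appTop c - (pullback.snd f (t.app i)).appTop v) = 0
      rw [map_sub, sub_eq_zero]
      refine (app_comp' _ _ _).symm.trans (Eq.trans ?_ (app_comp' _ _ _))
      rw [bcm_fst, bcm_snd]
      refine Eq.trans ?_ (app_comp' _ _ _).symm
      rw [← hw, ← hv]
    obtain ⟨j, g, hg⟩ := exists_appTop_map_eq_zero_of_isAffine_of_isLimit (pbD E t f) _ (pbDc_isLimit E t π f s h hl).some i d hd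
    refine ⟨j, (E.map g).appTop v, ?_⟩
    change (bcm f (t.app i) (t.app j) (E.map g) (pbD_w E t g)).appTop ((pullback.fst f (t.app i)).appTop c - (pullback.snd f (t.app i)).appTop v) = 0 at hg
    rw [map_sub, sub_eq_zero] at hg
    have hg' := (app_comp' _ _ _).trans (hg.trans (app_comp' _ _ _).symm)
    rw [bcm_fst, bcm_snd] at hg'
    exact (app_comp' _ _ _).symm.trans hg'.symm
  have hft : f.appTop.hom.FiniteType := HasRingHomProperty.appTop @LocallyOfFiniteType f inferInstance
  have hfin (F : Finset Γ(X, ⊤)) : ∃ i, ∀ c ∈ F, c ∈ Q i := by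
    classical
    induction F using Finset.induction_on with
    | empty => exact ⟨IsCofiltered.nonempty.some, by simp⟩
    | insert c F hc ih =>
      obtain ⟨i, hi⟩ := ih
      obtain ⟨j, hj⟩ := hQ c
      refine ⟨IsCofiltered.min i j, fun x hx => ?_⟩
      rcases Finset.mem_insert.1 hx with rfl | hx
      · exact hmono _ _ (IsCofiltered.minToRight i j) hj
      · exact hmono _ _ (IsCofiltered.minToLeft i j) (hi _ hx)
  let := f.appTop.hom.toAlgebra
  have hft' : Algebra.FiniteType Γ(Z, ⊤) Γ(X, ⊤) := hft
  obtain ⟨F, hF⟩ := hft'.out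
  obtain ⟨i, hi⟩ := hfin F
  have hfz (z : Γ(Z, ⊤)) : f.appTop.hom z ∈ Q i := by
    refine ⟨(t.app i).appTop z, ?_⟩
    refine (app_comp' _ _ _).symm.trans (Eq.trans ?_ (app_comp' _ _ _))
    rw [pullback.condition]
  have htop (c : Γ(X, ⊤)) : c ∈ Q i := by
    have : c ∈ Algebra.adjoin Γ(Z, ⊤) (F : Set Γ(X, ⊤)) := by rw [hF]; trivial
    induction this using Algebra.adjoin_induction with
    | mem x hx => exact hi x hx
    | algebraMap r => exact hfz r
    | add x y _ _ hx hy => exact (Q i).add_mem hx hy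
    | mul x y _ _ hx hy => exact (Q i).mul_mem hx hy
  refine ⟨i, IsClosedImmersion.of_surjective_of_isAffine _ ?_⟩
  have hz : IsAffine (((Functor.const I).obj Z).obj i) := ‹IsAffine Z›
  exact pushout_surj (isPushout_appTop_of_isPullback (IsPullback.of_hasPullback f (t.app i))) htop

end ci
end PartS1


section PartS2
open AlgebraicGeometry CategoryTheory CategoryTheory.Limits
set_option linter.unusedSectionVars false
set_option linter.unusedVariables false

section BP
variable (P : MorphismProperty Scheme.{0}) [P.IsStableUnderBaseChange] {X Z A B : Scheme.{0}} (f : X ⟶ Z) 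

lemma bp2_aux (y : A ⟶ Z) (z : B ⟶ A) : P (pullback.snd (pullback.snd f y) z) ↔ P (pullback.snd f (z ≫ y)) := by
  have h1 := (IsPullback.of_hasPullback (pullback.snd f y) z).paste_horiz (IsPullback.of_hasPullback f y)
  have h2 := IsPullback.of_hasPullback f (z ≫ y)
  rw [← h1.isoIsPullback_hom_snd _ _ h2]
  have : P.RespectsIso := MorphismProperty.IsStableUnderBaseChange.respectsIso
  exact P.cancel_left_of_respectsIso _ _

lemma bp2 {y : A ⟶ Z} {z : B ⟶ A} (w : B ⟶ Z) (hw : z ≫ y = w) (h : P (pullback.snd (pullback.snd f y) z)) : P (pullback.snd f w) := by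
  subst hw
  exact (bp2_aux P f y z).1 h

lemma bp2' {y : A ⟶ Z} {z : B ⟶ A} (w : B ⟶ Z) (hw : z ≫ y = w) (h : P (pullback.snd f w)) : P (pullback.snd (pullback.snd f y) z) := by
  subst hw
  exact (bp2_aux P f y z).2 h

lemma bp1 {y : A ⟶ Z} (z : B ⟶ A) (w : B ⟶ Z) (hw : z ≫ y = w) (h : P (pullback.snd f y)) : P (pullback.snd f w) := 
  bp2 P f (z := z) w hw (MorphismProperty.pullback_snd _ _ h)

end BP

section saff
variable {S T Z X : Scheme.{0}}

lemma saff0 [IsAffine S] [IsAffine T] [IsAffine Z] [IsAffine X] (r : Z ⟶ S) (s : T ⟶ S) (f : X ⟶ Z) [LocallyOfFiniteType f] 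
    (h : IsClosedImmersion (pullback.snd f (pullback.fst r s))) : 
    ∃ (A : Scheme.{0}) (a : A ⟶ S) (b : T ⟶ A), IsAffine A ∧ LocallyOfFiniteType a ∧ b ≫ a = s ∧ 
      IsClosedImmersion (pullback.snd f (pullback.fst r a)) := by
  obtain ⟨I, i1, i2, D, t, π, ⟨hl⟩, h1, h2, h3⟩ := exists_approx s
  let tE : pbD D t r ⟶ (Functor.const I).obj Z := 
    { app := fun i => pullback.fst r (t.app i)
      naturality := fun i j g => (bcm_fst r (t.app j) (t.app i) (D.map g) (pbD_w D t g)).trans (Category.comp_id _).symm }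
  have haff (i) : IsAffine ((pbD D t r).obj i) := by
    change IsAffine (pullback r (t.app i))
    have : IsAffine (((Functor.const I).obj S).obj i) := ‹IsAffine S›
    infer_instance
  obtain ⟨i, hi⟩ := ci_lim (pbD D t r) tE (pbDc D t π r s h1) f (pullback.fst r s) 
    (fun i => bcm_fst r (t.app i) s (π.app i) (h1 i)) (pbDc_isLimit D t π r s h1 hl).some h
  exact ⟨D.obj i, t.app i, π.app i, h2 i, h3 i, h1 i, hi⟩

lemma saff1 [IsAffine S] [IsAffine T] [IsAffine Z] (r : Z ⟶ S) (s : T ⟶ S) (f : X ⟶ Z) [QuasiCompact f] [QuasiSeparated f]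
    (h : IsAffine (pullback f (pullback.fst r s))) : 
    ∃ (A : Scheme.{0}) (a : A ⟶ S) (b : T ⟶ A), IsAffine A ∧ LocallyOfFiniteType a ∧ b ≫ a = s ∧ 
      IsAffine (pullback f (pullback.fst r a)) := by
  obtain ⟨I, i1, i2, D, t, π, ⟨hl⟩, h1, h2, h3⟩ := exists_approx s
  let tE : pbD D t r ⟶ (Functor.const I).obj Z := 
    { app := fun i => pullback.fst r (t.app i)
      naturality := fun i j g => (bcm_fst r (t.app j) (t.app i) (D.map g) (pbD_w D t g)).trans (Category.comp_id _).symm }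
  have haff (i) : IsAffine ((pbD D t r).obj i) := by
    change IsAffine (pullback r (t.app i))
    have : IsAffine (((Functor.const I).obj S).obj i) := ‹IsAffine S›
    infer_instance
  have hlim := (pbDc_isLimit (pbD D t r) tE (pbDc D t π r s h1) f (pullback.fst r s) 
    (fun i => bcm_fst r (t.app i) s (π.app i) (h1 i)) (pbDc_isLimit D t π r s h1 hl).some).some
  have hc (i) : CompactSpace ((pbD (pbD D t r) tE f).obj i) := by
    change CompactSpace ↥(pullback f (tE.app i))
    have : QuasiCompact (pullback.snd f (tE.app i)) := inferInstance
    exact QuasiCompact.compactSpace_of_compactSpace (pullback.snd f (tE.app i))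
  have hs (i) : QuasiSeparatedSpace ((pbD (pbD D t r) tE f).obj i) := by
    change QuasiSeparatedSpace ↥(pullback f (tE.app i))
    have : QuasiSeparated (pullback.snd f (tE.app i)) := inferInstance
    exact quasiSeparatedSpace_of_quasiSeparated (pullback.snd f (tE.app i))
  obtain ⟨i, hi⟩ := Scheme.exists_isAffine_of_isLimit _ _ hlim
  exact ⟨D.obj i, t.app i, π.app i, h2 i, h3 i, h1 i, hi⟩

lemma saff [IsAffine S] [IsAffine T] [IsAffine Z] (r : Z ⟶ S) (s : T ⟶ S) (f : X ⟶ Z) [QuasiCompact f] [QuasiSeparated f]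
    [LocallyOfFiniteType f] 
    (h : IsClosedImmersion (pullback.snd f (pullback.fst r s))) : 
    ∃ (A : Scheme.{0}) (a : A ⟶ S) (b : T ⟶ A), IsAffine A ∧ LocallyOfFiniteType a ∧ b ≫ a = s ∧ 
      IsClosedImmersion (pullback.snd f (pullback.fst r a)) := by
  obtain ⟨A, a, b, hA, ha, hb, hX⟩ := saff1 r s f (isAffine_of_isAffineHom (pullback.snd f (pullback.fst r s)))
  let f' := pullback.snd f (pullback.fst r a)
  let r' := pullback.snd r a
  have hf' : LocallyOfFiniteType f' := inferInstance
  let n : pullback r' b ⟶ pullback r s := pullback.lift (pullback.fst r' b ≫ pullback.fst r a) (pullback.snd r' b) 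
    (by rw [← hb, Category.assoc, pullback.condition, pullback.condition_assoc])
  obtain ⟨A', a', b', hA', ha', hb', hci⟩ := saff0 r' b f' (bp2' @IsClosedImmersion f (pullback.fst r' b ≫ pullback.fst r a) rfl 
     (bp1 @IsClosedImmersion f (y := pullback.fst r s) n _ (pullback.lift_fst _ _ _) h))
  refine ⟨A', a' ≫ a, b', hA', inferInstance, by rw [reassoc_of% hb', hb], ?_⟩
  let m : pullback r (a' ≫ a) ⟶ pullback r' a' := pullback.lift (bcm r a (a' ≫ a) a' rfl) (pullback.snd _ _) (bcm_snd _ _ _ _ _)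
  refine bp1 @IsClosedImmersion f m _ ?_ (bp2 @IsClosedImmersion f _ rfl hci)
  rw [pullback.lift_fst_assoc, bcm_fst]

end saff
end PartS2


section PartS3
open AlgebraicGeometry CategoryTheory CategoryTheory.Limits
set_option linter.unusedSectionVars false
set_option linter.unusedVariables false

section spt
variable {S T Z X : Scheme.{0}}

lemma comp_pt {X Y Z : Scheme.{0}} (f : X ⟶ Y) (g : Y ⟶ Z) (h : X ⟶ Z) (e : f ≫ g = h) (x : X) : g (f x) = h x := by
  subst e; simp

lemma ci_of_range {X Z N : Scheme.{0}} (f : X ⟶ Z) [IsImmersion f] (n : N ⟶ Z) (h : ∀ x, n x ∈ f.coborderRange) : 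
    IsClosedImmersion (pullback.snd f n) := by
  have h1 : IsClosedImmersion (pullback.snd f f.coborderRange.ι) := by
    have sq : IsPullback (𝟙 X) f.liftCoborder f f.coborderRange.ι := by
      refine ⟨⟨by simp⟩, ⟨PullbackCone.IsLimit.mk _ (fun s => s.fst) (fun s => by simp) (fun s => ?_) (fun s m h1 h2 => by simpa using h1)⟩⟩
      rw [← cancel_mono f.coborderRange.ι, Category.assoc, Scheme.Hom.liftCoborder_ι, s.condition]
    rw [← sq.isoPullback_inv_snd]
    infer_instance
  let n' : N ⟶ f.coborderRange := IsOpenImmersion.lift f.coborderRange.ι n (by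
    rintro _ ⟨x, rfl⟩
    simpa using h x)
  exact bp1 @IsClosedImmersion f n' n (IsOpenImmersion.lift_fac _ _ _) h1

lemma spt [IsAffine S] [IsAffine T] (r : Z ⟶ S) (s : T ⟶ S) (f : X ⟶ Z) [QuasiCompact f] [QuasiSeparated f]
    [LocallyOfFiniteType f] 
    (h : IsImmersion (pullback.snd f (pullback.fst r s))) (y : ↥(pullback f (pullback.fst r s))) : 
    ∃ (A : Scheme.{0}) (a : A ⟶ S) (b : T ⟶ A) (hb : b ≫ a = s), IsAffine A ∧ LocallyOfFiniteType a ∧ 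
      ∃ U : (pullback r a).Opens, bcm r a s b hb (pullback.snd f (pullback.fst r s) y) ∈ U ∧ 
        IsImmersion (pullback.snd f (U.ι ≫ pullback.fst r a)) := by
  obtain ⟨I, i1, i2, D, t, π, ⟨hl⟩, h1, h2, h3⟩ := exists_approx s
  let fs := pullback.snd f (pullback.fst r s)
  have hbas := isBasis_preimage_isAffineOpen _ _ (pbDc_isLimit D t π r s h1 hl).some
  obtain ⟨_, ⟨i, V, hV, rfl⟩, hyV, hVW⟩ := TopologicalSpace.Opens.isBasis_iff_nbhd.1 hbas 
    (show fs y ∈ fs.coborderRange from subset_coborder ⟨y, rfl⟩)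
  change (pullback r (t.app i)).Opens at V
  have hVaff : IsAffine V := hV
  change bcm r (t.app i) s (π.app i) (h1 i) (fs y) ∈ V at hyV
  replace hVW : ∀ z, bcm r (t.app i) s (π.app i) (h1 i) z ∈ V → z ∈ fs.coborderRange := fun z hz => hVW hz
  have hti : LocallyOfFiniteType (t.app i) := h3 i
  have hDi := h2 i
  let fV := pullback.snd f (V.ι ≫ pullback.fst r (t.app i))
  let rV : V.toScheme ⟶ D.obj i := V.ι ≫ pullback.snd r (t.app i)
  let n : pullback rV (π.app i) ⟶ pullback r s := pullback.lift (pullback.fst rV (π.app i) ≫ V.ι ≫ pullback.fst r (t.app i)) 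
    (pullback.snd _ _) (by
      have := pullback.condition (f := rV) (g := π.app i)
      simp only [rV] at this
      rw [← h1 i, ← reassoc_of% this, Category.assoc, Category.assoc, pullback.condition])
  have hn : n ≫ bcm r (t.app i) s (π.app i) (h1 i) = pullback.fst rV (π.app i) ≫ V.ι := by
    apply pullback.hom_ext
    · rw [Category.assoc, bcm_fst, pullback.lift_fst, Category.assoc]
    · rw [Category.assoc, bcm_snd, pullback.lift_snd_assoc, ← pullback.condition, Category.assoc]
  have hci : IsClosedImmersion (pullback.snd fV (pullback.fst rV (π.app i))) := by
    refine bp2' @IsClosedImmersion f _ rfl ?_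
    refine bp2 @IsClosedImmersion f (y := pullback.fst r s) (z := n) _ (pullback.lift_fst _ _ _) ?_
    refine ci_of_range fs n fun x => hVW _ ?_
    rw [comp_pt _ _ _ hn]
    exact (pullback.fst rV (π.app i) x).2
  have : QuasiCompact fV := inferInstance
  have : QuasiSeparated fV := inferInstance
  have : LocallyOfFiniteType fV := inferInstance
  have hTi : IsAffine (((Functor.const I).obj T).obj i) := ‹IsAffine T›
  obtain ⟨A, a, b, hA, ha, hb, hci⟩ := saff rV (π.app i) fV hci
  have hb' : b ≫ a ≫ t.app i = s := by rw [reassoc_of% hb, h1]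
  let U : (pullback r (a ≫ t.app i)).Opens := (bcm r (t.app i) (a ≫ t.app i) a rfl) ⁻¹ᵁ V
  refine ⟨A, a ≫ t.app i, b, hb', hA, inferInstance, U, ?_, ?_⟩
  · have : bcm r (a ≫ t.app i) s b hb' ≫ bcm r (t.app i) (a ≫ t.app i) a rfl = bcm r (t.app i) s (π.app i) (h1 i) := by
      apply pullback.hom_ext
      · simp only [Category.assoc, bcm_fst]
      · rw [Category.assoc, bcm_snd, reassoc_of% bcm_snd, hb, bcm_snd]
    change bcm r (t.app i) (a ≫ t.app i) a rfl (bcm r (a ≫ t.app i) s b hb' (fs y)) ∈ V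
    rw [comp_pt _ _ _ this]
    exact hyV
  · have hUV : U.ι ≫ bcm r (t.app i) (a ≫ t.app i) a rfl = (bcm r (t.app i) (a ≫ t.app i) a rfl ∣_ V) ≫ V.ι := 
      (morphismRestrict_ι _ _).symm
    let m : U.toScheme ⟶ pullback rV a := pullback.lift ((bcm r (t.app i) (a ≫ t.app i) a rfl) ∣_ V) (U.ι ≫ pullback.snd _ _) (by
      simp only [rV]
      rw [← reassoc_of% hUV, bcm_snd, Category.assoc])
    have hcc : IsClosedImmersion (pullback.snd f (U.ι ≫ pullback.fst r (a ≫ t.app i))) := by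
      refine bp1 @IsClosedImmersion f m _ ?_ (bp2 @IsClosedImmersion f _ rfl hci)
      rw [pullback.lift_fst_assoc, ← reassoc_of% hUV, bcm_fst]
    infer_instance

lemma sunion (r : Z ⟶ S) (f : X ⟶ Z) {A : Scheme.{0}} (a : A ⟶ S) (U1 U2 : (pullback r a).Opens) 
    (h1 : IsImmersion (pullback.snd f (U1.ι ≫ pullback.fst r a))) (h2 : IsImmersion (pullback.snd f (U2.ι ≫ pullback.fst r a))) : 
    IsImmersion (pullback.snd f ((U1 ⊔ U2).ι ≫ pullback.fst r a)) := by
  refine immersion_of_local _ fun x => ?_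
  have aux (U : (pullback r a).Opens) (hU : U ≤ U1 ⊔ U2) (hi : IsImmersion (pullback.snd f (U.ι ≫ pullback.fst r a))) 
      (hx : (pullback.snd f ((U1 ⊔ U2).ι ≫ pullback.fst r a) x).1 ∈ U) : 
      ∃ (W : Scheme.{0}) (j : W ⟶ (U1 ⊔ U2).toScheme), IsOpenImmersion j ∧ 
        pullback.snd f ((U1 ⊔ U2).ι ≫ pullback.fst r a) x ∈ Set.range j ∧ 
        IsImmersion (pullback.snd (pullback.snd f ((U1 ⊔ U2).ι ≫ pullback.fst r a)) j) := by
    refine ⟨U, (pullback r a).homOfLE hU, inferInstance, ?_, ?_⟩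
    · refine ⟨⟨_, hx⟩, ?_⟩
      apply (U1 ⊔ U2).ι.injective
      exact comp_pt _ _ _ (Scheme.homOfLE_ι _ hU) _
    · exact bp2' @IsImmersion f _ (Scheme.homOfLE_ι_assoc _ _ _) hi
  rcases (pullback.snd f ((U1 ⊔ U2).ι ≫ pullback.fst r a) x).2 with hx | hx
  · exact aux U1 le_sup_left h1 hx
  · exact aux U2 le_sup_right h2 hx

lemma spre (r : Z ⟶ S) (f : X ⟶ Z) {A A' : Scheme.{0}} (a : A ⟶ S) (a' : A' ⟶ S) (φ : A' ⟶ A) (hφ : φ ≫ a = a') (U : (pullback r a).Opens) 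
    (h1 : IsImmersion (pullback.snd f (U.ι ≫ pullback.fst r a))) : 
    IsImmersion (pullback.snd f ((bcm r a a' φ hφ ⁻¹ᵁ U).ι ≫ pullback.fst r a')) := by
  refine bp1 @IsImmersion f (bcm r a a' φ hφ ∣_ U) _ ?_ h1
  rw [← Category.assoc, morphismRestrict_ι, Category.assoc, bcm_fst]

lemma bcm_comp {A A' A'' : Scheme.{0}} (r : Z ⟶ S) (a : A ⟶ S) (a' : A' ⟶ S) (a'' : A'' ⟶ S) (φ : A' ⟶ A) (hφ : φ ≫ a = a') 
    (ψ : A'' ⟶ A') (hψ : ψ ≫ a' = a'') (χ : A'' ⟶ A) (hχ : χ ≫ a = a'') (h : ψ ≫ φ = χ) : 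
    bcm r a' a'' ψ hψ ≫ bcm r a a' φ hφ = bcm r a a'' χ hχ := by
  apply pullback.hom_ext
  · simp only [Category.assoc, bcm_fst]
  · rw [Category.assoc, bcm_snd, reassoc_of% bcm_snd, h, bcm_snd]

lemma sopen [IsAffine S] [IsAffine T] (r : Z ⟶ S) (s : T ⟶ S) (f : X ⟶ Z) [QuasiCompact r] [QuasiCompact f] [QuasiSeparated f]
    [LocallyOfFiniteType f] 
    (h : IsImmersion (pullback.snd f (pullback.fst r s))) : 
    ∃ (A : Scheme.{0}) (a : A ⟶ S) (b : T ⟶ A) (hb : b ≫ a = s), IsAffine A ∧ LocallyOfFiniteType a ∧ 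
      ∃ U : (pullback r a).Opens, (∀ y, bcm r a s b hb (pullback.snd f (pullback.fst r s) y) ∈ U) ∧ 
        IsImmersion (pullback.snd f (U.ι ≫ pullback.fst r a)) := by
  have hc : CompactSpace ↥(pullback f (pullback.fst r s)) := 
    QuasiCompact.compactSpace_of_compactSpace (pullback.snd f (pullback.fst r s) ≫ pullback.snd r s)
  suffices H : ∃ (A : Scheme.{0}) (a : A ⟶ S) (b : T ⟶ A) (hb : b ≫ a = s), IsAffine A ∧ LocallyOfFiniteType a ∧ 
      ∃ U : (pullback r a).Opens, (∀ y ∈ (Set.univ : Set ↥(pullback f (pullback.fst r s))), bcm r a s b hb (pullback.snd f (pullback.fst r s) y) ∈ U) ∧ 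
        IsImmersion (pullback.snd f (U.ι ≫ pullback.fst r a)) by
    simpa using H
  refine IsCompact.induction_on (s := Set.univ) (p := fun O : Set ↥(pullback f (pullback.fst r s)) => 
    ∃ (A : Scheme.{0}) (a : A ⟶ S) (b : T ⟶ A) (hb : b ≫ a = s), IsAffine A ∧ LocallyOfFiniteType a ∧ 
      ∃ U : (pullback r a).Opens, (∀ y ∈ O, bcm r a s b hb (pullback.snd f (pullback.fst r s) y) ∈ U) ∧ 
        IsImmersion (pullback.snd f (U.ι ≫ pullback.fst r a))) isCompact_univ ?_ ?_ ?_ ?_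
  · refine ⟨S, 𝟙 S, s, by simp, inferInstance, inferInstance, ⊥, by simp, immersion_of_local _ fun x => ?_⟩
    exact (pullback.snd f ((⊥ : (pullback r (𝟙 S)).Opens).ι ≫ pullback.fst r (𝟙 S)) x).2.elim
  · rintro O O' hO ⟨A, a, b, hb, h1, h2, U, h3, h4⟩
    exact ⟨A, a, b, hb, h1, h2, U, fun y hy => h3 y (hO hy), h4⟩
  · rintro O O' ⟨A, a, b, hb, h1, h2, U, h3, h4⟩ ⟨A', a', b', hb', h1', h2', U', h3', h4'⟩
    have hp1 : pullback.fst a a' ≫ a = pullback.fst a a' ≫ a := rfl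
    have hp2 : pullback.snd a a' ≫ a' = pullback.fst a a' ≫ a := pullback.condition.symm
    let B : T ⟶ pullback a a' := pullback.lift b b' (by rw [hb, hb'])
    have hB : B ≫ pullback.fst a a' ≫ a = s := by rw [pullback.lift_fst_assoc, hb]
    refine ⟨pullback a a', pullback.fst a a' ≫ a, B, hB, inferInstance, inferInstance, 
       (bcm r _ _ _ hp1 ⁻¹ᵁ U) ⊔ (bcm r _ _ _ hp2 ⁻¹ᵁ U'), ?_, sunion r f _ _ _ (spre r f _ _ _ hp1 U h4) (spre r f _ _ _ hp2 U' h4')⟩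
    rintro y (hy | hy)
    · left
      change bcm r _ _ _ hp1 (bcm r _ _ _ hB _) ∈ U
      rw [comp_pt _ _ _ (bcm_comp r _ _ _ _ hp1 _ hB _ hb (pullback.lift_fst _ _ _))]
      exact h3 y hy
    · right
      change bcm r _ _ _ hp2 (bcm r _ _ _ hB _) ∈ U'
      rw [comp_pt _ _ _ (bcm_comp r _ _ _ _ hp2 _ hB _ hb' (pullback.lift_snd _ _ _))]
      exact h3' y hy
  · intro y _
    obtain ⟨A, a, b, hb, h1, h2, U, h3, h4⟩ := spt r s f h y
    refine ⟨(pullback.snd f (pullback.fst r s) ≫ bcm r a s b hb) ⁻¹ᵁ U, ?_, A, a, b, hb, h1, h2, U, ?_, h4⟩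
    · rw [nhdsWithin_univ]
      refine ((pullback.snd f (pullback.fst r s) ≫ bcm r a s b hb) ⁻¹ᵁ U).isOpen.mem_nhds ?_
      change (pullback.snd f (pullback.fst r s) ≫ bcm r a s b hb) y ∈ U
      rwa [← comp_pt _ _ _ rfl]
    · intro z hz
      rw [comp_pt _ _ _ rfl]
      exact hz

lemma spread [IsAffine S] [IsAffine T] (r : Z ⟶ S) (s : T ⟶ S) (f : X ⟶ Z) [QuasiCompact r] [QuasiCompact f] [QuasiSeparated f]
    [LocallyOfFiniteType f] 
    (h : IsImmersion (pullback.snd f (pullback.fst r s))) : 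
    ∃ (A : Scheme.{0}) (a : A ⟶ S) (b : T ⟶ A) (hb : b ≫ a = s), IsAffine A ∧ LocallyOfFiniteType a ∧ 
        IsImmersion (pullback.snd f (pullback.fst r a)) := by
  obtain ⟨A, a, b, hb, hA, ha, U, h3, h4⟩ := sopen r s f h
  obtain ⟨I, i1, i2, D, t, π, ⟨hl⟩, g1, g2, g3⟩ := exists_approx b
  let fa := pullback.snd f (pullback.fst r a)
  let r' : pullback f (pullback.fst r a) ⟶ A := fa ≫ pullback.snd r a
  have hq : QuasiCompact fa := inferInstance
  have hr' : QuasiCompact r' := inferInstance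
  have hc (i) : CompactSpace ((pbD D t r').obj i) := by
    change CompactSpace ↥(pullback r' (t.app i))
    have := g2 i
    have : QuasiCompact (pullback.snd r' (t.app i)) := inferInstance
    exact QuasiCompact.compactSpace_of_compactSpace (pullback.snd r' (t.app i))
  let i0 : I := IsCofiltered.nonempty.some
  let O : ((pbD D t r').obj i0).Opens := (pullback.fst r' (t.app i0) ≫ fa) ⁻¹ᵁ U
  obtain ⟨j, g, hg⟩ := exists_map_eq_top _ _ (pbDc_isLimit D t π r' b g1 hl).some O (by
    rw [eq_top_iff]
    intro z _
    change (pullback.fst r' (t.app i0) ≫ fa) (bcm r' (t.app i0) b (π.app i0) (g1 i0) z) ∈ U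
    have hw := pullback.condition (f := r') (g := b)
    let y : pullback r' b ⟶ pullback f (pullback.fst r s) := pullback.lift (pullback.fst r' b ≫ pullback.fst _ _) 
      (pullback.lift (pullback.fst r' b ≫ fa ≫ pullback.fst r a) (pullback.snd r' b) (by 
        simp only [r', Category.assoc] at hw
        rw [← hb, Category.assoc, Category.assoc, pullback.condition, reassoc_of% hw])) (by
          rw [Category.assoc, pullback.condition, pullback.lift_fst])
    have e : y ≫ pullback.snd f (pullback.fst r s) ≫ bcm r a s b hb = 
        bcm r' (t.app i0) b (π.app i0) (g1 i0) ≫ pullback.fst r' (t.app i0) ≫ fa := by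
      rw [pullback.lift_snd_assoc, reassoc_of% bcm_fst]
      apply pullback.hom_ext
      · rw [Category.assoc, bcm_fst, pullback.lift_fst, Category.assoc]
      · rw [Category.assoc, bcm_snd, pullback.lift_snd_assoc, ← hw]
        rfl
    rw [comp_pt _ _ _ rfl, ← e, ← comp_pt _ _ _ rfl, ← comp_pt _ _ _ rfl]
    exact h3 _)
  have hO : ∀ z, (pullback.fst r' (t.app j) ≫ fa) z ∈ U := by
    intro z
    have : z ∈ (pbD D t r').map g ⁻¹ᵁ O := by rw [hg]; trivial
    change (pullback.fst r' (t.app i0) ≫ fa) (bcm r' (t.app i0) (t.app j) (D.map g) (pbD_w D t g) z) ∈ U at this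
    rw [comp_pt _ _ _ rfl, reassoc_of% bcm_fst] at this
    exact this
  have := g3 j
  have hb' : π.app j ≫ t.app j ≫ a = s := by rw [reassoc_of% (g1 j), hb]
  refine ⟨D.obj j, t.app j ≫ a, π.app j, hb', g2 j, inferInstance, ?_⟩
  have hφ : t.app j ≫ a = t.app j ≫ a := rfl
  refine immersion_of_local _ fun x => ⟨_, (bcm r a (t.app j ≫ a) (t.app j) hφ ⁻¹ᵁ U).ι, inferInstance, ?_, ?_⟩
  · rw [Scheme.Opens.range_ι]
    change bcm r a (t.app j ≫ a) (t.app j) hφ _ ∈ U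
    let m' : pullback f (pullback.fst r (t.app j ≫ a)) ⟶ pullback f (pullback.fst r a) := 
      pullback.lift (pullback.fst _ _) (pullback.snd _ _ ≫ bcm r a (t.app j ≫ a) (t.app j) hφ) (by
        rw [Category.assoc, bcm_fst, pullback.condition])
    have hm' : m' ≫ fa = pullback.snd _ _ ≫ bcm r a (t.app j ≫ a) (t.app j) hφ := pullback.lift_snd _ _ _
    let m : pullback f (pullback.fst r (t.app j ≫ a)) ⟶ pullback r' (t.app j) := 
      pullback.lift m' (pullback.snd _ _ ≫ pullback.snd _ _) (by
        simp only [r']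
        rw [reassoc_of% hm', bcm_snd, Category.assoc])
    have hm : m ≫ pullback.fst r' (t.app j) ≫ fa = pullback.snd _ _ ≫ bcm r a (t.app j ≫ a) (t.app j) hφ := by
      rw [pullback.lift_fst_assoc, hm']
    rw [comp_pt _ _ _ rfl, ← hm, ← comp_pt _ _ _ rfl]
    exact hO _
  · exact bp2' @IsImmersion f _ rfl (spre r f _ _ _ hφ U h4)

end spt
end PartS3


section PartM
open AlgebraicGeometry CategoryTheory CategoryTheory.Limits
set_option linter.unusedSectionVars false
set_option linter.unusedVariables false

section M
variable (k : Type) [Field k]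

lemma deg0_surj (n : ℕ) : Function.Surjective (algebraMap k (MvPolynomial.homogeneousSubmodule (Fin (n + 1)) k 0)) := by
  rintro ⟨x, hx⟩
  have hx' := hx
  rw [MvPolynomial.homogeneousSubmodule_zero, Submodule.mem_one] at hx'
  obtain ⟨c, rfl⟩ := hx'
  exact ⟨c, Subtype.ext rfl⟩

lemma deg0_ft (n : ℕ) : Algebra.FiniteType (MvPolynomial.homogeneousSubmodule (Fin (n + 1)) k 0) (MvPolynomial (Fin (n + 1)) k) := by
  have : Algebra.FiniteType k (MvPolynomial (Fin (n + 1)) k) := inferInstance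
  have h := RingHom.finiteType_algebraMap.2 this
  refine RingHom.finiteType_algebraMap.1 (RingHom.FiniteType.of_comp_finiteType (f := algebraMap k (MvPolynomial.homogeneousSubmodule (Fin (n + 1)) k 0)) ?_)
  exact h

instance structMap_proper (n : ℕ) : IsProper (ProjSpace.structMap k n) := by
  have := deg0_ft k n
  have h2 : IsClosedImmersion (Spec.map (CommRingCat.ofHom
    (algebraMap k (MvPolynomial.homogeneousSubmodule (Fin (n + 1)) k 0)))) := 
    IsClosedImmersion.spec_of_surjective _ (deg0_surj k n)
  have h3 : IsProper (Proj.toSpecZero (MvPolynomial.homogeneousSubmodule (Fin (n + 1)) k)) := inferInstance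
  have aux : ∀ {X Y : Scheme.{0}} (f : X ⟶ Y) [IsClosedImmersion f], IsProper f := fun f _ => inferInstance
  have h5 := @aux _ _ _ h2
  have h4 := MorphismProperty.comp_mem (@IsProper) _ _ h3 h5
  exact h4

instance structMap_lfp (n : ℕ) : LocallyOfFinitePresentation (ProjSpace.structMap k n) := inferInstance

variable {Y : Scheme.{0}} (q : Y ⟶ Spec (CommRingCat.of k)) (K : Type) [Field K] [Algebra k K] 

instance st_surj : Surjective (st k K) := by
  refine ⟨fun x => ⟨(⊥ : PrimeSpectrum K), @Subsingleton.elim (PrimeSpectrum k) _ _ _⟩⟩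

instance st_flat : Flat (st k K) := by
  refine (HasRingHomProperty.Spec_iff (P := @Flat)).2 ?_
  change (algebraMap k K).Flat
  rw [RingHom.flat_algebraMap_iff]
  infer_instance

lemma lft_of_IQP {n : ℕ} (h : IQP k q K n) : LocallyOfFiniteType q := by
  obtain ⟨f, hf, hi⟩ := h
  have h1 : LocallyOfFiniteType (pullback.snd q (st k K)) := by
    rw [← pullback.lift_snd f _ hf]
    infer_instance
  have hQ : (@Surjective ⊓ @Flat ⊓ @QuasiCompact : MorphismProperty Scheme.{0}) (st k K) := ⟨⟨inferInstance, inferInstance⟩, inferInstance⟩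
  exact MorphismProperty.of_isPullback_of_descendsAlong (P := @LocallyOfFiniteType) (IsPullback.of_hasPullback q (st k K)).flip hQ h1

lemma noeth_of_IQP {n : ℕ} (h : IQP k q K n) : TopologicalSpace.NoetherianSpace Y := by
  obtain ⟨f, hf, hi⟩ := h
  have h1 : IsNoetherian (pullback (ProjSpace.structMap k n) (st k K)) := 
    { toIsLocallyNoetherian := LocallyOfFiniteType.isLocallyNoetherian (pullback.snd (ProjSpace.structMap k n) (st k K))
      toCompactSpace := QuasiCompact.compactSpace_of_compactSpace (pullback.snd (ProjSpace.structMap k n) (st k K)) }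
  have h2 : TopologicalSpace.NoetherianSpace ↥(pullback q (st k K)) := 
    (pullback.lift f _ hf : _ ⟶ pullback (ProjSpace.structMap k n) (st k K)).isEmbedding.isInducing.noetherianSpace
  exact TopologicalSpace.noetherianSpace_of_surjective (pullback.fst q (st k K)) (pullback.fst q (st k K)).continuous 
    (pullback.fst q (st k K)).surjective

end M
end PartM


section PartF1
open AlgebraicGeometry CategoryTheory CategoryTheory.Limits
set_option linter.unusedSectionVars false
set_option linter.unusedVariables false

section F1
variable {S T Y P : Scheme.{0}} [IsAffine S] [IsAffine T] (s : T ⟶ S) (q : Y ⟶ S) (r : P ⟶ S)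

lemma hom_spread [QuasiCompact q] [QuasiSeparated q] [LocallyOfFinitePresentation r]
    (f : pullback q s ⟶ P) (hf : f ≫ r = pullback.snd q s ≫ s) : 
    ∃ (A : Scheme.{0}) (a : A ⟶ S) (b : T ⟶ A) (hb : b ≫ a = s), IsAffine A ∧ LocallyOfFiniteType a ∧ 
      ∃ (g : pullback q a ⟶ P), g ≫ r = pullback.snd q a ≫ a ∧ bcm q a s b hb ≫ g = f := by
  obtain ⟨I, _, _, D, t, π, ⟨hl⟩, h, hA, ht⟩ := exists_approx s
  obtain ⟨hl'⟩ := pbDc_isLimit D t π q s h hl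
  have hS (i : I) : IsAffine (((Functor.const I).obj S).obj i) := ‹IsAffine S›
  let t' : pbD D t q ⟶ (Functor.const I).obj S := 
    { app i := pullback.snd q (t.app i) ≫ t.app i
      naturality i j φ := by
        change bcm q (t.app j) (t.app i) (D.map φ) (pbD_w D t φ) ≫ pullback.snd q (t.app j) ≫ t.app j = (pullback.snd q (t.app i) ≫ t.app i) ≫ 𝟙 S
        refine Eq.trans ?_ (Category.comp_id _).symm
        rw [reassoc_of% bcm_snd, pbD_w D t φ] }
  have aux1 (X' : Scheme.{0}) [IsAffine X'] (u : X' ⟶ S) : 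
      CompactSpace ↥(pullback q u) ∧ QuasiSeparatedSpace ↥(pullback q u) := 
    ⟨QuasiCompact.compactSpace_of_compactSpace (pullback.snd q u),
      quasiSeparatedSpace_of_quasiSeparated (pullback.snd q u)⟩
  have h1 (i : I) : CompactSpace ↥((pbD D t q).obj i) := (aux1 _ (t.app i)).1
  have h2 (i : I) : QuasiSeparatedSpace ↥((pbD D t q).obj i) := (aux1 _ (t.app i)).2
  obtain ⟨i, g, hg, hg'⟩ := Scheme.exists_π_app_comp_eq_of_locallyOfFinitePresentation (pbD D t q) t' r 
    (Cone.mk _ (pbDc D t π q s h)) hl' f (by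
      ext i : 2
      change bcm q (t.app i) s (π.app i) (h i) ≫ pullback.snd q (t.app i) ≫ t.app i = f ≫ r
      rw [reassoc_of% bcm_snd, h, hf])
  exact ⟨D.obj i, t.app i, π.app i, h i, hA i, ht i, g, hg', hg⟩

lemma imm_bc {T' : Scheme.{0}} {A₁ : Scheme.{0}} (t : A₁ ⟶ S) (s' : T' ⟶ S) (e : T' ⟶ A₁) (he : e ≫ t = s') 
    (g : pullback q t ⟶ P) (hg : g ≫ r = pullback.snd q t ≫ t) (f' : pullback q s' ⟶ P) 
    (hf' : f' ≫ r = pullback.snd q s' ≫ s') (hgf : bcm q t s' e he ≫ g = f') : 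
    IsPullback (bcm q t s' e he) (pullback.lift f' _ hf') (pullback.lift g _ hg) (bcm r t s' e he) := 
  bcm_sq q r t s' e he _ (pullback.lift_snd _ _ _) _ (pullback.lift_snd _ _ _) (by
      apply pullback.hom_ext
      · simp only [Category.assoc, pullback.lift_fst, bcm_fst, hgf]
      · simp only [Category.assoc, pullback.lift_snd, pullback.lift_snd_assoc, bcm_snd])

lemma imm_spread [QuasiCompact q] [QuasiSeparated q] [LocallyOfFiniteType q] [LocallyOfFinitePresentation r] 
    [QuasiCompact r] [QuasiSeparated r]
    (f : pullback q s ⟶ P) (hf : f ≫ r = pullback.snd q s ≫ s) 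
    (hi : IsImmersion (pullback.lift f _ hf : _ ⟶ pullback r s)) : 
    ∃ (A : Scheme.{0}) (a : A ⟶ S) (b : T ⟶ A) (hb : b ≫ a = s), IsAffine A ∧ LocallyOfFiniteType a ∧ 
      ∀ (T' : Scheme.{0}) (s' : T' ⟶ S) (e : T' ⟶ A), e ≫ a = s' → 
        ∃ (f' : pullback q s' ⟶ P) (hf' : f' ≫ r = pullback.snd q s' ≫ s'), 
          IsImmersion (pullback.lift f' _ hf' : _ ⟶ pullback r s') := by
  obtain ⟨A₁, t, π, hπ, hA₁, ht, g, hg, hgf⟩ := hom_spread s q r f hf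
  let F : pullback q t ⟶ pullback r t := pullback.lift g _ hg
  have hF : F ≫ pullback.snd r t = pullback.snd q t := pullback.lift_snd _ _ _
  have f1 : QuasiCompact F := by
    have : QuasiCompact (F ≫ pullback.snd r t) := by rw [hF]; infer_instance
    exact QuasiCompact.of_comp F (pullback.snd r t)
  have f2 : QuasiSeparated F := by
    have : QuasiSeparated (F ≫ pullback.snd r t) := by rw [hF]; infer_instance
    exact QuasiSeparated.of_comp F (pullback.snd r t)
  have f3 : LocallyOfFiniteType F := by
    have : LocallyOfFiniteType (F ≫ pullback.snd r t) := by rw [hF]; infer_instance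
    exact locallyOfFiniteType_of_comp F (pullback.snd r t)
  have sq := imm_bc q r t s π hπ g hg f hf hgf
  have hm : IsImmersion (pullback.snd F (bcm r t s π hπ)) := by
    have := sq.isoPullback_inv_snd
    rw [← this]
    infer_instance
  let m : pullback (pullback.snd r t) π ⟶ pullback r s := 
    (bcm_isPullback r t s π hπ).isoPullback.inv
  have hm' : IsImmersion (pullback.snd F (pullback.fst (pullback.snd r t) π)) := 
    bp1 @IsImmersion F m _ (IsPullback.isoPullback_inv_fst _) hm
  obtain ⟨A, a, b, hb, hA, ha, hi'⟩ := spread (pullback.snd r t) π F hm'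
  refine ⟨A, a ≫ t, b, by rw [reassoc_of% hb, hπ], hA, inferInstance, ?_⟩
  intro T' s' e he
  have he' : (e ≫ a) ≫ t = s' := by rw [Category.assoc, he]
  have hf' : (bcm q t s' (e ≫ a) he' ≫ g) ≫ r = pullback.snd q s' ≫ s' := by
    rw [Category.assoc, hg, reassoc_of% bcm_snd, he']
  refine ⟨bcm q t s' (e ≫ a) he' ≫ g, hf', ?_⟩
  have sq' := imm_bc q r t s' (e ≫ a) he' g hg _ hf' rfl
  let z : pullback r s' ⟶ pullback (pullback.snd r t) a := 
    pullback.lift (bcm r t s' (e ≫ a) he') (pullback.snd _ _ ≫ e) (by rw [bcm_snd, Category.assoc])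
  have : IsImmersion (pullback.snd F (bcm r t s' (e ≫ a) he')) := 
    bp1 @IsImmersion F z _ (pullback.lift_fst _ _ _) hi'
  have h3 := sq'.isoPullback_hom_snd
  rw [← h3]
  infer_instance
end F1
end PartF1


section PartF2
open AlgebraicGeometry CategoryTheory CategoryTheory.Limits
set_option linter.unusedSectionVars false
set_option linter.unusedVariables false

section F2

lemma exists_galois (k : Type) [Field k] [CharZero k] (B : Type) [CommRing B] [Algebra k B] [Nontrivial B]
    [Algebra.FiniteType k B] : 
    ∃ (L : Type) (_ : Field L) (_ : Algebra k L) (_ : FiniteDimensional k L) (_ : IsGalois k L), Nonempty (B →ₐ[k] L) := by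
  obtain ⟨m, hm⟩ := Ideal.exists_maximal B
  letI : Field (B ⧸ m) := Ideal.Quotient.field m
  have h1 : Algebra.FiniteType k (B ⧸ m) := inferInstance
  have h2 : Module.Finite k (B ⧸ m) := finite_of_finite_type_of_isJacobsonRing k (B ⧸ m)
  let φ : (B ⧸ m) →ₐ[k] AlgebraicClosure k := IsAlgClosed.lift
  let L := IntermediateField.normalClosure k (B ⧸ m) (AlgebraicClosure k)
  have hle : φ.fieldRange ≤ L := AlgHom.fieldRange_le_normalClosure φ
  refine ⟨L, inferInstance, inferInstance, inferInstance, ?_, ⟨?_⟩⟩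
  · exact IsGalois.mk
  · exact ((IntermediateField.inclusion hle).comp φ.rangeRestrict).comp (Ideal.Quotient.mkₐ k m)

lemma exists_galois_pt (k : Type) [Field k] [CharZero k] (A : Scheme.{0}) [IsAffine A] (a : A ⟶ Spec (.of k)) 
    [LocallyOfFiniteType a] [Nonempty A] : 
    ∃ (L : Type) (_ : Field L) (_ : Algebra k L) (_ : FiniteDimensional k L) (_ : IsGalois k L)
      (e : Spec (.of L) ⟶ A), e ≫ a = st k L := by
  obtain ⟨i, hi⟩ := exists_alg k Γ(A, ⊤) (A.isoSpec.inv ≫ a)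
  have h1 : LocallyOfFiniteType (st k Γ(A, ⊤)) := by rw [← hi]; infer_instance
  have h2 : Algebra.FiniteType k Γ(A, ⊤) := 
    RingHom.finiteType_algebraMap.1 ((HasRingHomProperty.Spec_iff (P := @LocallyOfFiniteType)).1 h1)
  have h3 : Nontrivial Γ(A, ⊤) := by
    obtain ⟨x⟩ := ‹Nonempty A›
    have : Nonempty (⊤ : A.Opens) := ⟨⟨x, trivial⟩⟩
    infer_instance
  obtain ⟨L, i1, i2, i3, i4, ⟨φ⟩⟩ := exists_galois k Γ(A, ⊤)
  refine ⟨L, i1, i2, i3, i4, sp k φ ≫ A.isoSpec.inv, ?_⟩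
  rw [Category.assoc, hi]
  exact sp_st k φ

theorem final
    (k K : Type) [Field k] [CharZero k] [Field K] [Algebra k K]
    (Y : Scheme) (q : Y ⟶ Spec (CommRingCat.of k))
    (h : QuasiProjectiveOver K
      (pullback.snd q (Spec.map (CommRingCat.ofHom (algebraMap k K))))) :
    QuasiProjectiveOver k q := by
  obtain ⟨n, hn⟩ := IQP_of_QP k q K h
  have h1 := lft_of_IQP k q K hn
  have h2 := noeth_of_IQP k q K hn
  have h3 : QuasiCompact q := inferInstance
  have h4 : QuasiSeparated q := by
    have : QuasiSeparatedSpace Y := inferInstance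
    infer_instance
  obtain ⟨f, hf, hi⟩ := hn
  obtain ⟨A, a, b, hb, hA, ha, H⟩ := imm_spread (st k K) q (ProjSpace.structMap k n) f hf hi
  have hne : Nonempty A := ⟨b (⊥ : PrimeSpectrum K)⟩
  obtain ⟨L, i1, i2, i3, i4, e, he⟩ := exists_galois_pt k A a
  obtain ⟨f', hf', hi'⟩ := H _ _ e he
  obtain ⟨N, g, hg, hg', hgi⟩ := exists_G k L q f' hf' hi'
  refine ⟨N, g, ?_, hg⟩
  have sq : IsPullback (pullback.fst q (st k L)) 
      (pullback.lift (pullback.fst q (st k L) ≫ g) (pullback.snd q (st k L)) hg' : _ ⟶ ZL k L N) g 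
      (pullback.fst (ProjSpace.structMap k N) (st k L)) := by
    refine IsPullback.of_bot ?_ (pullback.lift_fst _ _ _).symm (IsPullback.of_hasPullback (ProjSpace.structMap k N) (st k L))
    rw [hg, pullback.lift_snd]
    exact IsPullback.of_hasPullback _ _
  have : LocallyOfFinitePresentation (st k L) := by
    refine (HasRingHomProperty.Spec_iff (P := @LocallyOfFinitePresentation)).2 ?_
    change (algebraMap k L).FinitePresentation
    rw [RingHom.finitePresentation_algebraMap]
    exact Algebra.FinitePresentation.of_finiteType.1 inferInstance
  exact imm_descent _ _ _ _ sq
end F2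
end PartF2

variable (k K : Type) [Field k] [Field K] [Algebra k K]

/-- Descent of quasi-projectivity along field extensions in characteristic zero:
if the base change of a `k`-scheme `Y` to a field extension `K` of `k` is quasi-projective
over `K`, then `Y` is quasi-projective over `k`. -/
theorem quasiProjective_descends_along_field_extension
    (k K : Type) [Field k] [CharZero k] [Field K] [Algebra k K]
    (Y : Scheme) (q : Y ⟶ Spec (CommRingCat.of k))
    (h : QuasiProjectiveOver K
      (pullback.snd q (Spec.map (CommRingCat.ofHom (algebraMap k K))))) :
    QuasiProjectiveOver k q := by
  exact final k K Y q h

end Paper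
end
end

section
/- Complement of a dense affine open has pure codimension one: Let X be a separated irreducible noetherian scheme, and let U be an open dense subset of X such that U (with its open subscheme structure) is affine. Then the closed complement X ∖ U has pure codimension one in X, that is, every irreducible component of X ∖ U has codimension one in X. -/
lemma isArtinian_of_torsion {R M : Type*} [CommRing R] [AddCommGroup M] [Module R M] (x : R)
    (hx : ∀ m : M, ∃ n : ℕ, x ^ n • m = 0) (h : IsArtinian R (Submodule.torsionBy R M x)) :
    IsArtinian R M := by
  let S := Submodule.torsionBy R M x
  let F : Submodule R M → ℕ → Submodule R S := fun L n =>
    (L.map (LinearMap.lsmul R M (x ^ n))).comap S.subtype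
  have hF : ∀ L n (s : S), s ∈ F L n ↔ ∃ l ∈ L, x ^ n • l = s := by
    intro L n s
    simp [F, Submodule.mem_map]
  have hmono : ∀ L L' n n', L' ≤ L → n ≤ n' → F L' n' ≤ F L n := by
    intro L L' n n' hL hn s hs
    rw [hF] at hs ⊢
    obtain ⟨l, hl, e⟩ := hs
    refine ⟨x ^ (n' - n) • l, L.smul_mem _ (hL hl), ?_⟩
    rw [smul_smul, ← pow_add, Nat.add_sub_cancel' hn, e]
  have key : ∀ L L' : Submodule R M, L' ≤ L → (∀ n, F L n ≤ F L' n) → L ≤ L' := by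
    intro L L' hL hle
    have : ∀ n (l : M), l ∈ L → x ^ n • l = 0 → l ∈ L' := by
      intro n
      induction n with
      | zero => intro l _ h0; simp at h0; simp [h0]
      | succ n ih =>
        intro l hl h0
        have hs : x ^ n • l ∈ S := by
          rw [Submodule.mem_torsionBy_iff, smul_smul, ← pow_succ', h0]
        have : (⟨x ^ n • l, hs⟩ : S) ∈ F L n := (hF _ _ _).2 ⟨l, hl, rfl⟩
        obtain ⟨l', hl', e⟩ := (hF _ _ _).1 (hle n this)
        simp only at e
        have h1 := ih (l - l') (L.sub_mem hl (hL hl')) (by rw [smul_sub, e, sub_self])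
        simpa using L'.add_mem h1 hl'
    intro l hl
    obtain ⟨n, hn⟩ := hx l
    exact this n l hl hn
  rw [← monotone_stabilizes_iff_artinian]
  intro f
  have stab : ∀ g : ℕ → Submodule R S, Antitone g → ∃ k, ∀ j, k ≤ j → g k = g j := by
    intro g hg
    exact IsArtinian.monotone_stabilizes (⟨fun n => OrderDual.toDual (g n), fun _ _ h => hg h⟩ : ℕ →o (Submodule R S)ᵒᵈ)
  have hf : ∀ i j, i ≤ j → (OrderDual.ofDual (f j)) ≤ OrderDual.ofDual (f i) := fun i j h => f.monotone h
  obtain ⟨k, hk⟩ := stab (fun i => F (OrderDual.ofDual (f i)) i)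
    (fun i j h => hmono _ _ _ _ (hf _ _ h) h)
  have h2 : ∀ n, ∃ i, ∀ j, i ≤ j → F (OrderDual.ofDual (f i)) n = F (OrderDual.ofDual (f j)) n := fun n =>
    stab (fun i => F (OrderDual.ofDual (f i)) n) (fun i j h => hmono _ _ _ _ (hf _ _ h) le_rfl)
  choose i hi using h2
  let N := (Finset.range k).sup i ⊔ k
  refine ⟨N, fun j hj => le_antisymm (f.monotone hj) ?_⟩
  change OrderDual.ofDual (f N) ≤ OrderDual.ofDual (f j)
  refine key (OrderDual.ofDual (f N)) (OrderDual.ofDual (f j)) (hf _ _ hj) fun n => ?_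
  rcases lt_or_ge n k with hn | hn
  · have h1 : i n ≤ N := le_trans (Finset.le_sup (f := i) (Finset.mem_range.2 hn)) le_sup_left
    rw [← hi n N h1, ← hi n j (h1.trans hj)]
  · have hkN : k ≤ N := le_sup_right
    calc F (OrderDual.ofDual (f N)) n ≤ F (OrderDual.ofDual (f k)) k := hmono _ _ _ _ (hf _ _ hkN) hn
      _ = F (OrderDual.ofDual (f (max n j))) (max n j) := hk _ (by omega)
      _ ≤ _ := hmono _ _ _ _ (hf _ _ (by omega)) (by omega)

lemma isArtinian_of_fg_of_pow {R M : Type*} [CommRing R] [IsLocalRing R] [IsNoetherianRing R]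
    [AddCommGroup M] [Module R M] [Module.Finite R M]
    (h : ∀ m : M, ∃ n : ℕ, ∀ a ∈ IsLocalRing.maximalIdeal R ^ n, a • m = 0) : IsArtinian R M := by
  classical
  choose n hn using h
  obtain ⟨s, hs⟩ := Module.Finite.fg_top (R := R) (M := M)
  set I := IsLocalRing.maximalIdeal R ^ (s.sup n + 1) with hI
  have hI0 : I ≠ ⊤ := fun h => (IsLocalRing.maximalIdeal.isMaximal R).ne_top
    (top_le_iff.1 (h ▸ Ideal.pow_le_self (by omega)))
  have : Nontrivial (R ⧸ I) := Ideal.Quotient.nontrivial_iff.2 hI0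
  have : IsLocalRing (R ⧸ I) := IsLocalRing.of_surjective' _ Ideal.Quotient.mk_surjective
  have hart : IsArtinianRing (R ⧸ I) := by
    rw [isArtinianRing_iff_isNilpotent_maximalIdeal]
    refine ⟨s.sup n + 1, ?_⟩
    have : IsLocalRing.maximalIdeal (R ⧸ I) = (IsLocalRing.maximalIdeal R).map (Ideal.Quotient.mk I) := by
      refine (IsLocalRing.eq_maximalIdeal ?_).symm
      refine (Ideal.map_eq_top_or_isMaximal_of_surjective _ Ideal.Quotient.mk_surjective inferInstance).resolve_left ?_
      intro h
      have := congrArg (Ideal.comap (Ideal.Quotient.mk I)) h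
      rw [Ideal.comap_map_of_surjective _ Ideal.Quotient.mk_surjective, ← RingHom.ker_eq_comap_bot, Ideal.mk_ker, Ideal.comap_top, sup_eq_left.2 (Ideal.pow_le_self (by omega))] at this
      exact (IsLocalRing.maximalIdeal.isMaximal R).ne_top this
    rw [this, ← Ideal.map_pow, ← hI, Ideal.map_quotient_self]; rfl
  have htor : Module.IsTorsionBySet R M I := by
    have : (⊤ : Submodule R M) ≤ Submodule.torsionBySet R M I := by
      rw [← hs, Submodule.span_le]
      intro m hm
      rw [SetLike.mem_coe, Submodule.mem_torsionBySet_iff]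
      rintro ⟨a, ha⟩
      exact hn m a (Ideal.pow_le_pow_right (Nat.le_succ_of_le (Finset.le_sup (f := n) hm)) ha)
    intro m a
    exact (Submodule.mem_torsionBySet_iff _ _).1 (this (Submodule.mem_top (x := m))) a
  let _ := htor.module
  have : IsScalarTower R (R ⧸ I) M := htor.isScalarTower
  have : Module.Finite (R ⧸ I) M := Module.Finite.of_restrictScalars_finite R _ _
  have : IsArtinian (R ⧸ I) M := inferInstance
  exact isArtinian_of_surjective_algebraMap (S := R) (R := R ⧸ I) (M := M) Ideal.Quotient.mk_surjective


lemma supIrred_secondary {R M : Type*} [CommRing R] [AddCommGroup M] [Module R M] [IsArtinian R M]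
    {D : Submodule R M} (hD : SupIrred D) :
    D.annihilator.radical.IsPrime ∧
      ∀ r ∉ D.annihilator.radical, ∀ d ∈ D, ∃ d' ∈ D, r • d' = d := by
  have h2 : ∀ r ∉ D.annihilator.radical, ∀ d ∈ D, ∃ d' ∈ D, r • d' = d := by
    intro r hr
    let g : ℕ → Submodule R M := fun n => D.map (LinearMap.lsmul R M (r ^ n))
    have hg : Antitone g := by
      intro i j hij m hm
      obtain ⟨d, hd, rfl⟩ := hm
      refine ⟨r ^ (j - i) • d, D.smul_mem _ hd, ?_⟩
      rw [LinearMap.lsmul_apply, LinearMap.lsmul_apply, smul_smul, ← pow_add,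
        Nat.add_sub_cancel' hij]
    obtain ⟨k, hk⟩ := IsArtinian.monotone_stabilizes
      (⟨fun n => OrderDual.toDual (g n), fun _ _ h => hg h⟩ : ℕ →o (Submodule R M)ᵒᵈ)
    have hk' : ∀ j, k ≤ j → g k = g j := hk
    have heq : g (k + 1) = g ((k + 1) + (k + 1)) := (hk' _ (by omega)).symm.trans (hk' _ (by omega))
    let K : Submodule R M := D ⊓ LinearMap.ker (LinearMap.lsmul R M (r ^ (k + 1)))
    have hgD : g (k + 1) ≤ D := by
      rintro _ ⟨d, hd, rfl⟩
      exact D.smul_mem _ hd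
    have hsup : g (k + 1) ⊔ K = D := by
      refine le_antisymm (sup_le hgD inf_le_left) ?_
      intro d hd
      have h1 : r ^ (k + 1) • d ∈ g (k + 1) := ⟨d, hd, rfl⟩
      rw [heq] at h1
      obtain ⟨d', hd', e⟩ := h1
      simp only [LinearMap.lsmul_apply] at e
      have : d = r ^ (k + 1) • d' + (d - r ^ (k + 1) • d') := by abel
      rw [this]
      refine Submodule.add_mem_sup ⟨d', hd', rfl⟩ ⟨D.sub_mem hd (D.smul_mem _ hd'), ?_⟩
      simp [smul_sub, smul_smul, ← pow_add, e]
    rcases hD.2 hsup with h | h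
    · intro d hd
      rw [← h] at hd
      obtain ⟨d', hd', e⟩ := hd
      refine ⟨r ^ k • d', D.smul_mem _ hd', ?_⟩
      rw [smul_smul, ← pow_succ']; exact e
    · exfalso
      apply hr
      refine ⟨k + 1, ?_⟩
      rw [Submodule.mem_annihilator]
      intro d hd
      rw [← h] at hd
      exact hd.2
  refine ⟨?_, h2⟩
  have hne : D ≠ ⊥ := hD.ne_bot
  constructor
  · intro h
    rw [Ideal.radical_eq_top, Submodule.annihilator_eq_top_iff] at h
    exact hne h
  · intro a b hab
    by_contra! hcon
    obtain ⟨ha, hb⟩ := hcon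
    have hs : ∀ n : ℕ, ∀ d ∈ D, ∃ d' ∈ D, (a * b) ^ n • d' = d := by
      intro n
      induction n with
      | zero => intro d hd; exact ⟨d, hd, by simp⟩
      | succ n ih =>
        intro d hd
        obtain ⟨d1, h1, rfl⟩ := h2 a ha d hd
        obtain ⟨d2, h2, rfl⟩ := h2 b hb d1 h1
        obtain ⟨d3, h3, rfl⟩ := ih d2 h2
        exact ⟨d3, h3, by simp only [smul_smul]; congr 1; ring⟩
    obtain ⟨n, hn⟩ := hab
    apply hne
    rw [eq_bot_iff]
    intro d hd
    obtain ⟨d', h', rfl⟩ := hs n d hd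
    exact (Submodule.mem_annihilator.1 hn) _ h'

lemma exists_smul_surjective {R M : Type*} [CommRing R] [IsLocalRing R] [IsNoetherianRing R]
    [AddCommGroup M] [Module R M] [IsArtinian R M]
    (h : IsLocalRing.maximalIdeal R • (⊤ : Submodule R M) = ⊤) :
    ∃ r ∈ IsLocalRing.maximalIdeal R, ∀ m : M, ∃ m', r • m' = m := by
  classical
  set 𝔪 := IsLocalRing.maximalIdeal R with h𝔪
  obtain ⟨S, hS, hirr⟩ := exists_supIrred_decomposition (⊤ : Submodule R M)
  let S' := S.filter fun D => ¬ 𝔪 ≤ D.annihilator.radical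
  have hav : ¬ ((𝔪 : Set R) ⊆ ⋃ D ∈ (S' : Set (Submodule R M)), (D.annihilator.radical : Set R)) := by
    rw [Ideal.subset_union_prime_finite S'.finite_toSet ⊥ ⊥
      (fun D hD _ _ => (supIrred_secondary (hirr (Finset.mem_filter.1 hD).1)).1)]
    rintro ⟨D, hD, hle⟩
    exact (Finset.mem_filter.1 hD).2 hle
  obtain ⟨r, hr, hr'⟩ := Set.not_subset.1 hav
  refine ⟨r, hr, ?_⟩
  have hr'' : ∀ D ∈ S, ¬ 𝔪 ≤ D.annihilator.radical → r ∉ D.annihilator.radical := by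
    intro D hD hle hmem
    apply hr'
    simp only [Set.mem_iUnion]
    exact ⟨D, Finset.mem_filter.2 ⟨hD, hle⟩, hmem⟩
  have hpow : ∀ n : ℕ, 𝔪 ^ n • (⊤ : Submodule R M) = ⊤ := by
    intro n
    induction n with
    | zero => simp
    | succ n ih => rw [pow_succ, mul_smul, h, ih]
  have hN : ∀ D : Submodule R M, ∃ n : ℕ, 𝔪 ≤ D.annihilator.radical → 𝔪 ^ n ≤ D.annihilator := by
    intro D
    by_cases hD : 𝔪 ≤ D.annihilator.radical
    · obtain ⟨n, hn⟩ := Ideal.exists_pow_le_of_le_radical_of_fg hD (IsNoetherian.noetherian 𝔪)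
      exact ⟨n, fun _ => hn⟩
    · exact ⟨0, fun h => absurd h hD⟩
  choose n hn using hN
  let N := S.sup n
  let W : Submodule R M := LinearMap.range (LinearMap.lsmul R M r)
  let Q : Submodule R M :=
    { carrier := {m | ∀ a ∈ 𝔪 ^ N, a • m ∈ W}
      add_mem' := fun {x y} hx hy a ha => by rw [smul_add]; exact W.add_mem (hx a ha) (hy a ha)
      zero_mem' := fun a _ => by simp
      smul_mem' := fun c x hx a ha => by rw [smul_comm]; exact W.smul_mem c (hx a ha) }
  have hQ : (⊤ : Submodule R M) ≤ Q := by
    rw [← hS]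
    refine Finset.sup_le fun D hD d hd a ha => ?_
    by_cases hle : 𝔪 ≤ D.annihilator.radical
    · have : a ∈ D.annihilator :=
        hn D hle (Ideal.pow_le_pow_right (Finset.le_sup (f := n) hD) ha)
      rw [(Submodule.mem_annihilator.1 this) d hd]
      exact W.zero_mem
    · obtain ⟨d', -, rfl⟩ := (supIrred_secondary (hirr hD)).2 r (hr'' D hD hle) d hd
      exact W.smul_mem _ ⟨d', rfl⟩
  have hW : (⊤ : Submodule R M) ≤ W := by
    rw [← hpow N, Submodule.smul_le]
    intro a ha m hm
    exact hQ hm a ha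
  intro m
  exact hW (Submodule.mem_top (x := m))

lemma no_extension {A B : Type*} [CommRing A] [IsLocalRing A] [IsNoetherianRing A]
    [CommRing B] [IsDomain B] [Algebra A B] (hinj : Function.Injective (algebraMap A B))
    (hm : (IsLocalRing.maximalIdeal A).map (algebraMap A B) = ⊤)
    (ht : ∀ b : B, ∀ f ∈ IsLocalRing.maximalIdeal A,
      ∃ (n : ℕ) (a : A), algebraMap A B f ^ n * b = algebraMap A B a)
    (hne : ∀ r ∈ IsLocalRing.maximalIdeal A, ¬ IsUnit (algebraMap A B r)) : False := by
  set 𝔪 := IsLocalRing.maximalIdeal A with h𝔪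
  have h0 : ∃ x ∈ 𝔪, x ≠ 0 := by
    by_contra! h
    have : 𝔪 = ⊥ := by rw [eq_bot_iff]; intro x hx; exact h x hx
    rw [this, Ideal.map_bot] at hm
    exact bot_ne_top hm
  obtain ⟨x, hx, hx0⟩ := h0
  have hxB : algebraMap A B x ≠ 0 := fun h => hx0 (hinj (by rw [h, map_zero]))
  let N : Submodule A B := LinearMap.range (Algebra.linearMap A B)
  have htor : ∀ h : B ⧸ N, ∃ n : ℕ, ∀ a ∈ 𝔪 ^ n, a • h = 0 := by
    intro h
    obtain ⟨b, rfl⟩ := N.mkQ_surjective h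
    have : 𝔪 ≤ (Submodule.span A {N.mkQ b}).annihilator.radical := by
      intro f hf
      obtain ⟨n, a, e⟩ := ht b f hf
      refine ⟨n, ?_⟩
      rw [Submodule.mem_annihilator_span_singleton, ← map_smul, Submodule.mkQ_apply,
        Submodule.Quotient.mk_eq_zero]
      refine ⟨a, ?_⟩
      rw [Algebra.linearMap_apply, ← e, Algebra.smul_def, map_pow]
    obtain ⟨n, hn⟩ := Ideal.exists_pow_le_of_le_radical_of_fg this (IsNoetherian.noetherian 𝔪)
    exact ⟨n, fun a ha => (Submodule.mem_annihilator_span_singleton _ _).1 (hn ha)⟩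
  let L : Submodule A B := N.comap (LinearMap.lsmul A B x)
  have hL : IsNoetherian A L := by
    let φ : L →ₗ[A] N := (LinearMap.lsmul A B x).restrict (fun b hb => hb)
    refine isNoetherian_of_injective φ ?_
    intro b b' h
    have h' : x • (b : B) = x • (b' : B) := congrArg Subtype.val h
    rw [Algebra.smul_def, Algebra.smul_def] at h'
    exact Subtype.ext (mul_left_cancel₀ hxB h')
  have hfg : (Submodule.torsionBy A (B ⧸ N) x).FG := by
    have : Submodule.torsionBy A (B ⧸ N) x = L.map N.mkQ := by
      ext h
      obtain ⟨b, rfl⟩ := N.mkQ_surjective h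
      rw [Submodule.mem_torsionBy_iff, ← map_smul, Submodule.mkQ_apply,
        Submodule.Quotient.mk_eq_zero]
      constructor
      · intro hb
        exact ⟨b, hb, rfl⟩
      · rintro ⟨b', hb', e⟩
        have e' : b' - b ∈ N := (Submodule.Quotient.eq N).1 e
        have : x • b = x • b' - x • (b' - b) := by rw [smul_sub]; abel
        rw [this]
        exact N.sub_mem hb' (N.smul_mem _ e')
    rw [this]
    exact Submodule.FG.map _ (Module.Finite.iff_fg.1 inferInstance)
  have : Module.Finite A (Submodule.torsionBy A (B ⧸ N) x) := Module.Finite.iff_fg.2 hfg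
  have hart1 : IsArtinian A (Submodule.torsionBy A (B ⧸ N) x) := by
    apply isArtinian_of_fg_of_pow
    rintro ⟨h, hh⟩
    obtain ⟨n, hn⟩ := htor h
    exact ⟨n, fun a ha => Subtype.ext (hn a ha)⟩
  have hart : IsArtinian A (B ⧸ N) := by
    refine isArtinian_of_torsion x (fun h => ?_) hart1
    obtain ⟨n, hn⟩ := htor h
    exact ⟨n, hn _ (Ideal.pow_mem_pow hx n)⟩
  have hmH : 𝔪 • (⊤ : Submodule A (B ⧸ N)) = ⊤ := by
    have h1 : 𝔪 • (⊤ : Submodule A B) = ⊤ := by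
      rw [Ideal.smul_top_eq_map, hm]; rfl
    have := congrArg (Submodule.map N.mkQ) h1
    rwa [Submodule.map_smul'', Submodule.map_top, Submodule.range_mkQ] at this
  obtain ⟨r, hr, hsurj⟩ := exists_smul_surjective hmH
  have hJ : Ideal.span {algebraMap A B r} ≠ ⊤ := by
    rw [Ne, Ideal.span_singleton_eq_top]; exact hne r hr
  obtain ⟨P, hP, hJP⟩ := Ideal.exists_le_maximal _ hJ
  have hrP : algebraMap A B r ∈ P := hJP (Ideal.mem_span_singleton_self _)
  let ψ : A →+* B ⧸ P := (Ideal.Quotient.mk P).comp (algebraMap A B)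
  have hψ : Function.Surjective ψ := by
    intro c
    obtain ⟨b, rfl⟩ := Ideal.Quotient.mk_surjective c
    obtain ⟨h', e⟩ := hsurj (N.mkQ b)
    obtain ⟨b', rfl⟩ := N.mkQ_surjective h'
    rw [← map_smul] at e
    obtain ⟨a, ha⟩ := (Submodule.Quotient.eq N).1 e
    refine ⟨-a, ?_⟩
    change Ideal.Quotient.mk P (algebraMap A B (-a)) = _
    rw [Ideal.Quotient.eq]
    rw [Algebra.linearMap_apply, Algebra.smul_def] at ha
    rw [map_neg, ha]
    have : -(algebraMap A B r * b' - b) - b = -(b' * algebraMap A B r) := by ring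
    rw [this]
    exact P.neg_mem (P.mul_mem_left _ hrP)
  have : (⊥ : Ideal (B ⧸ P)).IsMaximal := by
    let _ := Ideal.Quotient.field P
    exact Ideal.bot_isMaximal
  have hc : (Ideal.comap ψ ⊥).IsMaximal := Ideal.comap_isMaximal_of_surjective ψ hψ
  have hc' := IsLocalRing.eq_maximalIdeal hc
  apply hP.ne_top
  rw [eq_top_iff, ← hm, Ideal.map_le_iff_le_comap]
  intro a ha
  rw [h𝔪, ← hc'] at ha
  have ha' : Ideal.Quotient.mk P (algebraMap A B a) = 0 := ha
  exact (Ideal.Quotient.eq_zero_iff_mem (I := P)).1 ha'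

open AlgebraicGeometry CategoryTheory

lemma spec_part {A : CommRingCat} [IsLocalRing A] [IsNoetherianRing A] [IsDomain A]
    (V : (Spec A).Opens) (hV : IsAffineOpen V)
    (hVm : ∀ p : Spec A, p ∈ V ↔ p ≠ IsLocalRing.closedPoint A)
    (q : Ideal A) [hqp : q.IsPrime] (hq : ⊥ < q) (hqm : q < IsLocalRing.maximalIdeal A) : False := by
  let φ : A →+* Γ(Spec A, V) :=
    ((Scheme.ΓSpecIso A).inv ≫ (Spec A).presheaf.map (homOfLE (le_top : V ≤ ⊤)).op).hom
  have hφ : ∀ f : A, (Spec A).basicOpen (φ f) = V ⊓ PrimeSpectrum.basicOpen f := by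
    intro f
    have : φ f = (Spec A).presheaf.map (homOfLE (le_top : V ≤ ⊤)).op ((Scheme.ΓSpecIso A).inv f) := rfl
    rw [this, Scheme.basicOpen_res, basicOpen_eq_of_affine]
  have hle : ∀ f ∈ IsLocalRing.maximalIdeal A, PrimeSpectrum.basicOpen f ≤ V := by
    intro f hf p hp
    refine (hVm p).2 ?_
    rintro rfl
    exact hp hf
  have hqV : (⟨q, hqp⟩ : Spec A) ∈ V := by
    refine (hVm _).2 ?_
    intro h
    exact hqm.ne (congrArg PrimeSpectrum.asIdeal h)
  have hVne : Nonempty V := ⟨⟨_, hqV⟩⟩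
  have hinj : Function.Injective φ := by
    have h1 := map_injective_of_isIntegral (Spec A) (homOfLE (le_top : V ≤ ⊤))
    have h2 : Function.Injective (Scheme.ΓSpecIso A).inv :=
      (ConcreteCategory.bijective_of_isIso (Scheme.ΓSpecIso A).inv).1
    exact h1.comp h2
  let _ : Algebra A Γ(Spec A, V) := φ.toAlgebra
  have : IsDomain Γ(Spec A, V) := inferInstance
  refine no_extension (A := A) (B := Γ(Spec A, V)) hinj ?_ ?_ ?_
  · change Ideal.span (φ '' _) = ⊤
    rw [← hV.self_le_iSup_basicOpen_iff]
    intro p hp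
    have h1 := (hVm p).1 hp
    have : ¬ IsLocalRing.maximalIdeal A ≤ p.asIdeal := by
      intro h
      apply h1
      apply PrimeSpectrum.ext
      exact ((IsLocalRing.maximalIdeal.isMaximal A).eq_of_le p.2.ne_top h).symm
    obtain ⟨f, hf, hfp⟩ := SetLike.not_le_iff_exists.1 this
    rw [TopologicalSpace.Opens.mem_iSup]
    refine ⟨⟨φ f, f, hf, rfl⟩, ?_⟩
    rw [hφ]
    exact ⟨hp, hfp⟩
  · intro b f hf
    change ∃ (n : ℕ) (a : A), φ f ^ n * b = φ a
    by_cases hf0 : f = 0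
    · exact ⟨1, 0, by simp [hf0]⟩
    let g : Γ(Spec A, ⊤) := (Scheme.ΓSpecIso A).inv f
    have hg : (Spec A).basicOpen g = PrimeSpectrum.basicOpen f := basicOpen_eq_of_affine f
    have hgV : (Spec A).basicOpen g ≤ V := hg ▸ hle f hf
    have hloc : IsLocalization.Away g Γ(Spec A, (Spec A).basicOpen g) :=
      (isAffineOpen_top (Spec A)).isLocalization_basicOpen g
    have hne : Nonempty ((Spec A).basicOpen g) := by
      rw [hg]
      exact ⟨⟨(⟨⊥, Ideal.isPrime_bot⟩ : PrimeSpectrum A), hf0⟩⟩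
    obtain ⟨n, a', e⟩ := IsLocalization.Away.surj g ((Spec A).presheaf.map (homOfLE hgV).op b)
    refine ⟨n, (Scheme.ΓSpecIso A).hom a', ?_⟩
    apply map_injective_of_isIntegral (Spec A) (homOfLE hgV)
    have hres : ∀ c : Γ(Spec A, ⊤), (Spec A).presheaf.map (homOfLE hgV).op
        ((Spec A).presheaf.map (homOfLE (le_top : V ≤ ⊤)).op c) =
        algebraMap Γ(Spec A, ⊤) Γ(Spec A, (Spec A).basicOpen g) c := by
      intro c
      rw [← CommRingCat.comp_apply, ← Functor.map_comp]
      rfl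
    have hφf : φ f = (Spec A).presheaf.map (homOfLE (le_top : V ≤ ⊤)).op g := rfl
    have hφa : φ ((Scheme.ΓSpecIso A).hom a') = (Spec A).presheaf.map (homOfLE (le_top : V ≤ ⊤)).op a' := by
      change (Spec A).presheaf.map (homOfLE (le_top : V ≤ ⊤)).op ((Scheme.ΓSpecIso A).inv ((Scheme.ΓSpecIso A).hom a')) = _
      rw [Iso.hom_inv_id_apply]
    rw [hφa, hφf, map_mul, map_pow, hres, hres, mul_comm]
    exact e
  · intro r hr hu
    change IsUnit (φ r) at hu
    have h1 := (Spec A).basicOpen_of_isUnit hu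
    rw [hφ] at h1
    have hrm : Ideal.span {r} ≤ IsLocalRing.maximalIdeal A := by
      rwa [Ideal.span_singleton_le_iff_mem]
    obtain ⟨p, hp, hpm⟩ := Ideal.exists_minimalPrimes_le hrm
    have hpp : p.IsPrime := hp.1.1
    have hht := Ideal.height_le_one_of_isPrincipal_of_mem_minimalPrimes _ p hp
    have hpne : p ≠ IsLocalRing.maximalIdeal A := by
      rintro rfl
      have h2 := (Ideal.height_le_iff (n := 1)).1 hht q hqp hqm
      have h3 : q.height = 0 := by simpa using h2
      exact hq.ne' (Ideal.height_eq_zero_iff_eq_bot.1 h3)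
    have hpV : (⟨p, hpp⟩ : Spec A) ∈ V := by
      refine (hVm _).2 ?_
      intro h
      exact hpne (congrArg PrimeSpectrum.asIdeal h)
    rw [← h1] at hpV
    exact hpV.2 (hp.1.2 (Ideal.mem_span_singleton_self r))

lemma local_part {R : CommRingCat} [IsLocalRing R] [IsNoetherianRing R]
    (V : (Spec R).Opens) (hV : IsAffineOpen V)
    (hVm : ∀ p : Spec R, p ∈ V ↔ p ≠ IsLocalRing.closedPoint R)
    (p q : Ideal R) [hpp : p.IsPrime] [hqp : q.IsPrime] (hpq : p < q)
    (hqm : q < IsLocalRing.maximalIdeal R) : False := by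
  let A : CommRingCat := CommRingCat.of (R ⧸ p)
  have : IsLocalRing (R ⧸ p) := IsLocalRing.of_surjective' _ Ideal.Quotient.mk_surjective
  have : IsLocalRing A := this
  have : IsNoetherianRing A := inferInstanceAs (IsNoetherianRing (R ⧸ p))
  have : IsDomain A := inferInstanceAs (IsDomain (R ⧸ p))
  let π : R →+* A := Ideal.Quotient.mk p
  have hπ : Function.Surjective π := Ideal.Quotient.mk_surjective
  have hker : RingHom.ker π = p := Ideal.mk_ker
  let f : Spec A ⟶ Spec R := Spec.map (CommRingCat.ofHom π)
  have hf : ∀ x : Spec A, (f x).asIdeal = x.asIdeal.comap π := fun x => rfl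
  have hcm : (IsLocalRing.maximalIdeal A).comap π = IsLocalRing.maximalIdeal R :=
    IsLocalRing.eq_maximalIdeal (Ideal.comap_isMaximal_of_surjective π hπ)
  have hqq : (q.map π).IsPrime := Ideal.map_isPrime_of_surjective hπ (hker.le.trans hpq.le)
  have hcomap : (q.map π).comap π = q := by
    rw [Ideal.comap_map_of_surjective π hπ, ← RingHom.ker_eq_comap_bot, hker, sup_eq_left.2 hpq.le]
  refine spec_part (A := A) (f ⁻¹ᵁ V) (hV.preimage f) ?_ (q.map π) ?_ ?_
  · intro x
    change f x ∈ V ↔ _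
    rw [hVm]
    refine not_congr ⟨fun h => ?_, fun h => ?_⟩
    · apply PrimeSpectrum.ext
      apply Ideal.comap_injective_of_surjective π hπ
      rw [← hf, h]
      exact hcm.symm
    · apply PrimeSpectrum.ext
      rw [hf, h]
      exact hcm
  · rw [bot_lt_iff_ne_bot]
    intro h
    rw [h, ← RingHom.ker_eq_comap_bot, hker] at hcomap
    exact hpq.ne hcomap
  · refine lt_of_le_of_ne (IsLocalRing.le_maximalIdeal hqq.ne_top) ?_
    intro h
    rw [h, hcm] at hcomap
    exact hqm.ne hcomap.symm

/-- Complement of a dense affine open has pure codimension one: if `U` is a dense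
affine open subset of a separated irreducible noetherian scheme `X`, then every irreducible
component `T` of `X ∖ U` has codimension one in `X`, i.e. the Krull dimension of the local
ring of `X` at the generic point of `T` equals `1`. -/
theorem complement_of_dense_affine_open_has_pure_codimension_one
    (X : Scheme) [X.IsSeparated] [IrreducibleSpace X] [IsNoetherian X]
    (U : X.Opens) (hUaff : IsAffineOpen U) (hUdense : Dense (U : Set X))
    -- `T` is an irreducible component of the closed complement `X ∖ U`
    (T : Set X) (hT : T ⊆ ((U : Set X))ᶜ) (hTirr : IsIrreducible T)
    (hTmax : ∀ T' : Set X, T' ⊆ ((U : Set X))ᶜ → IsIrreducible T' → T ⊆ T' → T = T') :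
    -- `T` has a generic point at which the local ring of `X` has Krull dimension one
    ∃ t : X, IsGenericPoint t T ∧ ringKrullDim (X.presheaf.stalk t) = 1 := by
  have hUc : IsClosed ((U : Set X))ᶜ := U.isOpen.isClosed_compl
  have hTc : closure T = T :=
    (hTmax _ (closure_minimal hT hUc) hTirr.closure subset_closure).symm
  obtain ⟨t, ht⟩ : ∃ t : X, IsGenericPoint t T :=
    QuasiSober.sober hTirr (hTc ▸ isClosed_closure)
  refine ⟨t, ht, ?_⟩
  have htT : t ∈ T := ht.mem
  have htU : t ∉ U := hT htT
  let f := X.fromSpecStalk t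
  have hfinj : Function.Injective f := f.isEmbedding.injective
  have hfc : f (IsLocalRing.closedPoint (X.presheaf.stalk t)) = t := Scheme.fromSpecStalk_closedPoint
  have : IsAffineHom f := by
    have : IsSeparated (Limits.terminal.from X) := inferInstance
    exact IsAffineHom.of_comp f (Limits.terminal.from X)
  have hgen : ∀ y : X, y ⤳ t → y ∉ U → y = t := by
    intro y hy hyU
    have h1 : T ⊆ closure {y} := by
      rw [← ht.def]
      exact closure_minimal (by simpa using hy.mem_closure) isClosed_closure
    have h2 : closure {y} ⊆ ((U : Set X))ᶜ := closure_minimal (by simpa using hyU) hUc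
    have h3 := hTmax _ h2 isIrreducible_singleton.closure h1
    have h4 : IsGenericPoint y T := h3.symm
    exact h4.eq ht
  have hVm : ∀ p : Spec (X.presheaf.stalk t), p ∈ f ⁻¹ᵁ U ↔
      p ≠ IsLocalRing.closedPoint (X.presheaf.stalk t) := by
    intro p
    change f p ∈ U ↔ _
    constructor
    · rintro h rfl
      rw [hfc] at h
      exact htU h
    · intro h
      by_contra hU
      have hsp : f p ⤳ t := by
        have : f p ∈ Set.range f := ⟨p, rfl⟩
        rwa [Scheme.range_fromSpecStalk] at this
      exact h (hfinj ((hgen _ hsp hU).trans hfc.symm))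
  apply le_antisymm
  · rw [ringKrullDim, Order.krullDim_le_one_iff]
    intro q
    by_contra! hcon
    obtain ⟨hmin, hmax⟩ := hcon
    obtain ⟨p, hp⟩ := not_isMin_iff.1 hmin
    obtain ⟨p', hp'⟩ := not_isMax_iff.1 hmax
    exact local_part (f ⁻¹ᵁ U) (hUaff.preimage f) hVm p.asIdeal q.asIdeal hp
      (lt_of_lt_of_le (show q.asIdeal < p'.asIdeal from hp')
        (IsLocalRing.le_maximalIdeal p'.2.ne_top))
  · rw [ringKrullDim, Order.one_le_krullDim_iff]
    have hη : genericPoint X ⤳ t := genericPoint_specializes t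
    have : genericPoint X ∈ Set.range f := by
      rw [Scheme.range_fromSpecStalk]; exact hη
    obtain ⟨p, hp⟩ := this
    have hηU : genericPoint X ∈ U := by
      have hne : (U : Set X).Nonempty := by
        have : Nonempty X := ⟨t⟩
        exact hUdense.nonempty
      obtain ⟨u, hu⟩ := hne
      exact (genericPoint_specializes u).mem_open U.isOpen hu
    have hpne := (hVm p).1 (show f p ∈ U by rw [hp]; exact hηU)
    refine ⟨p, IsLocalRing.closedPoint (X.presheaf.stalk t), lt_of_le_of_ne ?_ hpne⟩
    exact IsLocalRing.le_maximalIdeal p.2.ne_top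
end
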